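/- arXiv:2603.18929 — 3 statements merged into one kernel-verified Lean document; each statement's English description precedes it below -/
import Mathlib

section
/- There exists an absolute constant c ≥ 1 such that for every dimension d ≥ 2, every convex body K ⊆ ℝ^d, every x ∈ int(K), and every r with 0 < r ≤ 8, one has c^{−d} · ω_d · r^d ≤ vol_H^K(B_H^K(x,r)) ≤ c^{d} · ω_d · r^d, where B_H^K(x,r) is the Hilbert ball of radius r centered at x and vol_H^K is the Hilbert Holmes–Thompson volume. -/
open Set MeasureTheory Metric
open scoped Pointwise RealInnerProductSpace ENNReal

noncomputable section

abbrev Euc (d : ℕ) := EuclideanSpace ℝ (Fin d)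

/-- A convex body: a compact convex set with nonempty interior. -/
def IsConvexBody {d : ℕ} (K : Set (Euc d)) : Prop :=
  IsCompact K ∧ Convex ℝ K ∧ (interior K).Nonempty

/-- The polar of a set. -/
def polarSet {d : ℕ} (S : Set (Euc d)) : Set (Euc d) :=
  {y | ∀ x ∈ S, ⟪x, y⟫ ≤ 1}

/-- The Hilbert distance with respect to the body `K`. -/
def hilbertDist {d : ℕ} (K : Set (Euc d)) (x y : Euc d) : ℝ :=
  -(1 / 2) * Real.log ((1 - gauge ((fun k => k - x) '' K) (y - x)) *
    (1 - gauge ((fun k => k - y) '' K) (x - y)))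

/-- The Hilbert ball of radius `r` centered at `x`. -/
def hilbertBall {d : ℕ} (K : Set (Euc d)) (x : Euc d) (r : ℝ) : Set (Euc d) :=
  {y ∈ interior K | hilbertDist K x y ≤ r}

/-- The Hilbert covering number of `U` at scale `α` in the geometry induced by `K`. -/
def hilbertCov {d : ℕ} (K U : Set (Euc d)) (α : ℝ) : ℕ :=
  sInf {m : ℕ | ∃ x : Fin m → Euc d, (∀ i, x i ∈ interior K) ∧
    U ⊆ ⋃ i, hilbertBall K (x i) α}

/-- The translative covering number of `U` by translates of `α • D`. -/
def transCov {d : ℕ} (D U : Set (Euc d)) (α : ℝ) : ℕ :=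
  sInf {m : ℕ | ∃ x : Fin m → Euc d, U ⊆ ⋃ i, x i +ᵥ α • D}

/-- The Hilbert `α`-expansion of `G` in `K`. -/
def hilbertExpand {d : ℕ} (K G : Set (Euc d)) (α : ℝ) : Set (Euc d) :=
  {x ∈ interior K | sInf (hilbertDist K x '' G) ≤ α}

/-- The Lebesgue volume of the Euclidean unit ball in `ℝ^d`. -/
def ωd (d : ℕ) : ℝ := (volume (ball (0 : Euc d) 1)).toReal

/-- The Hilbert Finsler unit ball at `y` in the geometry induced by `K`. -/
def finslerBall {d : ℕ} (K : Set (Euc d)) (y : Euc d) : Set (Euc d) :=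
  {v | gauge ((fun k => k - y) '' K) v + gauge ((fun k => k - y) '' K) (-v) ≤ 2}

/-- The Hilbert Holmes–Thompson volume of `U` in the geometry induced by `K`. -/
def volH {d : ℕ} (K U : Set (Euc d)) : ℝ :=
  (1 / ωd d) * ∫ y in U, (volume (polarSet (finslerBall K y))).toReal

/-- The recentered Macbeath region `A(x) := (K ∩ (2x − K)) − x`. -/
def macbeathA {d : ℕ} (K : Set (Euc d)) (x : Euc d) : Set (Euc d) :=
  (fun k => k - x) '' (K ∩ ((fun k => (2 : ℝ) • x - k) '' K))

/-! A Hilbert ball of bounded radius lies between two concentric multiples of the Finsler ball at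
its center, and on it the Holmes–Thompson density varies by a factor exponential in the dimension.
Its volume is therefore comparable to `r ^ d` times the volume product of the Finsler ball, which is
bounded above by Santaló's inequality (Steiner symmetrization down to unconditional sets, where
Prékopa–Leindler applies) and below by the Bourgain–Milman inequality.

For the latter, let `R` be the proximal reflection of `p ^ 2 / 2` for a seminorm `p`. The change of
variables `(x, y) ↦ (x - t R y, y + t R x)` does not change the Gaussian integral over `E × E`; its
analytic continuation to `t = i`, compared with the real change of variables
`(x, y) ↦ (x + R y, y + R x)`, bounds that integral by the ones attached to `p` and to its dual. -/

/-! ### The Prékopa–Leindler inequality -/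

lemma volume_add_volume_le_of_isCompact {A B C : Set ℝ} (hA : IsCompact A) (hB : IsCompact B)
    (hA₀ : A.Nonempty) (hB₀ : B.Nonempty) (hC : ∀ a ∈ A, ∀ b ∈ B, (a + b) / 2 ∈ C) :
    volume A + volume B ≤ 2 * volume C := by
  obtain ⟨M, hM, hMA⟩ := hA.exists_isGreatest hA₀
  obtain ⟨m, hm, hmB⟩ := hB.exists_isLeast hB₀
  have hsub : (· + m) '' A ∪ (M + ·) '' B ⊆ (2 : ℝ) • C := by
    rintro _ (⟨a, ha, rfl⟩ | ⟨b, hb, rfl⟩)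
    · exact ⟨(a + m) / 2, hC a ha m hm, by simp; ring⟩
    · exact ⟨(M + b) / 2, hC M hM b hb, by simp; ring⟩
  have hinter : (· + m) '' A ∩ (M + ·) '' B ⊆ {M + m} := by
    rintro _ ⟨⟨a, ha, rfl⟩, ⟨b, hb, hab⟩⟩
    have haM := hMA ha
    have hmb := hmB hb
    simp only [mem_singleton_iff] at hab ⊢
    linarith
  calc volume A + volume B = volume ((· + m) '' A ∪ (M + ·) '' B) := by
        rw [measure_union₀' (hA.image (by fun_prop)).measurableSet.nullMeasurableSet
          (measure_mono_null hinter (by simp))]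
        simp
    _ ≤ volume ((2 : ℝ) • C) := measure_mono hsub
    _ = 2 * volume C := by simp [Measure.addHaar_smul]

theorem volume_add_volume_le {A B C : Set ℝ} (hA : MeasurableSet A) (hB : MeasurableSet B)
    (hA₀ : A.Nonempty) (hB₀ : B.Nonempty) (hC : ∀ a ∈ A, ∀ b ∈ B, (a + b) / 2 ∈ C) :
    volume A + volume B ≤ 2 * volume C := by
  obtain ⟨a₀, ha₀⟩ := hA₀
  obtain ⟨b₀, hb₀⟩ := hB₀
  rw [hA.measure_eq_iSup_isCompact, hB.measure_eq_iSup_isCompact]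
  simp only [iSup_and']
  refine ENNReal.biSup_add_biSup_le' ⟨∅, empty_subset _, isCompact_empty⟩
    ⟨∅, empty_subset _, isCompact_empty⟩ fun K ⟨hKA, hK⟩ L ⟨hLB, hL⟩ => ?_
  calc volume K + volume L ≤ volume (insert a₀ K) + volume (insert b₀ L) := by
        gcongr <;> exact subset_insert _ _
    _ ≤ 2 * volume C :=
        volume_add_volume_le_of_isCompact (hK.insert a₀) (hL.insert b₀) (insert_nonempty _ _)
          (insert_nonempty _ _) fun a ha b hb =>
            hC a (insert_subset ha₀ hKA ha) b (insert_subset hb₀ hLB hb)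

lemma ennreal_mul_le_sq_of_add_le {u v w : ℝ≥0∞} (h : u + v ≤ 2 * w) : u * v ≤ w ^ 2 := by
  obtain rfl | hw := eq_or_ne w ⊤
  · simp
  have huv : u + v ≠ ⊤ := ne_top_of_le_ne_top (ENNReal.mul_ne_top (by simp) hw) h
  lift w to NNReal using hw
  lift u to NNReal using (ENNReal.add_ne_top.1 huv).1
  lift v to NNReal using (ENNReal.add_ne_top.1 huv).2
  norm_cast at h ⊢
  have h4 : 4 * (u * v) ≤ 4 * w ^ 2 :=
    calc 4 * (u * v) = 4 * u * v := by ring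
      _ ≤ (u + v) ^ 2 := four_mul_le_sq_add u v
      _ ≤ (2 * w) ^ 2 := by gcongr
      _ = 4 * w ^ 2 := by ring
  exact le_of_mul_le_mul_left h4 (by norm_num)

lemma lintegral_min_const {α : Type*} [MeasurableSpace α] {μ : Measure α} {f : α → ℝ≥0∞}
    (hf : Measurable f) {a : ℝ≥0∞} (ha₀ : a ≠ 0) (ha : a ≠ ⊤) :
    ∫⁻ x, min (f x) a ∂μ = a * ∫⁻ t in Ioo (0 : ℝ) 1, μ {x | a * ENNReal.ofReal t < f x} := by
  have hle (x : α) : min (f x) a / a ≤ 1 := ENNReal.div_le_of_le_mul (by simp)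
  have hne (x : α) : min (f x) a / a ≠ ⊤ := ne_top_of_le_ne_top ENNReal.one_ne_top (hle x)
  have hlevel {t : ℝ} (ht : 0 < t) :
      {x | t < (min (f x) a / a).toReal} =
        if t < 1 then {x | a * ENNReal.ofReal t < f x} else ∅ := by
    ext x
    rw [mem_ofPred_eq, ← ENNReal.ofReal_lt_iff_lt_toReal ht.le (hne x),
      ENNReal.lt_div_iff_mul_lt (by simp [ha₀]) (by simp [ha]), mul_comm, lt_min_iff]
    split_ifs with h1
    · have : a * ENNReal.ofReal t < a := by
        simpa using (ENNReal.mul_lt_mul_iff_right ha₀ ha).2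
          (ENNReal.ofReal_lt_one.2 h1)
      simp [this]
    · have : a ≤ a * ENNReal.ofReal t :=
        le_mul_of_one_le_right' (ENNReal.one_le_ofReal.2 (not_lt.1 h1))
      simp [this]
  have hmeas : Measurable fun x => (min (f x) a / a).toReal :=
    ((hf.min measurable_const).div_const a).ennreal_toReal
  calc ∫⁻ x, min (f x) a ∂μ = a * ∫⁻ x, ENNReal.ofReal (min (f x) a / a).toReal ∂μ := by
        rw [← lintegral_const_mul' _ _ ha]
        refine lintegral_congr fun x => ?_
        rw [ENNReal.ofReal_toReal (hne x), ENNReal.mul_div_cancel ha₀ ha]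
    _ = a * ∫⁻ t in Ioi (0 : ℝ),
          (Iio 1).indicator (fun t => μ {x | a * ENNReal.ofReal t < f x}) t := by
        rw [lintegral_eq_lintegral_meas_lt μ (.of_forall fun x => ENNReal.toReal_nonneg)
          hmeas.aemeasurable]
        congr 1
        refine setLIntegral_congr_fun measurableSet_Ioi fun t ht => ?_
        rw [hlevel ht]
        by_cases h : t < 1 <;> simp [h]
    _ = a * ∫⁻ t in Ioo (0 : ℝ) 1, μ {x | a * ENNReal.ofReal t < f x} := by
        rw [lintegral_indicator measurableSet_Iio, Measure.restrict_restrict measurableSet_Iio,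
          inter_comm, Ioi_inter_Iio]

/-- The multiplicative Prékopa–Leindler inequality with weights `1/2` for the measure `ν` and the
mean `m`: for `ν` the Lebesgue measure and `m` the arithmetic mean this is the classical one. -/
def PrekopaLeindler {α : Type*} [MeasurableSpace α] (ν : Measure α) (m : α → α → α) : Prop :=
  ∀ f g h : α → ℝ≥0∞, Measurable f → Measurable g → Measurable h →
    (∀ s t, f s * g t ≤ h (m s t) ^ 2) →
    (∫⁻ x, f x ∂ν) * (∫⁻ x, g x ∂ν) ≤ (∫⁻ x, h x ∂ν) ^ 2

-- The superlevel sets at heights `a t` and `b t` are nonempty for all `t < 1`, so that the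
-- one-dimensional Brunn–Minkowski inequality applies to them.
lemma lintegral_min_mul_lintegral_min_le {f g h : ℝ → ℝ≥0∞} (hf : Measurable f)
    (hg : Measurable g) (hh : Measurable h)
    (H : ∀ s t, f s * g t ≤ h ((s + t) / 2) ^ 2) {a b : ℝ≥0∞} (ha₀ : a ≠ 0) (hb₀ : b ≠ 0)
    (ha : a < ⨆ x, f x) (hb : b < ⨆ x, g x) :
    (∫⁻ x, min (f x) a) * (∫⁻ x, min (g x) b) ≤ (∫⁻ x, h x) ^ 2 := by
  obtain ⟨c, hc⟩ : ∃ c : ℝ≥0∞, c ^ 2 = a * b :=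
    ⟨(a * b) ^ (2⁻¹ : ℝ), by rw [← ENNReal.rpow_natCast, ← ENNReal.rpow_mul]; norm_num⟩
  have hc₀ : c ≠ 0 := by rintro rfl; simp_all
  have hc_top : c ≠ ⊤ := by
    rintro rfl
    exact ENNReal.mul_ne_top ha.ne_top hb.ne_top (by simpa using hc.symm)
  have hlevel : ∀ t ∈ Ioo (0 : ℝ) 1,
      volume {x | a * ENNReal.ofReal t < f x} + volume {x | b * ENNReal.ofReal t < g x} ≤
        2 * volume {x | c * ENNReal.ofReal t < h x} := by
    intro t ht
    have hnonempty {F : ℝ → ℝ≥0∞} {k : ℝ≥0∞} (hk : k < ⨆ x, F x) :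
        {x | k * ENNReal.ofReal t < F x}.Nonempty := by
      obtain ⟨x, hx⟩ := lt_iSup_iff.1 hk
      exact ⟨x, (mul_le_of_le_one_right' (ENNReal.ofReal_le_one.2 ht.2.le)).trans_lt hx⟩
    refine volume_add_volume_le (measurableSet_lt measurable_const hf)
      (measurableSet_lt measurable_const hg) (hnonempty ha) (hnonempty hb) fun x hx y hy => ?_
    have hsq : (c * ENNReal.ofReal t) ^ 2 < h ((x + y) / 2) ^ 2 :=
      calc (c * ENNReal.ofReal t) ^ 2 = a * ENNReal.ofReal t * (b * ENNReal.ofReal t) := by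
            rw [mul_pow, hc]; ring
        _ < f x * g y := ENNReal.mul_lt_mul hx hy
        _ ≤ h ((x + y) / 2) ^ 2 := H x y
    exact (ENNReal.pow_lt_pow_left_iff two_ne_zero).1 hsq
  have hmeas : Measurable fun t => volume {x | a * ENNReal.ofReal t < f x} :=
    Antitone.measurable fun s t hst => measure_mono <| ofPred_subset_ofPred.2 fun x hx =>
      lt_of_le_of_lt (by gcongr) hx
  calc (∫⁻ x, min (f x) a) * (∫⁻ x, min (g x) b)
      = c ^ 2 * ((∫⁻ t in Ioo (0 : ℝ) 1, volume {x | a * ENNReal.ofReal t < f x}) *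
          ∫⁻ t in Ioo (0 : ℝ) 1, volume {x | b * ENNReal.ofReal t < g x}) := by
        rw [lintegral_min_const hf ha₀ ha.ne_top, lintegral_min_const hg hb₀ hb.ne_top, hc]
        ring
    _ ≤ c ^ 2 * (∫⁻ t in Ioo (0 : ℝ) 1, volume {x | c * ENNReal.ofReal t < h x}) ^ 2 := by
        gcongr
        apply ennreal_mul_le_sq_of_add_le
        rw [← lintegral_add_left hmeas, ← lintegral_const_mul' _ _ (by simp)]
        exact setLIntegral_mono' measurableSet_Ioo hlevel
    _ = (∫⁻ x, min (h x) c) ^ 2 := by rw [lintegral_min_const hh hc₀ hc_top, mul_pow]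
    _ ≤ (∫⁻ x, h x) ^ 2 := by gcongr; exact min_le_left _ _

lemma exists_seq_lintegral_eq_iSup_lintegral_min {α : Type*} [MeasurableSpace α]
    {μ : Measure α} {f : α → ℝ≥0∞} (hf : Measurable f) (hf₀ : (⨆ x, f x) ≠ 0) :
    ∃ u : ℕ → ℝ≥0∞, (∀ n, u n ≠ 0 ∧ u n < ⨆ x, f x) ∧
      ∫⁻ x, f x ∂μ = ⨆ n, ∫⁻ x, min (f x) (u n) ∂μ := by
  obtain ⟨u, hu, hmem, hlim⟩ := exists_seq_strictMono_tendsto' (pos_iff_ne_zero.2 hf₀)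
  refine ⟨u, fun n => ⟨(hmem n).1.ne', (hmem n).2⟩, ?_⟩
  rw [← lintegral_iSup (fun n => hf.min measurable_const)
    fun i j hij x => min_le_min le_rfl (hu.monotone hij)]
  refine lintegral_congr fun x => ?_
  rw [← inf_iSup_eq, iSup_eq_of_tendsto hu.monotone hlim, inf_eq_left.2 (le_iSup f x)]

theorem prekopaLeindler_volume :
    PrekopaLeindler (volume : Measure ℝ) fun s t => (s + t) / 2 := by
  intro f g h hf hg hh H
  by_cases hf₀ : (⨆ x, f x) = 0
  · simp [ENNReal.iSup_eq_zero.1 hf₀]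
  by_cases hg₀ : (⨆ x, g x) = 0
  · simp [ENNReal.iSup_eq_zero.1 hg₀]
  obtain ⟨u, hu, hfu⟩ := exists_seq_lintegral_eq_iSup_lintegral_min (μ := volume) hf hf₀
  obtain ⟨v, hv, hgv⟩ := exists_seq_lintegral_eq_iSup_lintegral_min (μ := volume) hg hg₀
  simp only [hfu, hgv, ENNReal.iSup_mul, ENNReal.mul_iSup, iSup_le_iff]
  exact fun i j => lintegral_min_mul_lintegral_min_le hf hg hh H (hu j).1 (hv i).1 (hu j).2 (hv i).2

namespace PrekopaLeindler

variable {α β : Type*} [MeasurableSpace α] [MeasurableSpace β] {μ : Measure α} {ν : Measure β}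
  {m : α → α → α} {k : β → β → β}

theorem prod [SFinite ν] (hμ : PrekopaLeindler μ m) (hν : PrekopaLeindler ν k) :
    PrekopaLeindler (μ.prod ν) fun p q => (m p.1 q.1, k p.2 q.2) := by
  intro f g h hf hg hh H
  rw [lintegral_prod _ hf.aemeasurable, lintegral_prod _ hg.aemeasurable,
    lintegral_prod _ hh.aemeasurable]
  exact hμ _ _ _ hf.lintegral_prod_right' hg.lintegral_prod_right' hh.lintegral_prod_right'
    fun s t => hν _ _ _ (hf.comp measurable_prodMk_left) (hg.comp measurable_prodMk_left)
      (hh.comp measurable_prodMk_left) fun x y => H (s, x) (t, y)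

theorem of_measurePreserving (hμ : PrekopaLeindler μ m) {φ : α → β}
    (hφ : MeasurePreserving φ μ ν) (hm : ∀ s t, φ (m s t) = k (φ s) (φ t)) :
    PrekopaLeindler ν k := by
  intro f g h hf hg hh H
  rw [← hφ.lintegral_comp hf, ← hφ.lintegral_comp hg, ← hφ.lintegral_comp hh]
  exact hμ _ _ _ (hf.comp hφ.measurable) (hg.comp hφ.measurable) (hh.comp hφ.measurable)
    fun s t => by simpa only [Function.comp_apply, hm] using H (φ s) (φ t)

theorem pi [SigmaFinite μ] (hμ : PrekopaLeindler μ m) (n : ℕ) :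
    PrekopaLeindler (Measure.pi fun _ : Fin n => μ) fun x y i => m (x i) (y i) := by
  induction n with
  | zero =>
    intro f g h _ _ _ H
    simpa [Measure.pi_of_empty, lintegral_dirac, Subsingleton.elim _ (isEmptyElim : Fin 0 → α)]
      using H isEmptyElim isEmptyElim
  | succ n ih =>
    refine (hμ.prod ih).of_measurePreserving
      (measurePreserving_piFinSuccAbove (fun _ : Fin (n + 1) => μ) 0).symm fun s t => ?_
    ext i
    refine Fin.cases ?_ (fun i => ?_) i <;> simp [MeasurableEquiv.piFinSuccAbove]

theorem measure_mul_le (hμ : PrekopaLeindler μ m) {A B C : Set α} (hA : MeasurableSet A)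
    (hB : MeasurableSet B) (hC : MeasurableSet C) (h : ∀ a ∈ A, ∀ b ∈ B, m a b ∈ C) :
    μ A * μ B ≤ μ C ^ 2 := by
  classical
  rw [← lintegral_indicator_one hA, ← lintegral_indicator_one hB, ← lintegral_indicator_one hC]
  refine hμ _ _ _ (measurable_one.indicator hA) (measurable_one.indicator hB)
    (measurable_one.indicator hC) fun s t => ?_
  by_cases hs : s ∈ A
  · by_cases ht : t ∈ B
    · simp [hs, ht, h s hs t ht]
    · simp [ht]
  · simp [hs]

end PrekopaLeindler

theorem PrekopaLeindler.measure_le_of_neg_mem {α : Type*} [MeasurableSpace α]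
    [InvolutiveNeg α] [MeasurableNeg α] {ν : Measure α} [ν.IsNegInvariant] {m : α → α → α}
    (hν : PrekopaLeindler ν m) {A C : Set α} (hA : MeasurableSet A) (hC : MeasurableSet C)
    (h : ∀ a ∈ A, ∀ b ∈ A, m a (-b) ∈ C) : ν A ≤ ν C := by
  have := hν.measure_mul_le hA (hA.preimage measurable_neg) hC fun a ha b hb => by
    simpa using h a ha (-b) hb
  rwa [Measure.measure_preimage_neg, ← sq, ENNReal.pow_le_pow_left_iff two_ne_zero] at this

/-! ### Steiner symmetrization and the Santaló inequality -/

/-- A pair of open centrally symmetric subsets of `ℝ^ι`, each contained in the polar of the other: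
the class of pairs on which the Santaló inequality is proved by symmetrization. -/
structure PolarPair {ι : Type*} [Fintype ι] (U V : Set (ι → ℝ)) : Prop where
  isOpen_left : IsOpen U
  isOpen_right : IsOpen V
  neg_mem_left : ∀ x ∈ U, -x ∈ U
  neg_mem_right : ∀ y ∈ V, -y ∈ V
  dotProduct_le_one : ∀ x ∈ U, ∀ y ∈ V, x ⬝ᵥ y ≤ 1

section Symmetrization

variable {ι : Type*} [DecidableEq ι]

/-- The reflection of `ℝ^ι` in the coordinate hyperplane `x j = 0`. -/
def reflectCoord (j : ι) (x : ι → ℝ) : ι → ℝ := Function.update x j (-x j)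

/-- Steiner symmetrization in the direction of the `j`-th coordinate: each line in that direction
meets the result in half the difference set of its section of `U`. -/
def steinerSymm (j : ι) (U : Set (ι → ℝ)) : Set (ι → ℝ) :=
  {x | ∃ s : ℝ, Function.update x j (s + 2 * x j) ∈ U ∧ Function.update x j s ∈ U}

/-- The operation on the polar side that matches `steinerSymm j`: each hyperplane orthogonal to the
`j`-th coordinate meets the result in the half sum of the sections there of `V` and of its
reflection. -/
def dualSteinerSymm (j : ι) (V : Set (ι → ℝ)) : Set (ι → ℝ) :=
  {y | ∃ w : ι → ℝ, w j = 0 ∧ y + w ∈ V ∧ reflectCoord j (y - w) ∈ V}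

lemma reflectCoord_neg (j : ι) (x : ι → ℝ) : reflectCoord j (-x) = -reflectCoord j x := by
  simp only [reflectCoord, ← Function.update_neg, Pi.neg_apply]

lemma reflectCoord_reflectCoord (j : ι) (x : ι → ℝ) : reflectCoord j (reflectCoord j x) = x := by
  simp [reflectCoord]

lemma reflectCoord_add (j : ι) (x y : ι → ℝ) :
    reflectCoord j (x + y) = reflectCoord j x + reflectCoord j y := by
  simp only [reflectCoord, ← Function.update_add, Pi.add_apply, neg_add]

lemma reflectCoord_sub (j : ι) (x y : ι → ℝ) :
    reflectCoord j (x - y) = reflectCoord j x - reflectCoord j y := by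
  rw [sub_eq_add_neg, reflectCoord_add, reflectCoord_neg, sub_eq_add_neg]

lemma reflectCoord_eq_self {j : ι} {x : ι → ℝ} (hx : x j = 0) : reflectCoord j x = x := by
  rw [reflectCoord, hx, neg_zero, ← hx, Function.update_eq_self]

lemma reflectCoord_comm (j k : ι) (x : ι → ℝ) :
    reflectCoord k (reflectCoord j x) = reflectCoord j (reflectCoord k x) := by
  obtain rfl | hjk := eq_or_ne j k
  · rfl
  · simp [reflectCoord, hjk, hjk.symm, Function.update_comm hjk]

lemma reflectCoord_update {j k : ι} (hkj : k ≠ j) (x : ι → ℝ) (s : ℝ) :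
    reflectCoord k (Function.update x j s) = Function.update (reflectCoord k x) j s := by
  simp [reflectCoord, hkj, Function.update_comm hkj]

lemma continuous_reflectCoord (j : ι) : Continuous (reflectCoord j) :=
  continuous_id.update j (continuous_apply j).neg

lemma mapsTo_reflectCoord_steinerSymm (j : ι) (U : Set (ι → ℝ)) :
    MapsTo (reflectCoord j) (steinerSymm j U) (steinerSymm j U) := by
  rintro x ⟨s, h₁, h₂⟩
  exact ⟨s + 2 * x j, by simpa [reflectCoord] using h₂, by simpa [reflectCoord] using h₁⟩

lemma mapsTo_reflectCoord_dualSteinerSymm (j : ι) (V : Set (ι → ℝ)) :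
    MapsTo (reflectCoord j) (dualSteinerSymm j V) (dualSteinerSymm j V) := by
  rintro y ⟨w, hw, h₁, h₂⟩
  refine ⟨-w, by simp [hw], ?_, ?_⟩
  · rwa [reflectCoord_sub, reflectCoord_eq_self hw] at h₂
  · rwa [reflectCoord_sub, reflectCoord_reflectCoord, reflectCoord_neg, reflectCoord_eq_self hw,
      sub_neg_eq_add]

lemma mapsTo_reflectCoord_steinerSymm_of_ne {j k : ι} (hkj : k ≠ j) {U : Set (ι → ℝ)}
    (hU : MapsTo (reflectCoord k) U U) :
    MapsTo (reflectCoord k) (steinerSymm j U) (steinerSymm j U) := by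
  rintro x ⟨s, h₁, h₂⟩
  have hxj : reflectCoord k x j = x j := by simp [reflectCoord, hkj.symm]
  exact ⟨s, by simpa only [hxj, ← reflectCoord_update hkj] using hU h₁,
    by simpa only [← reflectCoord_update hkj] using hU h₂⟩

lemma mapsTo_reflectCoord_dualSteinerSymm_of_ne {j k : ι} (hkj : k ≠ j) {V : Set (ι → ℝ)}
    (hV : MapsTo (reflectCoord k) V V) :
    MapsTo (reflectCoord k) (dualSteinerSymm j V) (dualSteinerSymm j V) := by
  rintro y ⟨w, hw, h₁, h₂⟩
  refine ⟨reflectCoord k w, by simp [reflectCoord, hkj.symm, hw], ?_, ?_⟩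
  · simpa only [reflectCoord_add] using hV h₁
  · simpa only [reflectCoord_sub, reflectCoord_comm j k] using hV h₂

lemma mem_of_forall_eq_or_eq_neg [Finite ι] {U : Set (ι → ℝ)}
    (hU : ∀ k, MapsTo (reflectCoord k) U U) {x y : ι → ℝ} (hx : x ∈ U)
    (hxy : ∀ i, y i = x i ∨ y i = -x i) : y ∈ U := by
  cases nonempty_fintype ι
  suffices ∀ S : Finset ι, S.piecewise y x ∈ U by simpa using this Finset.univ
  intro S
  induction S using Finset.induction_on with
  | empty => simpa using hx
  | insert j S hj ih =>
    rw [Finset.piecewise_insert]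
    rcases hxy j with h | h
    · rwa [h, ← Finset.piecewise_eq_of_notMem S y x hj, Function.update_eq_self]
    · simpa [h, reflectCoord, hj] using hU j ih

theorem PolarPair.symmetrize [Fintype ι] {U V : Set (ι → ℝ)} (h : PolarPair U V) (j : ι) :
    PolarPair (steinerSymm j U) (dualSteinerSymm j V) where
  isOpen_left := by
    simp only [steinerSymm, ofPred_exists, ofPred_and]
    exact isOpen_iUnion fun s =>
      (h.isOpen_left.preimage (by fun_prop)).inter (h.isOpen_left.preimage (by fun_prop))
  isOpen_right := by
    simp only [dualSteinerSymm, ofPred_exists, ofPred_and]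
    exact isOpen_iUnion fun w => isOpen_const.inter <|
      (h.isOpen_right.preimage (by fun_prop)).inter
        (h.isOpen_right.preimage ((continuous_reflectCoord j).comp (by fun_prop)))
  neg_mem_left := by
    rintro x ⟨s, h₁, h₂⟩
    refine ⟨-s, ?_, ?_⟩
    · have := h.neg_mem_left _ h₁
      rwa [← Function.update_neg, neg_add, ← mul_neg, ← Pi.neg_apply] at this
    · simpa only [← Function.update_neg] using h.neg_mem_left _ h₂
  neg_mem_right := by
    rintro y ⟨w, hw, h₁, h₂⟩
    refine ⟨-w, by simp [hw], ?_, ?_⟩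
    · simpa only [neg_add] using h.neg_mem_right _ h₁
    · rw [← neg_sub', reflectCoord_neg]
      exact h.neg_mem_right _ h₂
  dotProduct_le_one := by
    rintro x ⟨s, h₁, h₂⟩ y ⟨w, hw, h₃, h₄⟩
    have hsum : 2 * (x ⬝ᵥ y) = Function.update x j (s + 2 * x j) ⬝ᵥ (y + w) +
        Function.update x j s ⬝ᵥ reflectCoord j (y - w) := by
      simp only [dotProduct, Finset.mul_sum, ← Finset.sum_add_distrib]
      refine Finset.sum_congr rfl fun i _ => ?_
      obtain rfl | hij := eq_or_ne i j
      · simp [reflectCoord, hw]; ring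
      · simp [reflectCoord, hij]; ring
    linarith [h.dotProduct_le_one _ h₁ _ h₃, h.dotProduct_le_one _ h₂ _ h₄]

end Symmetrization

lemma volume_eq_lintegral_volume_line {n : ℕ} (j : Fin (n + 1)) {S : Set (Fin (n + 1) → ℝ)}
    (hS : MeasurableSet S) :
    volume S = ∫⁻ X : Fin n → ℝ, volume {s : ℝ | (j.insertNth s X : Fin (n + 1) → ℝ) ∈ S} := by
  have hj := (volume_preserving_piFinSuccAbove (fun _ : Fin (n + 1) => ℝ) j).symm
  rw [← hj.measure_preimage hS.nullMeasurableSet]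
  exact Measure.prod_apply_symm (hS.preimage hj.measurable)

lemma volume_eq_lintegral_volume_hyperplane {n : ℕ} (j : Fin (n + 1))
    {S : Set (Fin (n + 1) → ℝ)} (hS : MeasurableSet S) :
    volume S = ∫⁻ s : ℝ, volume {X : Fin n → ℝ | (j.insertNth s X : Fin (n + 1) → ℝ) ∈ S} := by
  have hj := (volume_preserving_piFinSuccAbove (fun _ : Fin (n + 1) => ℝ) j).symm
  rw [← hj.measure_preimage hS.nullMeasurableSet]
  exact Measure.prod_apply (hS.preimage hj.measurable)

namespace PolarPair

variable {n : ℕ}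

lemma volume_le_volume_steinerSymm {U V : Set (Fin n → ℝ)} (h : PolarPair U V) (j : Fin n) :
    volume U ≤ volume (steinerSymm j U) := by
  cases n with
  | zero => exact j.elim0
  | succ n =>
  have hU := h.isOpen_left
  have hU' := (h.symmetrize j).isOpen_left
  rw [volume_eq_lintegral_volume_line j hU.measurableSet,
    volume_eq_lintegral_volume_line j hU'.measurableSet]
  refine lintegral_mono fun X => ?_
  have hX : Continuous fun s : ℝ => (j.insertNth s X : Fin (n + 1) → ℝ) := by fun_prop
  refine prekopaLeindler_volume.measure_le_of_neg_mem (hU.preimage hX).measurableSet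
    (hU'.preimage hX).measurableSet fun a ha b hb => ⟨b, ?_, ?_⟩
  · simpa [Fin.update_insertNth, mul_div_cancel₀] using ha
  · simpa [Fin.update_insertNth] using hb

lemma volume_le_volume_dualSteinerSymm {U V : Set (Fin n → ℝ)} (h : PolarPair U V) (j : Fin n) :
    volume V ≤ volume (dualSteinerSymm j V) := by
  cases n with
  | zero => exact j.elim0
  | succ n =>
  have hV := h.isOpen_right
  have hV' := (h.symmetrize j).isOpen_right
  rw [volume_eq_lintegral_volume_hyperplane j hV.measurableSet,
    volume_eq_lintegral_volume_hyperplane j hV'.measurableSet]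
  refine lintegral_mono fun t => ?_
  have ht : Continuous fun X : Fin n → ℝ => (j.insertNth t X : Fin (n + 1) → ℝ) := by fun_prop
  refine (prekopaLeindler_volume.pi n).measure_le_of_neg_mem (hV.preimage ht).measurableSet
    (hV'.preimage ht).measurableSet fun a ha b hb =>
      ⟨j.insertNth 0 fun i => (a i + b i) / 2, by simp, ?_, ?_⟩
  · convert show j.insertNth t a ∈ V from ha
    rw [← Fin.insertNth_add]
    congr 1
    · simp
    · ext i; simp; ring
  · convert h.neg_mem_right _ hb
    ext i
    refine Fin.succAboveCases j ?_ (fun i => ?_) i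
    · simp [reflectCoord]
    · simp [reflectCoord, Fin.succAbove_ne]; ring

theorem exists_unconditional {U V : Set (Fin n → ℝ)} (h : PolarPair U V) :
    ∃ U' V' : Set (Fin n → ℝ), PolarPair U' V' ∧ volume U ≤ volume U' ∧ volume V ≤ volume V' ∧
      ∀ k, MapsTo (reflectCoord k) U' U' ∧ MapsTo (reflectCoord k) V' V' := by
  suffices ∀ S : Finset (Fin n), ∃ U' V' : Set (Fin n → ℝ), PolarPair U' V' ∧ volume U ≤ volume U' ∧
      volume V ≤ volume V' ∧
      ∀ k ∈ S, MapsTo (reflectCoord k) U' U' ∧ MapsTo (reflectCoord k) V' V' by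
    simpa using this Finset.univ
  intro S
  induction S using Finset.induction_on with
  | empty => exact ⟨U, V, h, le_rfl, le_rfl, by simp⟩
  | insert j S hj ih =>
    obtain ⟨U', V', h', hU, hV, hS⟩ := ih
    refine ⟨steinerSymm j U', dualSteinerSymm j V', h'.symmetrize j,
      hU.trans (h'.volume_le_volume_steinerSymm j),
      hV.trans (h'.volume_le_volume_dualSteinerSymm j), fun k hk => ?_⟩
    obtain rfl | hkj := eq_or_ne k j
    · exact ⟨mapsTo_reflectCoord_steinerSymm k U', mapsTo_reflectCoord_dualSteinerSymm k V'⟩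
    · have hkS := hS k (Finset.mem_of_mem_insert_of_ne hk hkj)
      exact ⟨mapsTo_reflectCoord_steinerSymm_of_ne hkj hkS.1,
        mapsTo_reflectCoord_dualSteinerSymm_of_ne hkj hkS.2⟩

end PolarPair

/-- The image of the Lebesgue measure on `ℝ` under the absolute value. It turns integrals of
unconditional functions over `ℝⁿ` into integrals over the positive orthant. -/
def absVolume : Measure ℝ := volume.restrict (Ioi 0) + volume.restrict (Ioi 0)

instance : SigmaFinite absVolume := by
  unfold absVolume
  infer_instance

lemma measurePreserving_abs : MeasurePreserving (fun x : ℝ => |x|) volume absVolume := by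
  refine ⟨continuous_abs.measurable, Measure.ext fun S hS => ?_⟩
  have hpre : (fun x : ℝ => |x|) ⁻¹' S =ᵐ[volume]
      (S ∩ Ioi 0 ∪ Neg.neg ⁻¹' (S ∩ Ioi 0) : Set ℝ) := by
    filter_upwards [Measure.ae_ne volume (0 : ℝ)] with x hx
    refine propext ?_
    change |x| ∈ S ↔ x ∈ S ∧ 0 < x ∨ -x ∈ S ∧ 0 < -x
    rcases hx.lt_or_gt with h | h
    · simp [abs_of_neg h, h, h.not_gt]
    · simp [abs_of_pos h, h, h.not_gt]
  have hdisj : Disjoint (S ∩ Ioi 0) (Neg.neg ⁻¹' (S ∩ Ioi (0 : ℝ))) :=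
    Set.disjoint_left.2 fun x hx hx' => by
      have h₁ : 0 < x := hx.2
      have h₂ : 0 < -x := hx'.2
      linarith
  rw [Measure.map_apply continuous_abs.measurable hS, measure_congr hpre,
    measure_union hdisj ((hS.inter measurableSet_Ioi).preimage measurable_neg),
    Measure.measure_preimage_neg, absVolume, Measure.add_apply, Measure.restrict_apply hS]

lemma lintegral_absVolume (f : ℝ → ℝ≥0∞) :
    ∫⁻ x, f x ∂absVolume = 2 * ∫⁻ u, ENNReal.ofReal (Real.exp u) * f (Real.exp u) := by
  have := lintegral_image_eq_lintegral_abs_deriv_mul MeasurableSet.univ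
    (fun x _ => (Real.hasDerivAt_exp x).hasDerivWithinAt) Real.exp_injective.injOn f
  simp only [image_univ, Real.range_exp, Real.abs_exp, Measure.restrict_univ] at this
  rw [absVolume, lintegral_add_measure, this, two_mul]

-- The substitution `s = exp u` turns the geometric mean into the arithmetic one.
theorem prekopaLeindler_absVolume : PrekopaLeindler absVolume fun s t => √|s * t| := by
  intro f g h hf hg hh H
  simp only [lintegral_absVolume]
  rw [mul_mul_mul_comm, mul_pow, ← sq]
  gcongr
  have hexp : Measurable fun u => ENNReal.ofReal (Real.exp u) :=
    ENNReal.measurable_ofReal.comp Real.measurable_exp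
  refine prekopaLeindler_volume _ _ _ (hexp.mul (hf.comp Real.measurable_exp))
    (hexp.mul (hg.comp Real.measurable_exp)) (hexp.mul (hh.comp Real.measurable_exp)) fun s t => ?_
  have hsqrt : √|Real.exp s * Real.exp t| = Real.exp ((s + t) / 2) := by
    rw [← Real.exp_add, Real.abs_exp, Real.exp_half]
  have hsq : Real.exp s * Real.exp t = Real.exp ((s + t) / 2) ^ 2 := by
    rw [← Real.exp_add, ← Real.exp_nat_mul]
    congr 1
    push_cast
    ring
  rw [mul_mul_mul_comm, mul_pow, ← ENNReal.ofReal_mul (Real.exp_pos _).le, hsq,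
    ← ENNReal.ofReal_pow (Real.exp_pos _).le, ← hsqrt]
  gcongr
  exact H _ _

lemma volume_eq_pi_absVolume {n : ℕ} {W : Set (Fin n → ℝ)} (hW : MeasurableSet W)
    (hrefl : ∀ k, MapsTo (reflectCoord k) W W) :
    volume W = (Measure.pi fun _ : Fin n => absVolume) W := by
  have habs : MeasurePreserving (fun (x : Fin n → ℝ) i => |x i|) volume
      (Measure.pi fun _ : Fin n => absVolume) :=
    measurePreserving_pi _ _ fun _ => measurePreserving_abs
  rw [← habs.measure_preimage hW.nullMeasurableSet]
  congr 1
  ext x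
  exact ⟨fun hx => mem_of_forall_eq_or_eq_neg hrefl hx fun i => abs_choice (x i),
    fun hx => mem_of_forall_eq_or_eq_neg hrefl hx fun i => eq_or_eq_neg_of_abs_eq rfl⟩

theorem PolarPair.volume_mul_volume_le {n : ℕ} {U V : Set (Fin n → ℝ)} (h : PolarPair U V) :
    volume U * volume V ≤ volume {z : Fin n → ℝ | ∑ i, z i ^ 2 ≤ 1} ^ 2 := by
  obtain ⟨U', V', h', hU, hV, hrefl⟩ := h.exists_unconditional
  have hball : MeasurableSet {z : Fin n → ℝ | ∑ i, z i ^ 2 ≤ 1} :=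
    measurableSet_le (by fun_prop) measurable_const
  have hball_refl (k : Fin n) : MapsTo (reflectCoord k) {z : Fin n → ℝ | ∑ i, z i ^ 2 ≤ 1}
      {z : Fin n → ℝ | ∑ i, z i ^ 2 ≤ 1} := by
    rintro x (hx : ∑ i, x i ^ 2 ≤ 1)
    refine le_trans (le_of_eq (Finset.sum_congr rfl fun i _ => ?_)) hx
    obtain rfl | hik := eq_or_ne i k <;> simp [reflectCoord, *]
  refine (mul_le_mul' hU hV).trans ?_
  rw [volume_eq_pi_absVolume h'.isOpen_left.measurableSet fun k => (hrefl k).1,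
    volume_eq_pi_absVolume h'.isOpen_right.measurableSet fun k => (hrefl k).2,
    volume_eq_pi_absVolume hball hball_refl]
  refine (prekopaLeindler_absVolume.pi n).measure_mul_le h'.isOpen_left.measurableSet
    h'.isOpen_right.measurableSet hball fun s hs t ht => ?_
  have hsigned : (fun i => if 0 ≤ s i * t i then s i else -s i) ∈ U' :=
    mem_of_forall_eq_or_eq_neg (fun k => (hrefl k).1) hs fun i => by
      split_ifs <;> simp
  refine le_trans (le_of_eq (Finset.sum_congr rfl fun i _ => ?_))
    (h'.dotProduct_le_one _ hsigned t ht)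
  rw [Real.sq_sqrt (abs_nonneg _)]
  dsimp only
  split_ifs with hst
  · exact abs_of_nonneg hst
  · rw [abs_of_neg (not_le.1 hst), neg_mul]

/-! ### Lipschitz changes of variables -/

theorem bijective_id_add_of_lipschitzWith {V : Type*} [NormedAddCommGroup V] [CompleteSpace V]
    {f : V → V} {κ : NNReal} (hκ : κ < 1) (hf : LipschitzWith κ f) :
    Function.Bijective fun x => x + f x := by
  rw [Function.bijective_iff_existsUnique]
  intro w
  have hfix (x : V) : x + f x = w ↔ Function.IsFixedPt (fun x => w - f x) x := by
    rw [Function.IsFixedPt, sub_eq_iff_eq_add, eq_comm]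
  have hcontr : ContractingWith κ fun x => w - f x :=
    ⟨hκ, LipschitzWith.of_dist_le_mul fun x y => by
      rw [dist_sub_left]; exact hf.dist_le_mul x y⟩
  simp only [hfix]
  exact ⟨hcontr.fixedPoint, hcontr.fixedPoint_isFixedPt, fun _ => hcontr.fixedPoint_unique⟩

section ChangeOfVariables

variable {V : Type*} [NormedAddCommGroup V] [NormedSpace ℝ V] [FiniteDimensional ℝ V]
  [MeasurableSpace V] [BorelSpace V] (μ : Measure V) [μ.IsAddHaarMeasure] {f : V → V} {C : NNReal}

theorem addHaar_image_eq_zero_of_lipschitzWith (hf : LipschitzWith C f) {s : Set V}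
    (hs : μ s = 0) : μ (f '' s) = 0 := by
  set d : ℝ := (Module.finrank ℝ V : ℝ)
  have hμ : (Measure.hausdorffMeasure d : Measure V) ≪ μ :=
    Measure.absolutelyContinuous_isAddHaarMeasure _ _
  have hμ' : μ ≪ Measure.hausdorffMeasure d :=
    Measure.absolutelyContinuous_isAddHaarMeasure _ _
  have himage := hf.hausdorffMeasure_image_le (d := d) (by positivity) s
  rw [hμ hs, mul_zero] at himage
  exact hμ' (le_antisymm himage bot_le)

theorem lintegral_abs_det_fderiv_mul_comp_of_lipschitzWith (hf : LipschitzWith C f)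
    (hbij : Function.Bijective f) (F : V → ℝ≥0∞) :
    ∫⁻ x, ENNReal.ofReal |(fderiv ℝ f x).det| * F (f x) ∂μ = ∫⁻ x, F x ∂μ := by
  set D : Set V := {x | DifferentiableAt ℝ f x}
  have hD : ∀ᵐ x ∂μ, x ∈ D := hf.ae_differentiableAt
  have himage : ∀ᵐ x ∂μ, x ∈ f '' D := by
    have hnull := addHaar_image_eq_zero_of_lipschitzWith μ hf hD
    change μ (f '' Dᶜ) = 0 at hnull
    rwa [image_compl_eq hbij] at hnull
  have hcov := lintegral_image_eq_lintegral_abs_det_fderiv_mul μ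
    (measurableSet_of_differentiableAt ℝ f)
    (fun x (hx : x ∈ D) => hx.hasFDerivAt.hasFDerivWithinAt) hbij.1.injOn F
  rw [Measure.restrict_eq_self_of_ae_mem himage, Measure.restrict_eq_self_of_ae_mem hD] at hcov
  exact hcov.symm

end ChangeOfVariables

theorem det_fst_add_snd_add {S M : Type*} [CommRing S] [AddCommGroup M] [Module S M]
    [Module.Free S M] [Module.Finite S M] (A B : M →ₗ[S] M) (σ τ : S) :
    LinearMap.det ((LinearMap.fst S M M + σ • B ∘ₗ LinearMap.snd S M M).prod
      (LinearMap.snd S M M + τ • A ∘ₗ LinearMap.fst S M M)) =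
    LinearMap.det (1 - (σ * τ) • (A * B)) := by
  classical
  set b := Module.Free.chooseBasis S M
  have hblocks : LinearMap.toMatrix (b.prod b) (b.prod b)
      ((LinearMap.fst S M M + σ • B ∘ₗ LinearMap.snd S M M).prod
        (LinearMap.snd S M M + τ • A ∘ₗ LinearMap.fst S M M)) =
      Matrix.fromBlocks 1 (σ • LinearMap.toMatrix b b B) (τ • LinearMap.toMatrix b b A) 1 := by
    ext i j
    rcases i with i | i <;> rcases j with j | j <;>
      simp [LinearMap.toMatrix_apply, Matrix.one_apply, Finsupp.single_apply, eq_comm]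
  rw [← LinearMap.det_toMatrix (b.prod b), hblocks, Matrix.det_fromBlocks_one₁₁,
    ← LinearMap.det_toMatrix b, map_sub, LinearMap.toMatrix_one, map_smul, LinearMap.toMatrix_mul,
    Matrix.smul_mul, Matrix.mul_smul, smul_smul, mul_comm]

section CrossPerturb

variable {E : Type*} [NormedAddCommGroup E] [InnerProductSpace ℝ E] {R : E → E}

/-- The map `(x, y) ↦ (x + σ R y, y + τ R x)`. For a 1-Lipschitz `R` it interpolates between the
identity and the map `(x, y) ↦ (x + R y, y + R x)` along which volumes are compared. -/
def crossPerturb (R : E → E) (σ τ : ℝ) (p : E × E) : E × E :=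
  (p.1 + σ • R p.2, p.2 + τ • R p.1)

theorem lipschitzWith_smul_cross (hR : LipschitzWith 1 R) (σ τ : ℝ) :
    LipschitzWith (max ‖σ‖₊ ‖τ‖₊) fun p : E × E => (σ • R p.2, τ • R p.1) := by
  have hfst := (lipschitzWith_smul σ).comp (hR.comp (LipschitzWith.prod_snd (α := E)))
  have hsnd := (lipschitzWith_smul τ).comp (hR.comp (LipschitzWith.prod_fst (β := E)))
  rw [mul_one, mul_one] at hfst hsnd
  exact hfst.prodMk hsnd

theorem lipschitzWith_crossPerturb (hR : LipschitzWith 1 R) (σ τ : ℝ) :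
    LipschitzWith (1 + max ‖σ‖₊ ‖τ‖₊) (crossPerturb R σ τ) :=
  LipschitzWith.id.add (lipschitzWith_smul_cross hR σ τ)

theorem continuous_crossPerturb_diag (R : E → E) (p : E × E) :
    Continuous fun s => crossPerturb R s s p := by
  unfold crossPerturb
  fun_prop

theorem bijective_crossPerturb [CompleteSpace E] (hR : LipschitzWith 1 R) {σ τ : ℝ}
    (hσ : |σ| < 1) (hτ : |τ| < 1) : Function.Bijective (crossPerturb R σ τ) :=
  bijective_id_add_of_lipschitzWith (max_lt (by simpa [← NNReal.coe_lt_coe] using hσ)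
    (by simpa [← NNReal.coe_lt_coe] using hτ)) (lipschitzWith_smul_cross hR σ τ)

/-- The product of the derivatives of `R` at the two components of `p`, which carries the Jacobian
determinant of `crossPerturb R`. -/
def crossJacobian (R : E → E) (p : E × E) : E →L[ℝ] E :=
  fderiv ℝ R p.1 * fderiv ℝ R p.2

theorem norm_crossJacobian_le (hR : LipschitzWith 1 R) (p : E × E) : ‖crossJacobian R p‖ ≤ 1 :=
  (norm_mul_le _ _).trans <| mul_le_one₀ (by simpa using norm_fderiv_le_of_lipschitz ℝ hR)
    (norm_nonneg _) (by simpa using norm_fderiv_le_of_lipschitz ℝ hR)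

variable [FiniteDimensional ℝ E]

theorem det_fderiv_crossPerturb {p : E × E} (h₁ : DifferentiableAt ℝ R p.1)
    (h₂ : DifferentiableAt ℝ R p.2) (σ τ : ℝ) :
    (fderiv ℝ (crossPerturb R σ τ) p).det = (1 - (σ * τ) • crossJacobian R p).det := by
  have hderiv : HasFDerivAt (crossPerturb R σ τ)
      ((ContinuousLinearMap.fst ℝ E E + σ • fderiv ℝ R p.2 ∘L ContinuousLinearMap.snd ℝ E E).prod
        (ContinuousLinearMap.snd ℝ E E + τ • fderiv ℝ R p.1 ∘L ContinuousLinearMap.fst ℝ E E)) p :=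
    (hasFDerivAt_fst.add ((h₂.hasFDerivAt.comp p hasFDerivAt_snd).const_smul σ)).prodMk
      (hasFDerivAt_snd.add ((h₁.hasFDerivAt.comp p hasFDerivAt_fst).const_smul τ))
  rw [hderiv.fderiv]
  exact det_fst_add_snd_add (fderiv ℝ R p.1 : E →ₗ[ℝ] E) (fderiv ℝ R p.2 : E →ₗ[ℝ] E) σ τ

variable [MeasurableSpace E] [BorelSpace E]

instance isAddHaarMeasure_volume_prod : (volume : Measure (E × E)).IsAddHaarMeasure :=
  Measure.prod.instIsAddHaarMeasure _ _

theorem measurable_crossJacobian (R : E → E) : Measurable (crossJacobian R) := by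
  have : ProperSpace (E →L[ℝ] E) := FiniteDimensional.proper ℝ _
  exact ((measurable_fderiv ℝ R).comp measurable_fst).mul
    ((measurable_fderiv ℝ R).comp measurable_snd)

theorem lintegral_abs_det_mul_comp_crossPerturb (hR : LipschitzWith 1 R) {σ τ : ℝ}
    (hσ : |σ| < 1) (hτ : |τ| < 1) (F : E × E → ℝ≥0∞) :
    ∫⁻ p, ENNReal.ofReal |(1 - (σ * τ) • crossJacobian R p).det| * F (crossPerturb R σ τ p) =
      ∫⁻ p, F p := by
  rw [← lintegral_abs_det_fderiv_mul_comp_of_lipschitzWith volume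
    (lipschitzWith_crossPerturb hR σ τ) (bijective_crossPerturb hR hσ hτ) F]
  have hfst : ∀ᵐ p : E × E, DifferentiableAt ℝ R p.1 :=
    Measure.quasiMeasurePreserving_fst.ae hR.ae_differentiableAt
  have hsnd : ∀ᵐ p : E × E, DifferentiableAt ℝ R p.2 :=
    Measure.quasiMeasurePreserving_snd.ae hR.ae_differentiableAt
  refine lintegral_congr_ae ?_
  filter_upwards [hfst, hsnd] with p h₁ h₂
  rw [det_fderiv_crossPerturb h₁ h₂]

/-- Fatou's lemma extends the change of variables to the endpoint `σ = τ = 1`, where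
`crossPerturb R 1 1` need not be injective. -/
theorem lintegral_abs_det_mul_comp_crossPerturb_one_le (hR : LipschitzWith 1 R)
    {G : E × E → ℝ} (hG : Continuous G) :
    ∫⁻ p, ENNReal.ofReal |(1 - crossJacobian R p).det| * ENNReal.ofReal (G (crossPerturb R 1 1 p))
      ≤ ∫⁻ p, ENNReal.ofReal (G p) := by
  have : ProperSpace (E →L[ℝ] E) := FiniteDimensional.proper ℝ _
  have hdet := ContinuousLinearMap.continuous_det (𝕜 := ℝ) (E := E)
  set f : ℝ → E × E → ℝ≥0∞ := fun s p =>
    ENNReal.ofReal |(1 - (s * s) • crossJacobian R p).det| *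
      ENNReal.ofReal (G (crossPerturb R s s p)) with hf
  have hf_cont (p : E × E) : Filter.Tendsto (f · p) (nhds 1) (nhds (f 1 p)) := by
    have hdet_cont : Continuous fun s : ℝ => |(1 - (s * s) • crossJacobian R p).det| :=
      (hdet.comp (by fun_prop)).abs
    have hG_cont := hG.comp (continuous_crossPerturb_diag R p)
    exact ENNReal.Tendsto.mul (ENNReal.tendsto_ofReal (hdet_cont.tendsto 1))
      (.inr ENNReal.ofReal_ne_top) (ENNReal.tendsto_ofReal (hG_cont.tendsto 1))
      (.inr ENNReal.ofReal_ne_top)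
  have hf_meas (s : ℝ) : Measurable (f s) := by
    have hJ := measurable_crossJacobian R
    have hcross := (lipschitzWith_crossPerturb hR s s).continuous
    have hdet' : Measurable fun p => (1 - (s * s) • crossJacobian R p).det :=
      hdet.measurable.comp (measurable_const.sub (hJ.fun_const_smul _))
    exact hdet'.abs.ennreal_ofReal.mul (hG.comp hcross).measurable.ennreal_ofReal
  obtain ⟨ρ, -, hρ, hρ_lim⟩ := exists_seq_strictMono_tendsto' (zero_lt_one' ℝ)
  calc ∫⁻ p, ENNReal.ofReal |(1 - crossJacobian R p).det| *
          ENNReal.ofReal (G (crossPerturb R 1 1 p))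
      = ∫⁻ p, Filter.liminf (fun k => f (ρ k) p) Filter.atTop := by
        refine lintegral_congr fun p => ?_
        have hlim : Filter.Tendsto (fun k => f (ρ k) p) Filter.atTop (nhds (f 1 p)) :=
          (hf_cont p).comp hρ_lim
        rw [hlim.liminf_eq]
        simp [hf]
    _ ≤ Filter.liminf (fun k => ∫⁻ p, f (ρ k) p) Filter.atTop :=
        lintegral_liminf_le fun k => hf_meas (ρ k)
    _ = ∫⁻ p, ENNReal.ofReal (G p) := by
        have hρ_abs (k : ℕ) : |ρ k| < 1 := by rw [abs_of_pos (hρ k).1]; exact (hρ k).2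
        simp only [hf, lintegral_abs_det_mul_comp_crossPerturb hR (hρ_abs _) (hρ_abs _)
          fun p => ENNReal.ofReal (G p), Filter.liminf_const]

end CrossPerturb

/-! ### Analytic continuation of the Gaussian integral -/

section DifferentiableIntegral

variable {α : Type*} [MeasurableSpace α] {μ : Measure α} {U : Set ℂ} {F : ℂ → α → ℂ}

theorem aestronglyMeasurable_deriv_of_differentiableOn (hU : IsOpen U)
    (hmeas : ∀ t ∈ U, AEStronglyMeasurable (F t) μ)
    (hdiff : ∀ a, DifferentiableOn ℂ (F · a) U) {t : ℂ} (ht : t ∈ U) :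
    AEStronglyMeasurable (fun a => deriv (F · a) t) μ := by
  classical
  refine aestronglyMeasurable_of_tendsto_ae (nhdsWithin t {t}ᶜ)
    (f := fun s a => if s ∈ U then slope (F · a) t s else 0) (fun s => ?_) (.of_forall fun a => ?_)
  · split_ifs with hs
    · exact ((hmeas s hs).sub (hmeas t ht)).const_smul (s - t)⁻¹
    · exact aestronglyMeasurable_const
  · have hderiv := ((hdiff a).differentiableAt (hU.mem_nhds ht)).hasDerivAt
    refine (hasDerivAt_iff_tendsto_slope.1 hderiv).congr' ?_
    filter_upwards [nhdsWithin_le_nhds (hU.mem_nhds ht)] with s hs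
    rw [if_pos hs]

/-- Cauchy's estimate turns a bound on the integrand into one on its derivative, so that no separate
domination of the derivative is required. -/
theorem differentiableOn_integral_of_dominated (hU : IsOpen U) {bound : α → ℝ}
    (hmeas : ∀ t ∈ U, AEStronglyMeasurable (F t) μ) (hbound : ∀ t ∈ U, ∀ a, ‖F t a‖ ≤ bound a)
    (hint : Integrable bound μ) (hdiff : ∀ a, DifferentiableOn ℂ (F · a) U) :
    DifferentiableOn ℂ (fun t => ∫ a, F t a ∂μ) U := by
  intro t ht
  obtain ⟨δ, hδ, hball⟩ := Metric.isOpen_iff.1 hU t ht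
  have hsub {s : ℂ} (hs : s ∈ ball t (δ / 2)) : closedBall s (δ / 4) ⊆ U :=
    (closedBall_subset_ball' (by linarith [mem_ball.1 hs])).trans hball
  have hderiv_le (a : α) {s : ℂ} (hs : s ∈ ball t (δ / 2)) :
      ‖deriv (F · a) s‖ ≤ bound a / (δ / 4) :=
    Complex.norm_deriv_le_of_forall_mem_sphere_norm_le (by positivity)
      (((hdiff a).mono (hsub hs)).diffContOnCl_ball Subset.rfl)
      fun z hz => hbound z (hsub hs (sphere_subset_closedBall hz)) a
  refine (hasDerivAt_integral_of_dominated_loc_of_deriv_le (ball_mem_nhds t (half_pos hδ))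
    (Filter.mem_of_superset (hU.mem_nhds ht) hmeas)
    (hint.mono' (hmeas t ht) (.of_forall (hbound t ht)))
    (aestronglyMeasurable_deriv_of_differentiableOn hU hmeas hdiff ht)
    (.of_forall fun a s hs => hderiv_le a hs) (hint.div_const _)
    (.of_forall fun a s hs => ?_)).2.differentiableAt.differentiableWithinAt
  exact ((hdiff a).differentiableAt
    (hU.mem_nhds (hsub hs (mem_closedBall_self (by positivity))))).hasDerivAt

end DifferentiableIntegral

section ComplexDet

variable {E : Type*} [NormedAddCommGroup E] [InnerProductSpace ℝ E]

theorem exists_pos_forall_norm_lt_det_one_add_pos :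
    ∃ δ > 0, ∀ A : E →L[ℝ] E, ‖A‖ < δ → 0 < (1 + A).det := by
  have hcont : Continuous fun A : E →L[ℝ] E => (1 + A).det :=
    ContinuousLinearMap.continuous_det.comp (continuous_const.add continuous_id)
  have hone : (0 : ℝ) < (1 + (0 : E →L[ℝ] E)).det := by simp [ContinuousLinearMap.det]
  obtain ⟨δ, hδ, hpos⟩ :=
    Metric.eventually_nhds_iff.1 ((hcont.tendsto 0).eventually_const_lt hone)
  exact ⟨δ, hδ, fun A hA => hpos (by rwa [dist_zero_right])⟩

variable [FiniteDimensional ℝ E]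

/-- The polynomial `s ↦ det (1 + s A)` evaluated at a complex number, through the matrix of `A` in
an orthonormal basis. -/
def complexDet (A : E →L[ℝ] E) (z : ℂ) : ℂ :=
  (1 + z • (LinearMap.toMatrix (stdOrthonormalBasis ℝ E).toBasis (stdOrthonormalBasis ℝ E).toBasis
    (A : E →ₗ[ℝ] E)).map Complex.ofReal).det

theorem complexDet_ofReal (A : E →L[ℝ] E) (s : ℝ) : complexDet A s = ((1 + s • A).det : ℝ) := by
  set b := (stdOrthonormalBasis ℝ E).toBasis
  have hdet : (1 + s • A).det = (1 + s • LinearMap.toMatrix b b (A : E →ₗ[ℝ] E)).det := by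
    rw [← LinearMap.toMatrix_one b, ← map_smul, ← map_add, LinearMap.det_toMatrix]
    rfl
  have hmap := RingHom.map_det Complex.ofRealHom (1 + s • LinearMap.toMatrix b b (A : E →ₗ[ℝ] E))
  rw [Complex.ofRealHom_eq_coe] at hmap
  rw [hdet, complexDet, hmap, map_add, map_one]
  congr 2
  ext i j
  simp [b]

theorem continuous_complexDet :
    Continuous fun p : (E →L[ℝ] E) × ℂ => complexDet p.1 p.2 := by
  set b := (stdOrthonormalBasis ℝ E).toBasis
  have hmatrix : Continuous fun A : E →L[ℝ] E => LinearMap.toMatrix b b (A : E →ₗ[ℝ] E) :=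
    LinearMap.continuous_of_finiteDimensional
      ((LinearMap.toMatrix b b).toLinearMap ∘ₗ ContinuousLinearMap.coeLM ℝ)
  refine Continuous.matrix_det (continuous_const.add (continuous_snd.smul ?_))
  exact (hmatrix.comp continuous_fst).matrix_map Complex.continuous_ofReal

theorem differentiable_complexDet (A : E →L[ℝ] E) : Differentiable ℂ (complexDet A) := by
  unfold complexDet
  simp only [Matrix.det_apply, Matrix.add_apply, Matrix.smul_apply]
  fun_prop

theorem exists_norm_complexDet_le (r s : ℝ) :
    ∃ M, ∀ A : E →L[ℝ] E, ‖A‖ ≤ r → ∀ z : ℂ, ‖z‖ ≤ s → ‖complexDet A z‖ ≤ M := by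
  have : ProperSpace (E →L[ℝ] E) := FiniteDimensional.proper ℝ _
  have hcompact := (isCompact_closedBall (0 : E →L[ℝ] E) r).prod (isCompact_closedBall (0 : ℂ) s)
  obtain ⟨M, hM⟩ := hcompact.exists_bound_of_continuousOn continuous_complexDet.continuousOn
  exact ⟨M, fun A hA z hz => hM (A, z) ⟨by simpa using hA, by simpa using hz⟩⟩

end ComplexDet

section CrossIntegrand

variable {E : Type*} [NormedAddCommGroup E]

/-- The Euclidean squared norm on `E × E`, whose own norm is the maximum norm. -/
def sqNorm (p : E × E) : ℝ := ‖p.1‖ ^ 2 + ‖p.2‖ ^ 2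

theorem sqNorm_nonneg (p : E × E) : 0 ≤ sqNorm p := by unfold sqNorm; positivity

theorem continuous_sqNorm : Continuous (sqNorm : E × E → ℝ) := by unfold sqNorm; fun_prop

variable [InnerProductSpace ℝ E] {R : E → E}

/-- The coefficient of `2 t` in `sqNorm (crossPerturb R (-t) t p)`. -/
def skewPairing (R : E → E) (p : E × E) : ℝ := ⟪p.2, R p.1⟫ - ⟪p.1, R p.2⟫

theorem continuous_skewPairing (hR : Continuous R) : Continuous (skewPairing R) := by
  unfold skewPairing; fun_prop

theorem sqNorm_crossPerturb_neg (R : E → E) (t : ℝ) (p : E × E) :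
    sqNorm (crossPerturb R (-t) t p) =
      sqNorm p + 2 * t * skewPairing R p + t ^ 2 * sqNorm (Prod.map R R p) := by
  simp only [sqNorm, crossPerturb, skewPairing, Prod.map, norm_add_sq_real, inner_smul_right,
    norm_smul, mul_pow, Real.norm_eq_abs, sq_abs]
  ring

theorem abs_skewPairing_le (hR : ∀ a, ‖R a‖ ≤ ‖a‖) (p : E × E) :
    |skewPairing R p| ≤ sqNorm p := by
  have hinner (a b : E) : |⟪a, R b⟫| ≤ ‖a‖ * ‖b‖ :=
    (abs_real_inner_le_norm a (R b)).trans
      (mul_le_mul_of_nonneg_left (hR b) (norm_nonneg a))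
  calc |skewPairing R p| ≤ |⟪p.2, R p.1⟫| + |⟪p.1, R p.2⟫| := abs_sub _ _
    _ ≤ ‖p.2‖ * ‖p.1‖ + ‖p.1‖ * ‖p.2‖ := add_le_add (hinner _ _) (hinner _ _)
    _ ≤ sqNorm p := by unfold sqNorm; nlinarith [sq_nonneg (‖p.1‖ - ‖p.2‖)]

/-- The complexification of the exponent `sqNorm (crossPerturb R (-t) t p)`. -/
def crossExponent (R : E → E) (t : ℂ) (p : E × E) : ℂ :=
  sqNorm p + 2 * t * skewPairing R p + t ^ 2 * sqNorm (Prod.map R R p)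

/-- A rectangle containing `0` and `I` on which the real part of `crossExponent` stays positive when
`‖R a‖² ≤ (1 - c) ‖a‖²`. -/
def continuationRect (c : ℝ) : Set ℂ :=
  Ioo (-(c / 10)) (c / 10) ×ℂ Ioo (-(1 + c / 10)) (1 + c / 10)

theorem half_mul_sqNorm_le_re_crossExponent {c : ℝ} (hc₀ : 0 < c)
    (hR : ∀ a, ‖R a‖ ^ 2 ≤ (1 - c) * ‖a‖ ^ 2) {t : ℂ} (ht : t ∈ continuationRect c) (p : E × E) :
    c / 2 * sqNorm p ≤ (crossExponent R t p).re := by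
  have hre : |t.re| ≤ c / 10 := (abs_lt.2 ht.1).le
  have him : |t.im| ≤ 1 + c / 10 := (abs_lt.2 ht.2).le
  have hexpand : (crossExponent R t p).re = sqNorm p + 2 * (t.re * skewPairing R p) +
      (t.re ^ 2 - t.im ^ 2) * sqNorm (Prod.map R R p) := by
    simp [crossExponent, pow_two]
    ring
  have hcontr (a : E) : ‖R a‖ ≤ ‖a‖ := by
    refine (sq_le_sq₀ (norm_nonneg _) (norm_nonneg _)).1 ((hR a).trans ?_)
    nlinarith [sq_nonneg ‖a‖]
  have hnorm : 0 ≤ sqNorm p := sqNorm_nonneg p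
  have himage₀ : 0 ≤ sqNorm (Prod.map R R p) := sqNorm_nonneg _
  have himage : sqNorm (Prod.map R R p) ≤ (1 - c) * sqNorm p := by
    simp only [sqNorm, Prod.map]
    linarith [hR p.1, hR p.2]
  have hskew : |t.re * skewPairing R p| ≤ c / 10 * sqNorm p := by
    rw [abs_mul]
    exact mul_le_mul hre (abs_skewPairing_le hcontr p) (abs_nonneg _) (by positivity)
  have him_sq : t.im ^ 2 ≤ (1 + c / 10) ^ 2 := by
    rw [← sq_abs]; exact pow_le_pow_left₀ (abs_nonneg _) him 2
  have hquad : t.im ^ 2 * sqNorm (Prod.map R R p) ≤ (1 - c * (7 / 10)) * sqNorm p :=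
    calc t.im ^ 2 * sqNorm (Prod.map R R p)
        ≤ (1 + c / 10) ^ 2 * ((1 - c) * sqNorm p) :=
          mul_le_mul him_sq himage himage₀ (by positivity)
      _ = ((1 + c / 10) ^ 2 * (1 - c)) * sqNorm p := by ring
      _ ≤ (1 - c * (7 / 10)) * sqNorm p := by
          refine mul_le_mul_of_nonneg_right ?_ hnorm
          nlinarith [mul_pos hc₀ hc₀, mul_pos hc₀ (mul_pos hc₀ hc₀)]
  rw [hexpand]
  nlinarith [(abs_le.1 hskew).1, mul_nonneg (sq_nonneg t.re) himage₀, mul_nonneg hc₀.le hnorm]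

variable [FiniteDimensional ℝ E]

/-- The integrand obtained from `exp (-sqNorm p)` by the change of variables
`crossPerturb R (-t) t`, with `t` allowed to be complex. -/
def crossIntegrand (R : E → E) (t : ℂ) (p : E × E) : ℂ :=
  Complex.exp (-crossExponent R t p) * complexDet (crossJacobian R p) (t ^ 2)

theorem crossIntegrand_ofReal (R : E → E) (t : ℝ) (p : E × E) :
    crossIntegrand R t p = (Real.exp (-sqNorm (crossPerturb R (-t) t p)) *
      (1 + t ^ 2 • crossJacobian R p).det : ℝ) := by
  rw [crossIntegrand, ← Complex.ofReal_pow, complexDet_ofReal, sqNorm_crossPerturb_neg,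
    crossExponent]
  push_cast
  rfl

theorem norm_crossIntegrand_I (R : E → E) (p : E × E) :
    ‖crossIntegrand R Complex.I p‖ =
      |(1 - crossJacobian R p).det| * Real.exp (-(sqNorm p - sqNorm (Prod.map R R p))) := by
  have hdet : complexDet (crossJacobian R p) (Complex.I ^ 2) =
      ((1 - crossJacobian R p).det : ℝ) := by
    simpa [sub_eq_add_neg] using complexDet_ofReal (crossJacobian R p) (-1)
  rw [crossIntegrand, hdet, norm_mul, Complex.norm_real, Real.norm_eq_abs, Complex.norm_exp,
    mul_comm]
  simp [crossExponent, sub_eq_add_neg]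

theorem differentiable_crossIntegrand (R : E → E) (p : E × E) :
    Differentiable ℂ (crossIntegrand R · p) := by
  have hdet := differentiable_complexDet (crossJacobian R p)
  unfold crossIntegrand crossExponent
  fun_prop

theorem exists_norm_crossIntegrand_le (hR : LipschitzWith 1 R) {c : ℝ} (hc₀ : 0 < c) (hc₁ : c ≤ 1)
    (hgap : ∀ a, ‖R a‖ ^ 2 ≤ (1 - c) * ‖a‖ ^ 2) :
    ∃ M, ∀ t ∈ continuationRect c, ∀ p,
      ‖crossIntegrand R t p‖ ≤ Real.exp (-(c / 2) * sqNorm p) * M := by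
  obtain ⟨M, hM⟩ := exists_norm_complexDet_le (E := E) 1 (2 ^ 2)
  refine ⟨M, fun t ht p => ?_⟩
  have hnorm : ‖t‖ ≤ 2 := by
    have := Complex.norm_le_abs_re_add_abs_im t
    linarith [abs_lt.2 ht.1, abs_lt.2 ht.2]
  rw [crossIntegrand, norm_mul, Complex.norm_exp, Complex.neg_re, neg_mul]
  refine mul_le_mul (Real.exp_le_exp.2 (neg_le_neg
    (half_mul_sqNorm_le_re_crossExponent hc₀ hgap ht p)))
    (hM _ (norm_crossJacobian_le hR p) _ ?_) (norm_nonneg _) (Real.exp_nonneg _)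
  rw [norm_pow]
  exact pow_le_pow_left₀ (norm_nonneg t) hnorm 2

variable [MeasurableSpace E] [BorelSpace E]

theorem measurable_crossIntegrand (hR : Continuous R) (t : ℂ) :
    Measurable (crossIntegrand R t) := by
  have hexp : Continuous fun p => Complex.exp (-crossExponent R t p) := by
    have hskew := continuous_skewPairing hR
    have hnorm := continuous_sqNorm (E := E)
    unfold crossExponent
    fun_prop
  have hdet : Continuous fun A : E →L[ℝ] E => complexDet A (t ^ 2) :=
    continuous_complexDet.comp (continuous_id.prodMk continuous_const)
  exact hexp.measurable.mul (hdet.measurable.comp (measurable_crossJacobian R))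

theorem integrable_exp_neg_mul_sqNorm {b : ℝ} (hb : 0 < b) :
    Integrable fun p : E × E => Real.exp (-b * sqNorm p) := by
  have hint : Integrable fun v : E => Real.exp (-b * ‖v‖ ^ 2) := by
    refine Integrable.of_integral_ne_zero ?_
    rw [GaussianFourier.integral_rexp_neg_mul_sq_norm hb]
    positivity
  refine (hint.mul_prod hint).congr (.of_forall fun p => ?_)
  simp only [sqNorm, mul_add, Real.exp_add]

theorem eventually_integral_crossIntegrand_ofReal (hR : LipschitzWith 1 R) :
    ∀ᶠ t : ℝ in nhds 0, ∫ p, crossIntegrand R t p = (∫ p : E × E, Real.exp (-sqNorm p) : ℝ) := by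
  obtain ⟨δ, hδ, hdet⟩ := exists_pos_forall_norm_lt_det_one_add_pos (E := E)
  have hsmall : ∀ᶠ t : ℝ in nhds 0, t ^ 2 < δ :=
    (continuous_pow 2).tendsto' (0 : ℝ) 0 (by simp) |>.eventually_lt_const hδ
  filter_upwards [ball_mem_nhds (0 : ℝ) one_pos, hsmall] with t ht ht_sq
  rw [mem_ball_zero_iff, Real.norm_eq_abs] at ht
  have hpos (p : E × E) : 0 < (1 + t ^ 2 • crossJacobian R p).det := by
    refine hdet _ (lt_of_le_of_lt ?_ ht_sq)
    rw [norm_smul, norm_pow, Real.norm_eq_abs, sq_abs]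
    exact mul_le_of_le_one_right (sq_nonneg t) (norm_crossJacobian_le hR p)
  have hmeas := (measurable_crossIntegrand hR.continuous t).re.aestronglyMeasurable (μ := volume)
  simp only [crossIntegrand_ofReal] at hmeas ⊢
  rw [integral_complex_ofReal, integral_eq_lintegral_of_nonneg_ae
    (.of_forall fun p => mul_nonneg (Real.exp_nonneg _) (hpos p).le) hmeas,
    integral_eq_lintegral_of_nonneg_ae (.of_forall fun p => Real.exp_nonneg _)
      (by have := continuous_sqNorm (E := E); fun_prop),
    ← lintegral_abs_det_mul_comp_crossPerturb hR (by rwa [abs_neg] : |-t| < 1) ht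
      fun p => ENNReal.ofReal (Real.exp (-sqNorm p))]
  congr 2
  refine lintegral_congr fun p => ?_
  have hsign : 1 - (-t * t) • crossJacobian R p = 1 + t ^ 2 • crossJacobian R p := by
    rw [neg_mul, neg_smul, sub_neg_eq_add, pow_two]
  rw [hsign, abs_of_pos (hpos p), mul_comm, ENNReal.ofReal_mul (hpos p).le]

theorem integral_crossIntegrand_I (hR : LipschitzWith 1 R) {c : ℝ} (hc₀ : 0 < c) (hc₁ : c ≤ 1)
    (hgap : ∀ a, ‖R a‖ ^ 2 ≤ (1 - c) * ‖a‖ ^ 2) :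
    ∫ p, crossIntegrand R Complex.I p = (∫ p : E × E, Real.exp (-sqNorm p) : ℝ) := by
  have hopen : IsOpen (continuationRect c) := isOpen_Ioo.reProdIm isOpen_Ioo
  have hconvex : Convex ℝ (continuationRect c) :=
    ((convex_Ioo _ _).linear_preimage Complex.reLm).inter
      ((convex_Ioo _ _).linear_preimage Complex.imLm)
  have hzero : (0 : ℂ) ∈ continuationRect c := by
    simp only [continuationRect, Complex.mem_reProdIm, mem_Ioo, Complex.zero_re, Complex.zero_im]
    refine ⟨⟨?_, ?_⟩, ?_, ?_⟩ <;> linarith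
  have hI : Complex.I ∈ continuationRect c := by
    simp only [continuationRect, Complex.mem_reProdIm, mem_Ioo, Complex.I_re, Complex.I_im]
    refine ⟨⟨?_, ?_⟩, ?_, ?_⟩ <;> linarith
  obtain ⟨M, hM⟩ := exists_norm_crossIntegrand_le hR hc₀ hc₁ hgap
  have hdiff : DifferentiableOn ℂ (fun t => ∫ p, crossIntegrand R t p) (continuationRect c) :=
    differentiableOn_integral_of_dominated hopen
      (fun t _ => (measurable_crossIntegrand hR.continuous t).aestronglyMeasurable) hM
      ((integrable_exp_neg_mul_sqNorm (half_pos hc₀)).mul_const M)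
      fun p => (differentiable_crossIntegrand R p).differentiableOn
  have hfreq : ∃ᶠ t in nhdsWithin (0 : ℂ) {0}ᶜ,
      ∫ p, crossIntegrand R t p = (∫ p : E × E, Real.exp (-sqNorm p) : ℝ) := by
    have hreal : Filter.Tendsto Complex.ofReal (nhdsWithin 0 {0}ᶜ) (nhdsWithin 0 {0}ᶜ) :=
      Complex.ofRealCLM.hasDerivAt.tendsto_nhdsNE (by simp)
    exact hreal.frequently ((eventually_integral_crossIntegrand_ofReal hR).filter_mono
      nhdsWithin_le_nhds).frequently
  exact (hdiff.analyticOnNhd hopen).eqOn_of_preconnected_of_frequently_eq analyticOnNhd_const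
    hconvex.isPreconnected hzero hfreq hI

theorem lintegral_exp_neg_sqNorm_le (hR : LipschitzWith 1 R) {c : ℝ} (hc₀ : 0 < c) (hc₁ : c ≤ 1)
    (hgap : ∀ a, ‖R a‖ ^ 2 ≤ (1 - c) * ‖a‖ ^ 2) :
    ∫⁻ p : E × E, ENNReal.ofReal (Real.exp (-sqNorm p)) ≤
      ∫⁻ p, ENNReal.ofReal |(1 - crossJacobian R p).det| *
        ENNReal.ofReal (Real.exp (-(sqNorm p - sqNorm (Prod.map R R p)))) := by
  have hint : Integrable fun p : E × E => Real.exp (-sqNorm p) := by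
    simpa using integrable_exp_neg_mul_sqNorm (E := E) one_pos
  have hnonneg : 0 ≤ ∫ p : E × E, Real.exp (-sqNorm p) := integral_nonneg fun _ => Real.exp_nonneg _
  calc ∫⁻ p : E × E, ENNReal.ofReal (Real.exp (-sqNorm p))
      = ‖∫ p, crossIntegrand R Complex.I p‖ₑ := by
        rw [integral_crossIntegrand_I hR hc₀ hc₁ hgap, ← ofReal_integral_eq_lintegral_ofReal hint
          (.of_forall fun _ => Real.exp_nonneg _), ← ofReal_norm, Complex.norm_real,
          Real.norm_of_nonneg hnonneg]
    _ ≤ ∫⁻ p, ‖crossIntegrand R Complex.I p‖ₑ := enorm_integral_le_lintegral_enorm _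
    _ = _ := by
        simp only [← ofReal_norm, norm_crossIntegrand_I,
          ENNReal.ofReal_mul (abs_nonneg _)]

end CrossIntegrand

/-! ### Proximal reflections and the Bourgain–Milman inequality -/

section Seminorm

variable {E : Type*} [NormedAddCommGroup E] [InnerProductSpace ℝ E] {p q : Seminorm ℝ E}

/-- `q` is at most the seminorm dual to `p`. The bound is phrased without a supremum, so that it
makes sense for degenerate `p`. -/
def LeDual (q p : Seminorm ℝ E) : Prop :=
  ∀ ⦃y s⦄, 0 ≤ s → (∀ z, ⟪y, z⟫ ≤ s * p z) → q y ≤ s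

/-- `y` is a subgradient at `x` of the convex function `p ^ 2 / 2`. -/
def IsSubgradient (p : Seminorm ℝ E) (x y : E) : Prop :=
  ∀ z, p x ^ 2 / 2 + ⟪y, z - x⟫ ≤ p z ^ 2 / 2

theorem IsSubgradient.inner_eq {x y : E} (h : IsSubgradient p x y) : ⟪x, y⟫ = p x ^ 2 := by
  have hquad (s : ℝ) : 0 ≤ p x ^ 2 / 2 * (s * s) + (p x ^ 2 - ⟪x, y⟫) * s + 0 := by
    have hs := h ((1 + s) • x)
    rw [show (1 + s) • x - x = s • x by module, inner_smul_right, real_inner_comm,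
      map_smul_eq_mul, mul_pow, Real.norm_eq_abs, sq_abs] at hs
    linarith
  have hsq : (p x ^ 2 - ⟪x, y⟫) ^ 2 ≤ 0 := by simpa [discrim] using discrim_le_zero hquad
  linarith [sq_nonpos_iff _ |>.1 hsq]

theorem IsSubgradient.inner_le {x y : E} (h : IsSubgradient p x y) (z : E) :
    ⟪y, z⟫ ≤ p x * p z := by
  have hquad (s : ℝ) : 0 ≤ p z ^ 2 / 2 * (s * s) + -⟪y, z⟫ * s + p x ^ 2 / 2 := by
    have hs := h (s • z)
    rw [inner_sub_right, inner_smul_right, real_inner_comm x y, h.inner_eq, map_smul_eq_mul,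
      mul_pow, Real.norm_eq_abs, sq_abs] at hs
    linarith
  have hdiscrim := discrim_le_zero hquad
  rw [discrim] at hdiscrim
  exact (abs_le_of_sq_le_sq' (by linarith) (by positivity)).2

theorem IsSubgradient.inner_sub_nonneg {x₁ x₂ y₁ y₂ : E} (h₁ : IsSubgradient p x₁ y₁)
    (h₂ : IsSubgradient p x₂ y₂) : 0 ≤ ⟪x₁ - x₂, y₁ - y₂⟫ := by
  have h₁₂ := h₁ x₂
  have h₂₁ := h₂ x₁
  rw [← neg_sub, inner_neg_right] at h₁₂
  rw [real_inner_comm, inner_sub_left]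
  linarith

theorem sq_seminorm_midpoint_le (p : Seminorm ℝ E) (u v : E) :
    p ((1 / 2 : ℝ) • (u + v)) ^ 2 ≤ (p u ^ 2 + p v ^ 2) / 2 := by
  have hconv := (p.convexOn.pow (fun _ _ => apply_nonneg p _) 2).2 (mem_univ u) (mem_univ v)
    one_half_pos.le one_half_pos.le (add_halves (1 : ℝ))
  simp only [Pi.pow_apply, smul_eq_mul] at hconv
  rw [smul_add]
  linarith

theorem inner_add_sub_eq (u v : E) : ⟪u + v, u - v⟫ = ‖u‖ ^ 2 - ‖v‖ ^ 2 := by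
  rw [inner_add_left, inner_sub_right, inner_sub_right, real_inner_self_eq_norm_sq,
    real_inner_self_eq_norm_sq, real_inner_comm]
  ring

variable [FiniteDimensional ℝ E]

theorem continuous_seminorm (p : Seminorm ℝ E) : Continuous p :=
  continuousOn_univ.1 (p.convexOn.continuousOn isOpen_univ)

theorem isOpen_ball_seminorm (p : Seminorm ℝ E) (x : E) (r : ℝ) : IsOpen (p.ball x r) :=
  isOpen_lt ((continuous_seminorm p).comp (by fun_prop)) continuous_const

theorem isClosed_closedBall_seminorm (p : Seminorm ℝ E) (x : E) (r : ℝ) :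
    IsClosed (p.closedBall x r) :=
  isClosed_le ((continuous_seminorm p).comp (by fun_prop)) continuous_const

theorem exists_pos_mul_norm_le_seminorm (hp : ∀ v, p v = 0 → v = 0) :
    ∃ m > 0, ∀ v, m * ‖v‖ ≤ p v := by
  obtain ⟨m, hm, hmp⟩ := (isCompact_sphere (0 : E) 1).exists_forall_le'
    (continuous_seminorm p).continuousOn (a := 0) fun v hv =>
      (apply_nonneg p v).lt_of_ne' fun hzero => by simp [hp v hzero] at hv
  refine ⟨m, hm, fun v => ?_⟩
  rcases eq_or_ne v 0 with rfl | hv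
  · simp
  · have hunit := hmp (‖v‖⁻¹ • v) (by simp [norm_smul, hv])
    rwa [map_smul_eq_mul, norm_inv, norm_norm, ← div_eq_inv_mul,
      le_div_iff₀ (norm_pos_iff.2 hv)] at hunit

theorem exists_isSubgradient_add_eq (p : Seminorm ℝ E) (a : E) :
    ∃ x y, IsSubgradient p x y ∧ x + y = a := by
  have hlim : Filter.Tendsto (fun x => p x ^ 2 / 2 + ‖a - x‖ ^ 2 / 2)
      (Filter.cocompact E) Filter.atTop := by
    refine Filter.tendsto_atTop_mono (fun x => le_add_of_nonneg_left (by positivity)) ?_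
    exact ((Filter.tendsto_pow_atTop two_ne_zero).comp (tendsto_norm_cocompact_atTop.comp
      (Homeomorph.subLeft a).isClosedEmbedding.tendsto_cocompact)).atTop_div_const two_pos
  have hcont := continuous_seminorm p
  obtain ⟨x, hx⟩ := Continuous.exists_forall_le (by fun_prop) hlim
  refine ⟨x, a - x, fun z => ?_, by abel⟩
  have hfirst (t : ℝ) (ht : t ∈ Ioo (0 : ℝ) 1) :
      p x ^ 2 / 2 + ⟪a - x, z - x⟫ - p z ^ 2 / 2 ≤ t * (‖z - x‖ ^ 2 / 2) := by
    have hmin := hx (x + t • (z - x))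
    have hconv := (p.convexOn.pow (fun _ _ => apply_nonneg p _) 2).2 (mem_univ x) (mem_univ z)
      (sub_nonneg.2 ht.2.le) ht.1.le (by ring)
    simp only [Pi.pow_apply, smul_eq_mul] at hconv
    rw [show x + t • (z - x) = (1 - t) • x + t • z by module,
      show a - ((1 - t) • x + t • z) = a - x - t • (z - x) by module, norm_sub_sq_real (a - x),
      inner_smul_right, norm_smul, mul_pow, Real.norm_eq_abs, sq_abs] at hmin
    refine le_of_mul_le_mul_left ?_ ht.1
    linarith
  have hzero : Filter.Tendsto (fun t : ℝ => t * (‖z - x‖ ^ 2 / 2)) (nhdsWithin 0 (Ioi 0))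
      (nhds 0) := by
    refine Filter.Tendsto.mono_left ?_ nhdsWithin_le_nhds
    simpa using (Filter.tendsto_id (x := nhds (0 : ℝ))).mul_const (‖z - x‖ ^ 2 / 2)
  linarith [ge_of_tendsto hzero (Filter.mem_of_superset (Ioo_mem_nhdsGT one_pos) hfirst)]

/-- `R` sends `a` to `2 x - a`, where `x` is the proximal point of `2 a` for `p ^ 2 / 2`. -/
theorem exists_lipschitzWith_isSubgradient (p : Seminorm ℝ E) :
    ∃ R : E → E, LipschitzWith 1 R ∧ ∀ a, IsSubgradient p (a + R a) (a - R a) := by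
  choose X Y hsub hXY using fun a => exists_isSubgradient_add_eq p ((2 : ℝ) • a)
  have hY (a : E) : a - (X a - a) = Y a := by
    rw [← add_right_inj (X a), hXY]
    module
  have hR (a : E) : IsSubgradient p (a + (X a - a)) (a - (X a - a)) := by
    rw [hY, add_sub_cancel]
    exact hsub a
  refine ⟨fun a => X a - a, .of_dist_le_mul fun a b => ?_, hR⟩
  have hmono := (hR a).inner_sub_nonneg (hR b)
  rw [show a + (X a - a) - (b + (X b - b)) = a - b + (X a - a - (X b - b)) by abel,
    show a - (X a - a) - (b - (X b - b)) = a - b - (X a - a - (X b - b)) by abel,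
    inner_add_sub_eq] at hmono
  simpa [dist_eq_norm] using (abs_le_of_sq_le_sq' (sub_nonneg.1 hmono) (norm_nonneg _)).2

theorem exists_norm_sq_le_of_isSubgradient (hp : ∀ v, p v = 0 → v = 0) :
    ∃ c, 0 < c ∧ c ≤ 1 ∧
      ∀ a b, IsSubgradient p (a + b) (a - b) → ‖b‖ ^ 2 ≤ (1 - c) * ‖a‖ ^ 2 := by
  obtain ⟨m, hm, hmp⟩ := exists_pos_mul_norm_le_seminorm hp
  obtain ⟨M, hM, hpM⟩ := p.bound_of_continuous_normedSpace (continuous_seminorm p)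
  refine ⟨min 1 (4 / (1 / m + M) ^ 2), by positivity, min_le_left _ _, fun a b h => ?_⟩
  have hadd : ‖a + b‖ ≤ 1 / m * p (a + b) := by
    rw [one_div, ← div_eq_inv_mul, le_div_iff₀ hm, mul_comm]
    exact hmp _
  have hsub : ‖a - b‖ ≤ M * p (a + b) := by
    have hself := (h.inner_le (a - b)).trans
      (mul_le_mul_of_nonneg_left (hpM (a - b)) (apply_nonneg p _))
    rw [real_inner_self_eq_norm_sq] at hself
    rcases (norm_nonneg (a - b)).eq_or_lt with hzero | hpos
    · rw [← hzero]
      positivity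
    · exact le_of_mul_le_mul_right (by linarith) hpos
  have hnorm : 2 * ‖a‖ ≤ (1 / m + M) * p (a + b) :=
    calc 2 * ‖a‖ = ‖(a + b) + (a - b)‖ := by
          rw [show (a + b) + (a - b) = (2 : ℝ) • a by module, norm_smul, Real.norm_two]
      _ ≤ (1 / m + M) * p (a + b) := by linarith [norm_add_le (a + b) (a - b)]
  have hgap : min 1 (4 / (1 / m + M) ^ 2) * ‖a‖ ^ 2 ≤ p (a + b) ^ 2 :=
    calc min 1 (4 / (1 / m + M) ^ 2) * ‖a‖ ^ 2 ≤ 4 / (1 / m + M) ^ 2 * ‖a‖ ^ 2 := by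
          gcongr
          exact min_le_right _ _
      _ = (2 * ‖a‖) ^ 2 / (1 / m + M) ^ 2 := by ring
      _ ≤ p (a + b) ^ 2 := by
          rw [div_le_iff₀ (by positivity), ← mul_pow, mul_comm (p _)]
          gcongr
  rw [← h.inner_eq, inner_add_sub_eq] at hgap
  linarith

end Seminorm

section GaussianIntegral

variable {E : Type*} [NormedAddCommGroup E] [InnerProductSpace ℝ E] [FiniteDimensional ℝ E]
  [MeasurableSpace E] [BorelSpace E]

theorem lintegral_half_smul_add (b : E) {f : E → ℝ≥0∞} (hf : Measurable f) :
    ∫⁻ a, f ((1 / 2 : ℝ) • (a + b)) = 2 ^ Module.finrank ℝ E * ∫⁻ a, f a := by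
  rw [lintegral_add_right_eq_self (fun a => f ((1 / 2 : ℝ) • a)) b,
    ← lintegral_map hf (measurable_const_smul (1 / 2 : ℝ)),
    Measure.map_addHaar_smul _ (by norm_num), lintegral_smul_measure, smul_eq_mul,
    abs_of_pos (by positivity), one_div, inv_pow, inv_inv, ENNReal.ofReal_pow zero_le_two,
    ENNReal.ofReal_ofNat]

theorem lintegral_half_smul_add_mul_half_smul_sub {f g : E → ℝ≥0∞} (hf : Measurable f)
    (hg : Measurable g) :
    ∫⁻ z : E × E, f ((1 / 2 : ℝ) • (z.1 + z.2)) * g ((1 / 2 : ℝ) • (z.1 - z.2)) =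
      2 ^ Module.finrank ℝ E * ((∫⁻ a, f a) * ∫⁻ b, g b) := by
  have hshift (b : E) : ∫⁻ a, f ((1 / 2 : ℝ) • (a + b)) * g ((1 / 2 : ℝ) • (a - b)) =
      2 ^ Module.finrank ℝ E * ∫⁻ a, f a * g (a - b) := by
    rw [← lintegral_half_smul_add b (f := fun a => f a * g (a - b)) (by fun_prop)]
    refine lintegral_congr fun a => ?_
    rw [show (1 / 2 : ℝ) • (a - b) = (1 / 2 : ℝ) • (a + b) - b by module]
  rw [Measure.volume_eq_prod, lintegral_prod_symm _ (by fun_prop)]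
  simp_rw [hshift]
  rw [lintegral_const_mul _ (by fun_prop), lintegral_lintegral_swap (by fun_prop)]
  have hconv (a : E) : ∫⁻ b, f a * g (a - b) = f a * ∫⁻ b, g b := by
    rw [lintegral_const_mul _ (by fun_prop), lintegral_sub_left_eq_self]
  simp_rw [hconv]
  rw [lintegral_mul_const _ hf]

variable {p q : Seminorm ℝ E}

theorem lintegral_exp_neg_sq_seminorm (hp : ∀ v, p v = 0 → v = 0) :
    ∫⁻ v, ENNReal.ofReal (Real.exp (-p v ^ 2)) =
      volume (p.ball 0 1) * ENNReal.ofReal (Real.Gamma (Module.finrank ℝ E / 2 + 1)) := by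
  have hΓ : 0 < Real.Gamma (Module.finrank ℝ E / 2 + 1) := Real.Gamma_pos_of_pos (by positivity)
  have hvol := measure_lt_one_eq_integral_div_gamma volume (g := p) (map_zero p)
    (map_neg_eq_map p) (map_add_le_add p) (fun {v} => hp v)
    (fun r v => (map_smul_eq_mul p r v).le) two_pos
  simp_rw [Real.rpow_two, ← p.ball_zero_eq] at hvol
  have hint : Integrable fun v => Real.exp (-p v ^ 2) := by
    by_contra hnot
    rw [integral_undef hnot, zero_div, ENNReal.ofReal_zero] at hvol
    exact (isOpen_ball_seminorm p 0 1).measure_ne_zero volume ⟨0, by simp⟩ hvol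
  rw [hvol, ← ENNReal.ofReal_mul (by positivity), div_mul_cancel₀ _ hΓ.ne',
    ofReal_integral_eq_lintegral_ofReal hint (.of_forall fun _ => Real.exp_nonneg _)]

theorem lintegral_exp_neg_sqNorm :
    ∫⁻ z : E × E, ENNReal.ofReal (Real.exp (-sqNorm z)) =
      (volume (ball (0 : E) 1) * ENNReal.ofReal (Real.Gamma (Module.finrank ℝ E / 2 + 1))) ^ 2 := by
  have hnorm := lintegral_exp_neg_sq_seminorm (E := E) (p := normSeminorm ℝ E) (by simp)
  rw [ball_normSeminorm, coe_normSeminorm] at hnorm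
  rw [← hnorm, sq, Measure.volume_eq_prod, ← lintegral_prod_mul (by fun_prop) (by fun_prop)]
  refine lintegral_congr fun z => ?_
  rw [← ENNReal.ofReal_mul (Real.exp_nonneg _), ← Real.exp_add, sqNorm, neg_add]

theorem lintegral_exp_neg_sqNorm_le_of_leDual (hp : ∀ v, p v = 0 → v = 0) (hqp : LeDual q p) :
    ∫⁻ z : E × E, ENNReal.ofReal (Real.exp (-sqNorm z)) ≤
      ∫⁻ z : E × E, ENNReal.ofReal (Real.exp (-p ((1 / 2 : ℝ) • (z.1 + z.2)) ^ 2) *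
        Real.exp (-q ((1 / 2 : ℝ) • (z.1 - z.2)) ^ 2)) := by
  have hpcont := continuous_seminorm p
  have hqcont := continuous_seminorm q
  obtain ⟨R, hR, hsub⟩ := exists_lipschitzWith_isSubgradient p
  obtain ⟨c, hc₀, hc₁, hgap⟩ := exists_norm_sq_le_of_isSubgradient hp
  have hpR (a : E) : p (a + R a) ^ 2 = ‖a‖ ^ 2 - ‖R a‖ ^ 2 := by
    rw [← (hsub a).inner_eq, inner_add_sub_eq]
  have hqR (a : E) : q (a - R a) ^ 2 ≤ ‖a‖ ^ 2 - ‖R a‖ ^ 2 := by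
    rw [← hpR]
    gcongr
    exact hqp (apply_nonneg p _) (hsub a).inner_le
  refine (lintegral_exp_neg_sqNorm_le hR hc₀ hc₁ fun a => hgap a (R a) (hsub a)).trans
    ((lintegral_mono fun z => ?_).trans
      (lintegral_abs_det_mul_comp_crossPerturb_one_le hR (by fun_prop)))
  gcongr
  rw [← Real.exp_add, Real.exp_le_exp, crossPerturb, one_smul, one_smul]
  have hpmid := sq_seminorm_midpoint_le p (z.1 + R z.1) (z.2 + R z.2)
  have hqmid := sq_seminorm_midpoint_le q (z.1 - R z.1) (-(z.2 - R z.2))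
  rw [map_neg_eq_map] at hqmid
  rw [show z.1 + R z.2 + (z.2 + R z.1) = z.1 + R z.1 + (z.2 + R z.2) by abel,
    show z.1 + R z.2 - (z.2 + R z.1) = z.1 - R z.1 + -(z.2 - R z.2) by abel]
  simp only [sqNorm, Prod.map_fst, Prod.map_snd]
  linarith [hpR z.1, hpR z.2, hqR z.1, hqR z.2]

theorem bourgain_milman (hp : ∀ v, p v = 0 → v = 0)
    (hq : ∀ v, q v = 0 → v = 0) (hqp : LeDual q p) :
    volume (ball (0 : E) 1) ^ 2 ≤
      2 ^ Module.finrank ℝ E * (volume (p.ball 0 1) * volume (q.ball 0 1)) := by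
  have hpcont := continuous_seminorm p
  have hqcont := continuous_seminorm q
  have h := lintegral_exp_neg_sqNorm_le_of_leDual hp hqp
  simp_rw [ENNReal.ofReal_mul (Real.exp_nonneg _)] at h
  rw [lintegral_half_smul_add_mul_half_smul_sub
    (f := fun v => ENNReal.ofReal (Real.exp (-p v ^ 2)))
    (g := fun v => ENNReal.ofReal (Real.exp (-q v ^ 2))) (by fun_prop) (by fun_prop),
    lintegral_exp_neg_sqNorm, lintegral_exp_neg_sq_seminorm hp,
    lintegral_exp_neg_sq_seminorm hq] at h
  set γ := ENNReal.ofReal (Real.Gamma (Module.finrank ℝ E / 2 + 1))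
  have hγ : γ ^ 2 ≠ 0 :=
    pow_ne_zero _ (ENNReal.ofReal_pos.2 (Real.Gamma_pos_of_pos (by positivity))).ne'
  rw [← ENNReal.mul_le_mul_iff_left hγ (ENNReal.pow_ne_top ENNReal.ofReal_ne_top)]
  calc _ = _ := by ring
    _ ≤ _ := h
    _ = _ := by ring

end GaussianIntegral

/-! ### Volume products of seminorm balls -/

section SeminormBall

variable {E : Type*} [NormedAddCommGroup E] [InnerProductSpace ℝ E] [FiniteDimensional ℝ E]
  {p : Seminorm ℝ E}

theorem isCompact_closedBall_seminorm (hp : ∀ v, p v = 0 → v = 0) (x : E) (r : ℝ) :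
    IsCompact (p.closedBall x r) := by
  obtain ⟨m, hm, hmp⟩ := exists_pos_mul_norm_le_seminorm hp
  refine (isCompact_closedBall x (r / m)).of_isClosed_subset
    (isClosed_closedBall_seminorm p x r) fun y hy => ?_
  rw [mem_closedBall, dist_eq_norm, le_div_iff₀ hm, mul_comm]
  exact (hmp _).trans hy

variable [MeasurableSpace E] [BorelSpace E]

theorem volume_closedBall_seminorm_eq_volume_ball (hp : ∀ v, p v = 0 → v = 0) :
    volume (p.closedBall 0 1) = volume (p.ball 0 1) := by
  rw [p.closedBall_zero_eq, p.ball_zero_eq]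
  rcases subsingleton_or_nontrivial E with hE | hE
  · simp [Subsingleton.elim _ (0 : E)]
  · exact measure_le_eq_lt volume (map_zero p) (map_neg_eq_map p) (map_add_le_add p)
      (fun {v} => hp v) (fun r v => (map_smul_eq_mul p r v).le) 1

theorem volume_closedBall_seminorm (p : Seminorm ℝ E) (x : E) {r : ℝ} (hr : 0 < r) :
    volume (p.closedBall x r) =
      ENNReal.ofReal (r ^ Module.finrank ℝ E) * volume (p.closedBall 0 1) := by
  have hsmul : x +ᵥ r • p.closedBall 0 1 = p.closedBall x r := by
    rw [Seminorm.smul_closedBall_zero (norm_pos_iff.2 hr.ne'), Seminorm.vadd_closedBall,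
      Real.norm_of_nonneg hr.le, mul_one, vadd_eq_add, add_zero]
  rw [← hsmul, measure_vadd, Measure.addHaar_smul_of_nonneg _ hr.le]

end SeminormBall

section Polar

variable {d : ℕ} {S T : Set (Euc d)}

theorem convex_polarSet (S : Set (Euc d)) : Convex ℝ (polarSet S) := by
  simp only [polarSet, ofPred_forall]
  exact convex_iInter₂ fun x _ => convex_halfSpace_le (innerSL ℝ x).isLinear 1

theorem isClosed_polarSet (S : Set (Euc d)) : IsClosed (polarSet S) := by
  simp only [polarSet, ofPred_forall]
  exact isClosed_biInter fun x _ => isClosed_le (by fun_prop) continuous_const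

theorem balanced_polarSet (hS : Balanced ℝ S) : Balanced ℝ (polarSet S) := by
  rintro a ha _ ⟨y, hy, rfl⟩ x hx
  rw [inner_smul_right, ← real_inner_smul_left]
  exact hy _ (hS a ha (smul_mem_smul_set hx))

theorem polarSet_mem_nhds_zero (hS : Bornology.IsBounded S) : polarSet S ∈ nhds 0 := by
  obtain ⟨r, hr, hSr⟩ := hS.subset_closedBall_lt 0 0
  refine Filter.mem_of_superset (closedBall_mem_nhds 0 (inv_pos.2 hr)) fun y hy x hx => ?_
  rw [mem_closedBall_zero_iff] at hy
  calc ⟪x, y⟫ ≤ ‖x‖ * ‖y‖ := real_inner_le_norm x y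
    _ ≤ r * r⁻¹ := by
        gcongr
        exact mem_closedBall_zero_iff.1 (hSr hx)
    _ = 1 := mul_inv_cancel₀ hr.ne'

theorem smul_polarSet_subset {a : ℝ} (h : a • S ⊆ T) : a • polarSet T ⊆ polarSet S := by
  rintro _ ⟨y, hy, rfl⟩ x hx
  rw [inner_smul_right, ← real_inner_smul_left]
  exact hy _ (h (smul_mem_smul_set hx))

variable {p : Seminorm ℝ (Euc d)}

theorem exists_seminorm_closedBall_eq_polarSet (hp : ∀ v, p v = 0 → v = 0) :
    ∃ q : Seminorm ℝ (Euc d), q.closedBall 0 1 = polarSet (p.closedBall 0 1) := by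
  have hnhds := polarSet_mem_nhds_zero (isCompact_closedBall_seminorm hp 0 1).isBounded
  refine ⟨gaugeSeminorm (balanced_polarSet (p.balanced_closedBall_zero 1)) (convex_polarSet _)
    (absorbent_nhds_zero hnhds), ?_⟩
  ext y
  rw [Seminorm.mem_closedBall_zero]
  exact (gauge_le_one_iff_mem_closure (convex_polarSet _) hnhds).trans
    (by rw [(isClosed_polarSet _).closure_eq])

variable {q : Seminorm ℝ (Euc d)} (hpq : q.closedBall 0 1 = polarSet (p.closedBall 0 1))
include hpq

theorem leDual_of_closedBall_eq_polarSet : LeDual q p := by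
  intro y s hs hy
  refine le_of_forall_gt_imp_ge_of_dense fun t ht => ?_
  have ht₀ : 0 < t := hs.trans_lt ht
  have hmem : t⁻¹ • y ∈ q.closedBall 0 1 := by
    rw [hpq]
    intro x hx
    rw [inner_smul_right, real_inner_comm, inv_mul_le_one₀ ht₀]
    calc ⟪y, x⟫ ≤ s * p x := hy x
      _ ≤ t * 1 := by
          gcongr
          exact p.mem_closedBall_zero.1 hx
      _ = t := mul_one t
  rwa [q.mem_closedBall_zero, map_smul_eq_mul, norm_inv, Real.norm_of_nonneg ht₀.le,
    inv_mul_le_one₀ ht₀] at hmem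

theorem eq_zero_of_closedBall_eq_polarSet {v : Euc d} (hv : q v = 0) : v = 0 := by
  by_contra hne
  set t := (p v + 1)⁻¹
  have ht : 0 < t := by positivity
  have hmem : t • v ∈ p.closedBall 0 1 := by
    rw [p.mem_closedBall_zero, map_smul_eq_mul, Real.norm_of_nonneg ht.le,
      inv_mul_le_one₀ (by positivity)]
    linarith
  have hpolar : (2 / (t * ‖v‖ ^ 2)) • v ∈ polarSet (p.closedBall 0 1) := by
    rw [← hpq, q.mem_closedBall_zero, map_smul_eq_mul, hv, mul_zero]
    exact zero_le_one
  have hinner := hpolar _ hmem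
  rw [inner_smul_right, real_inner_smul_left, real_inner_self_eq_norm_sq,
    div_mul_cancel₀ _ (mul_pos ht (sq_pos_of_pos (norm_pos_iff.2 hne))).ne'] at hinner
  linarith

theorem volume_ball_mul_volume_ball_le_of_closedBall_eq_polarSet :
    volume (p.ball 0 1) * volume (q.ball 0 1) ≤ volume (ball (0 : Euc d) 1) ^ 2 := by
  have hvol := PiLp.volume_preserving_toLp (Fin d)
  have hcont : Continuous (WithLp.toLp 2 : (Fin d → ℝ) → Euc d) := PiLp.continuous_toLp 2 _
  have hpopen := isOpen_ball_seminorm p 0 1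
  have hqopen := isOpen_ball_seminorm q 0 1
  have hpair : PolarPair ((WithLp.toLp 2 : (Fin d → ℝ) → Euc d) ⁻¹' p.ball 0 1)
      (WithLp.toLp 2 ⁻¹' q.ball 0 1) :=
    { isOpen_left := hpopen.preimage hcont
      isOpen_right := hqopen.preimage hcont
      neg_mem_left := fun x hx => by simpa [Seminorm.mem_ball_zero] using hx
      neg_mem_right := fun x hx => by simpa [Seminorm.mem_ball_zero] using hx
      dotProduct_le_one := fun x hx y hy => by
        have hpolar : WithLp.toLp 2 y ∈ polarSet (p.closedBall 0 1) :=
          hpq ▸ q.ball_subset_closedBall 0 1 hy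
        simpa [dotProduct_comm, EuclideanSpace.inner_eq_star_dotProduct]
          using hpolar _ (p.ball_subset_closedBall 0 1 hx) }
  have hball : {z : Fin d → ℝ | ∑ i, z i ^ 2 ≤ 1} =
      WithLp.toLp 2 ⁻¹' closedBall (0 : Euc d) 1 := by
    ext z
    simp [EuclideanSpace.norm_eq]
  have hsantalo := hpair.volume_mul_volume_le
  rwa [hball, hvol.measure_preimage hpopen.measurableSet.nullMeasurableSet,
    hvol.measure_preimage hqopen.measurableSet.nullMeasurableSet,
    hvol.measure_preimage measurableSet_closedBall.nullMeasurableSet,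
    Measure.addHaar_unitClosedBall_eq_addHaar_unitBall] at hsantalo

omit hpq

theorem volume_closedBall_mul_volume_polarSet_le (hp : ∀ v, p v = 0 → v = 0) :
    volume (p.closedBall 0 1) * volume (polarSet (p.closedBall 0 1)) ≤
      volume (ball (0 : Euc d) 1) ^ 2 := by
  obtain ⟨q, hpq⟩ := exists_seminorm_closedBall_eq_polarSet hp
  rw [← hpq, volume_closedBall_seminorm_eq_volume_ball hp,
    volume_closedBall_seminorm_eq_volume_ball fun v => eq_zero_of_closedBall_eq_polarSet hpq]
  exact volume_ball_mul_volume_ball_le_of_closedBall_eq_polarSet hpq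

theorem volume_ball_sq_le_volume_closedBall_mul_volume_polarSet (hp : ∀ v, p v = 0 → v = 0) :
    volume (ball (0 : Euc d) 1) ^ 2 ≤
      2 ^ d * (volume (p.closedBall 0 1) * volume (polarSet (p.closedBall 0 1))) := by
  obtain ⟨q, hpq⟩ := exists_seminorm_closedBall_eq_polarSet hp
  have hq (v : Euc d) (hv : q v = 0) : v = 0 := eq_zero_of_closedBall_eq_polarSet hpq hv
  rw [← hpq, volume_closedBall_seminorm_eq_volume_ball hp,
    volume_closedBall_seminorm_eq_volume_ball hq]
  simpa using bourgain_milman hp hq (leDual_of_closedBall_eq_polarSet hpq)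

theorem volume_polarSet_lt_top (hp : ∀ v, p v = 0 → v = 0) :
    volume (polarSet (p.closedBall 0 1)) < ∞ := by
  obtain ⟨q, hpq⟩ := exists_seminorm_closedBall_eq_polarSet hp
  rw [← hpq]
  exact (isCompact_closedBall_seminorm (fun v => eq_zero_of_closedBall_eq_polarSet hpq)
    0 1).measure_lt_top

end Polar

/-! ### Gauges and Finsler balls of a convex set -/

section Gauge

theorem image_sub_const_eq_preimage_add_const {G : Type*} [AddGroup G] (s : Set G) (a : G) :
    (fun g => g - a) '' s = (· + a) ⁻¹' s :=
  (Equiv.subRight a).image_eq_preimage_symm s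

variable {E : Type*} [NormedAddCommGroup E] {K : Set E} {x y : E}

theorem image_sub_const_mem_nhds_zero (hx : x ∈ interior K) :
    (fun k => k - x) '' K ∈ nhds (0 : E) := by
  rw [image_sub_const_eq_preimage_add_const]
  exact (continuous_add_const x).continuousAt (by simpa using mem_interior_iff_mem_nhds.1 hx)

variable [NormedSpace ℝ E]

/-- The Minkowski gauge of `K` recentered at `x`, i.e. `‖v‖_{K - x}` in the paper's notation. -/
def gaugeAt (K : Set E) (x v : E) : ℝ := gauge ((fun k => k - x) '' K) v

theorem gaugeAt_nonneg (K : Set E) (x v : E) : 0 ≤ gaugeAt K x v := gauge_nonneg v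

@[simp]
theorem gaugeAt_zero (K : Set E) (x : E) : gaugeAt K x 0 = 0 := gauge_zero

theorem gaugeAt_smul_of_nonneg (K : Set E) (x : E) {a : ℝ} (ha : 0 ≤ a) (v : E) :
    gaugeAt K x (a • v) = a * gaugeAt K x v :=
  gauge_smul_of_nonneg ha v

theorem convex_image_sub_const (hK : Convex ℝ K) (x : E) : Convex ℝ ((fun k => k - x) '' K) := by
  rw [image_sub_const_eq_preimage_add_const]
  exact hK.translate_preimage_left x

theorem gaugeAt_lt_one_iff (hK : Convex ℝ K) (hx : x ∈ interior K) {v : E} :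
    gaugeAt K x v < 1 ↔ v + x ∈ interior K := by
  rw [gaugeAt, gauge_lt_one_iff_mem_interior (convex_image_sub_const hK x)
    (image_sub_const_mem_nhds_zero hx), image_sub_const_eq_preimage_add_const]
  exact Set.ext_iff.1 ((Homeomorph.addRight x).preimage_interior K).symm v

theorem gaugeAt_sub_lt_one (hK : Convex ℝ K) (hx : x ∈ interior K) (hy : y ∈ interior K) :
    gaugeAt K x (y - x) < 1 := by
  rwa [gaugeAt_lt_one_iff hK hx, sub_add_cancel]

theorem gaugeAt_add_le (hK : Convex ℝ K) (hx : x ∈ interior K) (u v : E) :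
    gaugeAt K x (u + v) ≤ gaugeAt K x u + gaugeAt K x v :=
  gauge_add_le (convex_image_sub_const hK x)
    (absorbent_nhds_zero (image_sub_const_mem_nhds_zero hx)) u v

theorem continuous_gaugeAt (hK : Convex ℝ K) (hx : x ∈ interior K) : Continuous (gaugeAt K x) :=
  continuous_gauge (convex_image_sub_const hK x) (image_sub_const_mem_nhds_zero hx)

theorem gaugeAt_eq_zero (hK : Bornology.IsBounded K) (hx : x ∈ interior K) {v : E} :
    gaugeAt K x v = 0 ↔ v = 0 := by
  refine gauge_eq_zero (absorbent_nhds_zero (image_sub_const_mem_nhds_zero hx)) ?_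
  rw [NormedSpace.isVonNBounded_iff, image_sub_const_eq_preimage_add_const]
  exact (IsometryEquiv.addRight x).isometry.antilipschitz.isBounded_preimage hK

theorem one_sub_mul_gaugeAt_le (hK : Convex ℝ K) (hx : x ∈ interior K) (hy : y ∈ interior K)
    (v : E) : (1 - gaugeAt K x (y - x)) * gaugeAt K y v ≤ gaugeAt K x v := by
  set α := gaugeAt K x (y - x)
  have hα : 0 < 1 - α := sub_pos.2 (gaugeAt_sub_lt_one hK hx hy)
  refine le_of_forall_gt_imp_ge_of_dense fun t ht => ?_
  have ht₀ : 0 < t := (gaugeAt_nonneg K x v).trans_lt ht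
  have hx_lt : gaugeAt K x (((1 - α) * t⁻¹) • v + (y - x)) < 1 := by
    calc gaugeAt K x (((1 - α) * t⁻¹) • v + (y - x))
        ≤ (1 - α) * (t⁻¹ * gaugeAt K x v) + α := by
          rw [← mul_assoc, ← gaugeAt_smul_of_nonneg K x (by positivity)]
          exact gaugeAt_add_le hK hx _ _
      _ < (1 - α) * 1 + α := by
          gcongr
          rwa [inv_mul_lt_one₀ ht₀]
      _ = 1 := by ring
  have hy_lt : gaugeAt K y (((1 - α) * t⁻¹) • v) < 1 := by
    rwa [gaugeAt_lt_one_iff hK hx, add_assoc, sub_add_cancel, ← gaugeAt_lt_one_iff hK hy] at hx_lt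
  rw [gaugeAt_smul_of_nonneg K y (by positivity), mul_right_comm, ← div_eq_mul_inv,
    div_lt_one ht₀] at hy_lt
  exact hy_lt.le

/-- The Hilbert Finsler norm at `x`, whose unit ball is `finslerBall K x`. -/
def finslerSeminorm (hK : Convex ℝ K) (hx : x ∈ interior K) : Seminorm ℝ E :=
  Seminorm.of (fun v => (gaugeAt K x v + gaugeAt K x (-v)) / 2)
    (fun u v => by
      rw [neg_add]
      linarith [gaugeAt_add_le hK hx u v, gaugeAt_add_le hK hx (-u) (-v)])
    (fun a v => by
      rcases le_total 0 a with ha | ha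
      · rw [← smul_neg, gaugeAt_smul_of_nonneg K x ha, gaugeAt_smul_of_nonneg K x ha,
          Real.norm_of_nonneg ha]
        ring
      · have ha' : 0 ≤ -a := neg_nonneg.2 ha
        rw [← neg_smul, ← neg_smul_neg a v, gaugeAt_smul_of_nonneg K x ha',
          gaugeAt_smul_of_nonneg K x ha', Real.norm_of_nonpos ha]
        ring)

theorem finslerSeminorm_apply (hK : Convex ℝ K) (hx : x ∈ interior K) (v : E) :
    finslerSeminorm hK hx v = (gaugeAt K x v + gaugeAt K x (-v)) / 2 := rfl

theorem eq_zero_of_finslerSeminorm_eq_zero (hK : Convex ℝ K) (hbdd : Bornology.IsBounded K)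
    (hx : x ∈ interior K) (v : E) (hv : finslerSeminorm hK hx v = 0) : v = 0 := by
  rw [finslerSeminorm_apply] at hv
  rw [← gaugeAt_eq_zero hbdd hx]
  linarith [gaugeAt_nonneg K x v, gaugeAt_nonneg K x (-v)]

end Gauge

/-! ### The Holmes–Thompson density -/

section Density

variable {d : ℕ} {K : Set (Euc d)} {x y : Euc d}

theorem finslerBall_eq_closedBall (hK : Convex ℝ K) (hx : x ∈ interior K) :
    finslerBall K x = (finslerSeminorm hK hx).closedBall 0 1 := by
  ext v
  rw [Seminorm.mem_closedBall_zero, finslerSeminorm_apply, div_le_one two_pos]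
  rfl

/-- The density of the Hilbert Holmes–Thompson volume with respect to `(ωd d)⁻¹ • volume`. -/
def htDensity (K : Set (Euc d)) (y : Euc d) : ℝ := volume.real (polarSet (finslerBall K y))

theorem htDensity_nonneg (K : Set (Euc d)) (y : Euc d) : 0 ≤ htDensity K y := measureReal_nonneg

variable (hK : IsConvexBody K)
include hK

theorem volume_finslerBall_mul_htDensity_le (hx : x ∈ interior K) :
    volume.real (finslerBall K x) * htDensity K x ≤ ωd d ^ 2 := by
  have h := volume_closedBall_mul_volume_polarSet_le
    (eq_zero_of_finslerSeminorm_eq_zero hK.2.1 hK.1.isBounded hx)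
  rw [← finslerBall_eq_closedBall] at h
  have hreal := ENNReal.toReal_mono (by finiteness : volume (ball (0 : Euc d) 1) ^ 2 ≠ ∞) h
  rwa [ENNReal.toReal_mul, ENNReal.toReal_pow] at hreal

theorem ωd_sq_le (hx : x ∈ interior K) :
    ωd d ^ 2 ≤ 2 ^ d * (volume.real (finslerBall K x) * htDensity K x) := by
  have hp := eq_zero_of_finslerSeminorm_eq_zero hK.2.1 hK.1.isBounded hx
  have hball := (isCompact_closedBall_seminorm hp 0 1).measure_lt_top (μ := volume)
  have hfin := ENNReal.mul_ne_top hball.ne (volume_polarSet_lt_top hp).ne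
  have hreal := ENNReal.toReal_mono (ENNReal.mul_ne_top (by finiteness) hfin)
    (volume_ball_sq_le_volume_closedBall_mul_volume_polarSet hp)
  simpa [finslerBall_eq_closedBall hK.2.1 hx, htDensity, ωd, Measure.real] using hreal

theorem one_sub_gaugeAt_pow_mul_htDensity_le (hx : x ∈ interior K) (hy : y ∈ interior K) :
    (1 - gaugeAt K x (y - x)) ^ d * htDensity K y ≤ htDensity K x := by
  set a := 1 - gaugeAt K x (y - x)
  have ha : 0 ≤ a := (sub_pos.2 (gaugeAt_sub_lt_one hK.2.1 hx hy)).le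
  have hball : a • finslerBall K x ⊆ finslerBall K y := by
    rintro _ ⟨v, hv, rfl⟩
    change gaugeAt K y (a • v) + gaugeAt K y (-(a • v)) ≤ 2
    rw [← smul_neg, gaugeAt_smul_of_nonneg K y ha, gaugeAt_smul_of_nonneg K y ha]
    exact (add_le_add (one_sub_mul_gaugeAt_le hK.2.1 hx hy v)
      (one_sub_mul_gaugeAt_le hK.2.1 hx hy (-v))).trans hv
  have hfin : volume (polarSet (finslerBall K x)) ≠ ∞ := by
    rw [finslerBall_eq_closedBall hK.2.1 hx]
    exact (volume_polarSet_lt_top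
      (eq_zero_of_finslerSeminorm_eq_zero hK.2.1 hK.1.isBounded hx)).ne
  have hreal := measureReal_mono (smul_polarSet_subset hball) hfin
  rwa [measureReal_def, Measure.addHaar_smul_of_nonneg _ ha, ENNReal.toReal_mul,
    ENNReal.toReal_ofReal (by positivity), finrank_euclideanSpace_fin] at hreal

theorem continuousOn_htDensity : ContinuousOn (htDensity K) (interior K) := by
  intro x hx
  refine ContinuousAt.continuousWithinAt ?_
  have hcont := continuous_gaugeAt hK.2.1 hx
  have hα : Filter.Tendsto (fun y => gaugeAt K x (y - x)) (nhds x) (nhds 0) := by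
    simpa [Function.comp_def] using (hcont.comp (continuous_sub_right x)).tendsto x
  have hγ : Filter.Tendsto (fun y => gaugeAt K x (x - y)) (nhds x) (nhds 0) := by
    simpa [Function.comp_def] using (hcont.comp (continuous_sub_left x)).tendsto x
  have hratio : Filter.Tendsto (fun y => gaugeAt K x (x - y) / (1 - gaugeAt K x (y - x)))
      (nhds x) (nhds 0) := by
    simpa [Pi.div_def] using hγ.div (hα.const_sub 1) (by norm_num)
  have hlower := ((hratio.const_sub 1).pow d).mul_const (htDensity K x)
  have hupper := (tendsto_const_nhds (x := htDensity K x)).div ((hα.const_sub 1).pow d)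
    (by norm_num)
  simp only [sub_zero, one_pow, one_mul, div_one, Pi.div_def] at hlower hupper
  have hmem := isOpen_interior.mem_nhds hx
  refine tendsto_of_tendsto_of_tendsto_of_le_of_le' hlower hupper ?_ ?_
  · filter_upwards [hmem, hratio.eventually_le_const one_pos] with y hy hle
    have hα₁ : 0 < 1 - gaugeAt K x (y - x) := sub_pos.2 (gaugeAt_sub_lt_one hK.2.1 hx hy)
    have hβ : gaugeAt K y (x - y) ≤ gaugeAt K x (x - y) / (1 - gaugeAt K x (y - x)) := by
      rw [le_div_iff₀' hα₁]
      exact one_sub_mul_gaugeAt_le hK.2.1 hx hy (x - y)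
    refine le_trans ?_ (one_sub_gaugeAt_pow_mul_htDensity_le hK hy hx)
    exact mul_le_mul_of_nonneg_right
      (pow_le_pow_left₀ (sub_nonneg.2 hle) (sub_le_sub_left hβ 1) d) (htDensity_nonneg K x)
  · filter_upwards [hmem] with y hy
    rw [le_div_iff₀' (pow_pos (sub_pos.2 (gaugeAt_sub_lt_one hK.2.1 hx hy)) d)]
    exact one_sub_gaugeAt_pow_mul_htDensity_le hK hx hy

end Density

/-! ### Hilbert balls -/

section HilbertBall

variable {d : ℕ} {K : Set (Euc d)} {x y : Euc d} {r : ℝ}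

theorem mem_hilbertBall_iff (hK : Convex ℝ K) (hx : x ∈ interior K) :
    y ∈ hilbertBall K x r ↔ y ∈ interior K ∧
      Real.exp (-(2 * r)) ≤ (1 - gaugeAt K x (y - x)) * (1 - gaugeAt K y (x - y)) := by
  refine and_congr_right fun hy => ?_
  rw [← Real.le_log_iff_exp_le (mul_pos (sub_pos.2 (gaugeAt_sub_lt_one hK hx hy))
    (sub_pos.2 (gaugeAt_sub_lt_one hK hy hx)))]
  change -(1 / 2) * Real.log ((1 - gaugeAt K x (y - x)) * (1 - gaugeAt K y (x - y))) ≤ r ↔ _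
  constructor <;> intro h <;> linarith

theorem mem_hilbertBall_comm (hK : Convex ℝ K) (hx : x ∈ interior K) (hy : y ∈ interior K) :
    y ∈ hilbertBall K x r ↔ x ∈ hilbertBall K y r := by
  simp only [mem_hilbertBall_iff hK hx, mem_hilbertBall_iff hK hy, hx, hy, true_and, mul_comm]

theorem exp_neg_le_one_sub_gaugeAt (hK : Convex ℝ K) (hx : x ∈ interior K)
    (hy : y ∈ hilbertBall K x r) : Real.exp (-(2 * r)) ≤ 1 - gaugeAt K x (y - x) :=
  ((mem_hilbertBall_iff hK hx).1 hy).2.trans <|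
    mul_le_of_le_one_right (sub_pos.2 (gaugeAt_sub_lt_one hK hx hy.1)).le
      (sub_le_self 1 (gaugeAt_nonneg K y _))

theorem hilbertBall_subset_closedBall (hK : Convex ℝ K) (hx : x ∈ interior K) :
    hilbertBall K x r ⊆ (finslerSeminorm hK hx).closedBall x (2 * r * Real.exp (2 * r)) := by
  intro y hy
  set s := Real.exp (-(2 * r))
  have hα : s ≤ 1 - gaugeAt K x (y - x) := exp_neg_le_one_sub_gaugeAt hK hx hy
  have hβ : s ≤ 1 - gaugeAt K y (x - y) :=
    exp_neg_le_one_sub_gaugeAt hK hy.1 ((mem_hilbertBall_comm hK hx hy.1).1 hy)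
  have hs₁ : s ≤ 1 := hα.trans (sub_le_self 1 (gaugeAt_nonneg K x _))
  have hs : 1 - s ≤ 2 * r := by linarith [Real.one_sub_le_exp_neg (2 * r)]
  have hγ : s * gaugeAt K x (x - y) ≤ 2 * r := by
    calc s * gaugeAt K x (x - y) ≤ (1 - gaugeAt K y (x - y)) * gaugeAt K x (x - y) :=
          mul_le_mul_of_nonneg_right hβ (gaugeAt_nonneg K x _)
      _ ≤ gaugeAt K y (x - y) := one_sub_mul_gaugeAt_le hK hy.1 hx (x - y)
      _ ≤ 2 * r := by linarith
  have hα' : s * gaugeAt K x (y - x) ≤ 2 * r := by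
    linarith [mul_le_of_le_one_left (gaugeAt_nonneg K x (y - x)) hs₁]
  rw [Seminorm.mem_closedBall, finslerSeminorm_apply, neg_sub, ← div_le_iff₀ (Real.exp_pos _),
    div_eq_mul_inv, ← Real.exp_neg]
  linarith

theorem closedBall_subset_hilbertBall (hK : Convex ℝ K) (hx : x ∈ interior K) :
    (finslerSeminorm hK hx).closedBall x (r * Real.exp (-(2 * r))) ⊆ hilbertBall K x r := by
  intro y hy
  rw [Seminorm.mem_closedBall, finslerSeminorm_apply, neg_sub] at hy
  set s := Real.exp (-(2 * r)) with hs
  have hs₀ : 0 < s := Real.exp_pos _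
  have hrs : 2 * r * s ≤ 1 - s := by
    have hle : s * (2 * r + 1) ≤ 1 := by
      rw [hs, Real.exp_neg, inv_mul_le_one₀ (Real.exp_pos _)]
      exact Real.add_one_le_exp _
    linarith
  have hγ₀ := gaugeAt_nonneg K x (x - y)
  have hyK : y ∈ interior K := by
    rw [← sub_add_cancel y x, ← gaugeAt_lt_one_iff hK hx]
    linarith
  have hγ := one_sub_mul_gaugeAt_le hK hx hyK (x - y)
  exact (mem_hilbertBall_iff hK hx).2 ⟨hyK, by linarith⟩

variable (hK : IsConvexBody K) (hx : x ∈ interior K)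
include hK hx

theorem exp_neg_pow_mul_htDensity_le (hy : y ∈ hilbertBall K x r) :
    Real.exp (-(2 * r)) ^ d * htDensity K y ≤ htDensity K x := by
  refine le_trans ?_ (one_sub_gaugeAt_pow_mul_htDensity_le hK hx hy.1)
  gcongr
  exacts [htDensity_nonneg K y, exp_neg_le_one_sub_gaugeAt hK.2.1 hx hy]

theorem integrableOn_htDensity_hilbertBall :
    IntegrableOn (htDensity K) (hilbertBall K x r) := by
  set S := {y | gaugeAt K x (y - x) ≤ 1 - Real.exp (-(2 * r))}
  have hS : S ⊆ interior K := fun y hy => by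
    rw [← sub_add_cancel y x, ← gaugeAt_lt_one_iff hK.2.1 hx]
    exact lt_of_le_of_lt hy (sub_lt_self 1 (Real.exp_pos _))
  have hclosed : IsClosed S :=
    isClosed_le ((continuous_gaugeAt hK.2.1 hx).comp (continuous_sub_right x)) continuous_const
  have hcompact : IsCompact S := hK.1.of_isClosed_subset hclosed (hS.trans interior_subset)
  refine (((continuousOn_htDensity hK).mono hS).integrableOn_compact hcompact).mono_set ?_
  exact fun y hy => le_sub_comm.1 (exp_neg_le_one_sub_gaugeAt hK.2.1 hx hy)

theorem volume_closedBall_finslerSeminorm {t : ℝ} (ht : 0 < t) :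
    volume.real ((finslerSeminorm hK.2.1 hx).closedBall x t) =
      t ^ d * volume.real (finslerBall K x) := by
  rw [measureReal_def, volume_closedBall_seminorm _ _ ht, ENNReal.toReal_mul,
    ENNReal.toReal_ofReal (by positivity), finrank_euclideanSpace_fin,
    finslerBall_eq_closedBall hK.2.1 hx, measureReal_def]

theorem volume_closedBall_finslerSeminorm_lt_top (t : ℝ) :
    volume ((finslerSeminorm hK.2.1 hx).closedBall x t) < ∞ :=
  (isCompact_closedBall_seminorm
    (eq_zero_of_finslerSeminorm_eq_zero hK.2.1 hK.1.isBounded hx) x t).measure_lt_top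

theorem setIntegral_htDensity_hilbertBall_le (hr : 0 < r) :
    ∫ y in hilbertBall K x r, htDensity K y ≤
      (2 * Real.exp (4 * r)) ^ d * r ^ d * ωd d ^ 2 := by
  have hsubset : hilbertBall K x r ⊆ _ := hilbertBall_subset_closedBall hK.2.1 hx
  have hfin := volume_closedBall_finslerSeminorm_lt_top hK hx (2 * r * Real.exp (2 * r))
  have hdensity (y) (hy : y ∈ hilbertBall K x r) :
      ‖htDensity K y‖ ≤ Real.exp (2 * r) ^ d * htDensity K x := by
    have h := exp_neg_pow_mul_htDensity_le hK hx hy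
    rwa [Real.exp_neg, inv_pow, inv_mul_le_iff₀ (by positivity),
      ← Real.norm_of_nonneg (htDensity_nonneg K y)] at h
  have hx₀ := htDensity_nonneg K x
  calc ∫ y in hilbertBall K x r, htDensity K y
      ≤ Real.exp (2 * r) ^ d * htDensity K x * volume.real (hilbertBall K x r) :=
        (le_abs_self _).trans (norm_setIntegral_le_of_norm_le_const
          ((measure_mono hsubset).trans_lt hfin) hdensity)
    _ ≤ Real.exp (2 * r) ^ d * htDensity K x *
          ((2 * r * Real.exp (2 * r)) ^ d * volume.real (finslerBall K x)) := by
        rw [← volume_closedBall_finslerSeminorm hK hx (by positivity)]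
        gcongr
        exact hfin.ne
    _ = (2 * Real.exp (4 * r)) ^ d * r ^ d *
          (volume.real (finslerBall K x) * htDensity K x) := by
        rw [show 4 * r = 2 * r + 2 * r by ring, Real.exp_add]
        ring
    _ ≤ (2 * Real.exp (4 * r)) ^ d * r ^ d * ωd d ^ 2 := by
        gcongr
        exact volume_finslerBall_mul_htDensity_le hK hx

theorem le_setIntegral_htDensity_hilbertBall (hr : 0 < r) :
    ((2 * Real.exp (4 * r)) ^ d)⁻¹ * r ^ d * ωd d ^ 2 ≤
      ∫ y in hilbertBall K x r, htDensity K y := by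
  set s := Real.exp (-(2 * r)) with hs
  set B := (finslerSeminorm hK.2.1 hx).closedBall x (r * s)
  have hB : B ⊆ hilbertBall K x r := closedBall_subset_hilbertBall hK.2.1 hx
  have hexp : Real.exp (4 * r) = s⁻¹ * s⁻¹ := by
    rw [hs, ← Real.exp_neg, ← Real.exp_add]
    ring_nf
  have hs₀ : 0 < s := Real.exp_pos _
  have hint : IntegrableOn (htDensity K) (hilbertBall K x r) :=
    integrableOn_htDensity_hilbertBall hK hx
  calc ((2 * Real.exp (4 * r)) ^ d)⁻¹ * r ^ d * ωd d ^ 2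
      ≤ ((2 * Real.exp (4 * r)) ^ d)⁻¹ * r ^ d *
          (2 ^ d * (volume.real (finslerBall K x) * htDensity K x)) := by
        gcongr
        exact ωd_sq_le hK hx
    _ = s ^ d * htDensity K x * ((r * s) ^ d * volume.real (finslerBall K x)) := by
        rw [hexp]
        simp only [mul_pow, inv_pow]
        field_simp
    _ = s ^ d * htDensity K x * volume.real B := by
        rw [volume_closedBall_finslerSeminorm hK hx (by positivity)]
    _ ≤ ∫ y in B, htDensity K y :=
        setIntegral_ge_of_const_le_real (isClosed_closedBall_seminorm _ x _).measurableSet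
          (volume_closedBall_finslerSeminorm_lt_top hK hx _).ne
          (fun y hy => exp_neg_pow_mul_htDensity_le hK (hB hy).1
            ((mem_hilbertBall_comm hK.2.1 hx (hB hy).1).1 (hB hy)))
          (hint.mono_set hB)
    _ ≤ ∫ y in hilbertBall K x r, htDensity K y :=
        setIntegral_mono_set hint (.of_forall (htDensity_nonneg K)) hB.eventuallyLE

end HilbertBall

theorem ωd_pos (d : ℕ) : 0 < ωd d :=
  ENNReal.toReal_pos (measure_ball_pos volume 0 one_pos).ne' measure_ball_lt_top.ne

theorem volH_eq_inv_mul_setIntegral {d : ℕ} (K U : Set (Euc d)) :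
    volH K U = (ωd d)⁻¹ * ∫ y in U, htDensity K y := by
  rw [← one_div]
  rfl

theorem hilbert_ball_volume_growth_general (ρ : ℝ) :
    ∃ c : ℝ, 1 ≤ c ∧ ∀ (d : ℕ) (K : Set (Euc d)), IsConvexBody K →
      ∀ x ∈ interior K, ∀ r : ℝ, 0 < r → r ≤ ρ →
        (c ^ d)⁻¹ * (ωd d * r ^ d) ≤ volH K (hilbertBall K x r) ∧
        volH K (hilbertBall K x r) ≤ c ^ d * (ωd d * r ^ d) := by
  have hc : 1 ≤ 2 * Real.exp (4 * |ρ|) := by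
    linarith [Real.one_le_exp (x := 4 * |ρ|) (by positivity)]
  refine ⟨2 * Real.exp (4 * |ρ|), hc, fun d K hK x hx r hr hrρ => ?_⟩
  have hω := ωd_pos d
  have hexp : Real.exp (4 * r) ≤ Real.exp (4 * |ρ|) := by
    gcongr
    exact hrρ.trans (le_abs_self ρ)
  rw [volH_eq_inv_mul_setIntegral, le_inv_mul_iff₀ hω, inv_mul_le_iff₀ hω]
  constructor
  · calc ωd d * (((2 * Real.exp (4 * |ρ|)) ^ d)⁻¹ * (ωd d * r ^ d))
        ≤ ωd d * (((2 * Real.exp (4 * r)) ^ d)⁻¹ * (ωd d * r ^ d)) := by gcongr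
      _ = ((2 * Real.exp (4 * r)) ^ d)⁻¹ * r ^ d * ωd d ^ 2 := by ring
      _ ≤ _ := le_setIntegral_htDensity_hilbertBall hK hx hr
  · calc ∫ y in hilbertBall K x r, htDensity K y
        ≤ (2 * Real.exp (4 * r)) ^ d * r ^ d * ωd d ^ 2 :=
          setIntegral_htDensity_hilbertBall_le hK hx hr
      _ ≤ (2 * Real.exp (4 * |ρ|)) ^ d * r ^ d * ωd d ^ 2 := by gcongr
      _ = ωd d * ((2 * Real.exp (4 * |ρ|)) ^ d * (ωd d * r ^ d)) := by ring

/-- Holmes–Thompson volume growth of bounded-radius Hilbert balls. -/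
theorem hilbert_ball_volume_growth :
    ∃ c : ℝ, 1 ≤ c ∧ ∀ d : ℕ, 2 ≤ d →
      ∀ K : Set (Euc d), IsConvexBody K →
        ∀ x ∈ interior K, ∀ r : ℝ, 0 < r → r ≤ 8 →
          (c ^ d)⁻¹ * (ωd d * r ^ d) ≤ volH K (hilbertBall K x r) ∧
          volH K (hilbertBall K x r) ≤ c ^ d * (ωd d * r ^ d) :=
  let ⟨c, hc, hbounds⟩ := hilbert_ball_volume_growth_general 8
  ⟨c, hc, fun d _ => hbounds d⟩
end
end

section
/- Let K be a convex body in ℝ^d, let G ⊆ int(K) be a convex body, let 0 < α ≤ 1, and let G₊ := {x ∈ int(K) : inf_{g∈G} d_H^K(x,g) ≤ α} be the Hilbert α-expansion of G in K. Then for every x in the frontier ∂G there exists y in the frontier ∂G₊ such that d_H^K(x,y) = α. In particular, every point of ∂G is within Hilbert distance α of ∂G₊. -/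
open Set MeasureTheory Metric
open scoped Pointwise RealInnerProductSpace ENNReal

noncomputable section

/-!
At a point `x` of `G` on its boundary, let `f` be a linear functional whose maximum on `G` is
attained at `x`. The concave envelope over `K` of the positive part of `f - f x` has a supporting
affine function `u` at `x`, and `x` lies on a segment with endpoints `a` and `b` in `K` such that
`u` equals `0` at `a` and `f - f x` at `b`. Thus `u` and `v = u - (f - f x)` are nonnegative on
`K`, with `u a = v b = 0`, `u x = v x` and `u ≤ v` on `G`.

The Hilbert distance between `p` and `q` dominates `log (u p * v q / (u q * v p)) / 2`, with
equality when `q = x` and `p` lies on the segment from `x` to `b`.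
Hence `p` has distance at least `log (u p / v p) / 2` to `G`, and on the segment from `x` to `b`
this distance is attained at `x`. The point `y` of the segment with `u y = exp (2 * α) * v y` is
therefore in the expansion at distance `α` from `x`. The affine function `exp (2 * α) * v - u` is
nonnegative on the expansion, vanishes at `y` and is positive at `a`, so `y` is not interior.
-/

open scoped Topology

lemma image_sub_right_mem_nhds {E : Type*} [AddGroup E] [TopologicalSpace E]
    [IsTopologicalAddGroup E] {K : Set E} {y : E} (hy : y ∈ interior K) (x : E) :
    (fun k => k - x) '' K ∈ 𝓝 (y - x) :=
  (Homeomorph.subRight x).isOpenMap.image_mem_nhds (mem_interior_iff_mem_nhds.1 hy)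

section TopologicalVectorSpace

variable {E : Type*} [AddCommGroup E] [Module ℝ E] [TopologicalSpace E] [IsTopologicalAddGroup E]
  [ContinuousSMul ℝ E] {K : Set E} {x y a b : E}

lemma eventually_add_smul_mem (hx : x ∈ interior K) (w : E) :
    ∀ᶠ ε : ℝ in 𝓝[>] 0, x + ε • w ∈ K := by
  have hcont : Continuous fun ε : ℝ => x + ε • w := by fun_prop
  have hlim : Filter.Tendsto (fun ε : ℝ => x + ε • w) (𝓝 0) (𝓝 x) := by
    simpa using hcont.tendsto 0
  exact nhdsWithin_le_nhds (hlim (mem_interior_iff_mem_nhds.1 hx))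

lemma affineMap_pos_of_mem_interior {u : E →ᵃ[ℝ] ℝ} (hu : ∀ p ∈ K, 0 ≤ u p) (hx : 0 < u x)
    (hy : y ∈ interior K) : 0 < u y := by
  obtain ⟨ε, hmem, hε⟩ := ((eventually_add_smul_mem hy (y - x)).and self_mem_nhdsWithin).exists
  replace hε : 0 < ε := hε
  have hline : AffineMap.lineMap y x (-ε) = y + ε • (y - x) := by
    rw [AffineMap.lineMap_apply_module]
    module
  have hnonneg := hu _ hmem
  rw [← hline, AffineMap.apply_lineMap, AffineMap.lineMap_apply_module, smul_eq_mul,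
    smul_eq_mul] at hnonneg
  nlinarith

lemma linearMap_eq_zero_of_mem_interior {φ : E →ₗ[ℝ] ℝ} (hφ : ∀ p ∈ K, φ p ≤ φ x)
    (hx : x ∈ interior K) : φ = 0 := by
  have hle (w : E) : φ w ≤ 0 := by
    obtain ⟨ε, hmem, hε⟩ := ((eventually_add_smul_mem hx w).and self_mem_nhdsWithin).exists
    have hmax := hφ _ hmem
    rw [map_add, map_smul, smul_eq_mul, add_le_iff_nonpos_right] at hmax
    exact nonpos_of_mul_nonpos_right hmax hε
  ext w
  exact le_antisymm (hle w) (by simpa using hle (-w))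

lemma gauge_image_sub_right_lt_one (hy : y ∈ interior K) (x : E) :
    gauge ((fun k => k - x) '' K) (y - x) < 1 :=
  interior_subset_gauge_lt_one _ (mem_interior_iff_mem_nhds.2 (image_sub_right_mem_nhds hy x))

lemma one_sub_gauge_le_div {u : E →ᵃ[ℝ] ℝ} (hu : ∀ p ∈ K, 0 ≤ u p) (hux : 0 < u x)
    (hx : x ∈ interior K) (y : E) :
    1 - gauge ((fun k => k - x) '' K) (y - x) ≤ u y / u x := by
  have habs : Absorbent ℝ ((fun k => k - x) '' K) :=
    absorbent_nhds_zero (by simpa using image_sub_right_mem_nhds hx x)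
  rw [sub_le_comm]
  refine le_of_forall_gt fun c hc => ?_
  obtain ⟨r, hr, hrc, _, ⟨k, hk, rfl⟩, hky⟩ := exists_lt_of_gauge_lt habs hc
  have hline : AffineMap.lineMap x k r = y := by
    rw [AffineMap.lineMap_apply_module']
    exact eq_sub_iff_add_eq.1 hky
  have huy : u y = (1 - r) * u x + r * u k := by
    rw [← hline, AffineMap.apply_lineMap, AffineMap.lineMap_apply_module, smul_eq_mul, smul_eq_mul]
  have hle : 1 - r ≤ u y / u x := by
    rw [le_div_iff₀ hux, huy]
    exact le_add_of_nonneg_right (mul_nonneg hr.le (hu k hk))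
  linarith

lemma one_sub_gauge_eq_div {u : E →ᵃ[ℝ] ℝ} (hu : ∀ p ∈ K, 0 ≤ u p) (hux : 0 < u x)
    (hx : x ∈ interior K) (hb : b ∈ K) (hub : u b = 0) (hxyb : Wbtw ℝ x y b) :
    1 - gauge ((fun k => k - x) '' K) (y - x) = u y / u x := by
  refine le_antisymm (one_sub_gauge_le_div hu hux hx y) ?_
  obtain ⟨t, ht, rfl⟩ := hxyb
  have hgauge : gauge ((fun k => k - x) '' K) (AffineMap.lineMap x b t - x) ≤ t :=
    gauge_le_of_mem ht.1 ⟨b - x, mem_image_of_mem _ hb, by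
      rw [AffineMap.lineMap_apply_module', add_sub_cancel_right]⟩
  have hratio : u (AffineMap.lineMap x b t) / u x = 1 - t := by
    rw [AffineMap.apply_lineMap, hub, AffineMap.lineMap_apply_module, smul_zero, add_zero,
      smul_eq_mul, mul_div_cancel_right₀ _ hux.ne']
  linarith

lemma exists_mem_interior_wbtw_eq_zero (hK : Convex ℝ K) (hx : x ∈ interior K) (hb : b ∈ K)
    {w : E →ᵃ[ℝ] ℝ} (hwx : 0 ≤ w x) (hwb : w b < 0) :
    ∃ y ∈ interior K, Wbtw ℝ x y b ∧ w y = 0 := by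
  have hden : 0 < w x - w b := by linarith
  set s := w x / (w x - w b) with hs
  have hs0 : 0 ≤ s := by positivity
  have hs1 : s < 1 := by rw [hs, div_lt_one hden]; linarith
  refine ⟨AffineMap.lineMap x b s, ?_, ⟨s, ⟨hs0, hs1.le⟩, rfl⟩, ?_⟩
  · rw [AffineMap.lineMap_apply_module]
    exact hK.combo_interior_self_mem_interior hx hb (sub_pos.2 hs1) hs0 (sub_add_cancel 1 s)
  · rw [AffineMap.apply_lineMap, AffineMap.lineMap_apply_ring', hs]
    field_simp
    ring

lemma isCompact_convexJoin {A B : Set E} (hA : IsCompact A) (hB : IsCompact B) :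
    IsCompact (convexJoin ℝ A B) := by
  have himage : convexJoin ℝ A B =
      (fun q : ℝ × E × E => (1 - q.1) • q.2.1 + q.1 • q.2.2) '' (Icc 0 1 ×ˢ A ×ˢ B) := by
    ext z
    simp only [mem_convexJoin, segment_eq_image, mem_image, mem_prod, Prod.exists]
    aesop
  rw [himage]
  exact (isCompact_Icc.prod (hA.prod hB)).image (by fun_prop)

end TopologicalVectorSpace

lemma affineMap_pos_left_of_wbtw {E : Type*} [AddCommGroup E] [Module ℝ E] {a x b : E}
    (haxb : Wbtw ℝ a x b) {u : E →ᵃ[ℝ] ℝ} (hub : u b = 0) (hux : 0 < u x) : 0 < u a := by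
  obtain ⟨t, ht, rfl⟩ := haxb
  rw [AffineMap.apply_lineMap, hub, AffineMap.lineMap_apply_module, smul_zero, add_zero,
    smul_eq_mul] at hux
  exact pos_of_mul_pos_right hux (sub_nonneg.2 ht.2)

section FiniteDimensional

variable {E : Type*} [NormedAddCommGroup E] [NormedSpace ℝ E] [FiniteDimensional ℝ E]

lemma exists_dual_le_of_notMem_interior {G : Set E} {x : E} (hG : Convex ℝ G) (hxG : x ∈ G)
    (hx : x ∉ interior G) : ∃ f : StrongDual ℝ E, f ≠ 0 ∧ ∀ g ∈ G, f g ≤ f x := by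
  by_cases hint : (interior G).Nonempty
  · exact geometric_hahn_banach_of_nonempty_interior_point hG hx hint
  have hspan : affineSpan ℝ G ≠ ⊤ := mt hG.interior_nonempty_iff_affineSpan_eq_top.2 hint
  have hdir : (affineSpan ℝ G).direction < ⊤ := by
    rwa [lt_top_iff_ne_top, ne_eq, AffineSubspace.direction_eq_top_iff_of_nonempty
      ((affineSpan_nonempty ℝ).2 ⟨x, hxG⟩)]
  obtain ⟨f, hf, hker⟩ := Submodule.exists_le_ker_of_lt_top _ hdir
  refine ⟨LinearMap.toContinuousLinearMap f, by simpa using hf, fun g hg => ?_⟩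
  have hgx : f (g - x) = 0 := hker
    (AffineSubspace.vsub_mem_direction (subset_affineSpan ℝ G hg) (subset_affineSpan ℝ G hxG))
  rw [map_sub, sub_eq_zero] at hgx
  exact hgx.le

lemma exists_affineMap_ge_of_isGreatest_fiber {C : Set (E × ℝ)} {x : E} {t M : ℝ}
    (hC : Convex ℝ C) (hx : x ∈ interior (Prod.fst '' C)) (hM : IsGreatest {s | (x, s) ∈ C} M)
    (ht : (x, t) ∈ C) (htM : t < M) :
    ∃ u : E →ᵃ[ℝ] ℝ, u x = M ∧ ∀ q ∈ C, q.2 ≤ u q.1 := by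
  have hnot : (x, M) ∉ interior C := fun hmem => by
    obtain ⟨ε, hε, hpos⟩ :=
      ((eventually_add_smul_mem hmem ((0 : E), (1 : ℝ))).and self_mem_nhdsWithin).exists
    have hle : M + ε ≤ M := hM.2 (by simpa using hε)
    exact (lt_add_of_pos_right M hpos).not_ge hle
  obtain ⟨L, hL, hLmax⟩ := exists_dual_le_of_notMem_interior hC hM.1 hnot
  let φ : E →ₗ[ℝ] ℝ := (L : E × ℝ →ₗ[ℝ] ℝ) ∘ₗ LinearMap.inl ℝ E ℝ
  let c : ℝ := L (0, 1)
  have hLapply (p : E) (s : ℝ) : L (p, s) = φ p + s * c := by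
    have hsplit : (p, s) = (p, (0 : ℝ)) + s • ((0 : E), (1 : ℝ)) := by simp
    rw [hsplit, map_add, map_smul, smul_eq_mul]
    rfl
  have hmax : ∀ q ∈ C, φ q.1 + q.2 * c ≤ φ x + M * c := fun q hq => by
    simpa only [hLapply] using hLmax q hq
  have hc0 : 0 ≤ c :=
    nonneg_of_mul_nonneg_right (by linarith [hmax _ ht] : 0 ≤ (M - t) * c) (sub_pos.2 htM)
  have hc : c ≠ 0 := fun hc => hL <| by
    -- A vertical supporting hyperplane would make `φ` maximal at an interior point.
    have hφ : φ = 0 := by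
      refine linearMap_eq_zero_of_mem_interior (K := Prod.fst '' C) ?_ hx
      rintro _ ⟨q, hq, rfl⟩
      simpa only [hc, mul_zero, add_zero] using hmax q hq
    refine ContinuousLinearMap.ext fun ⟨p, s⟩ => ?_
    rw [hLapply, hφ, hc, mul_zero, add_zero]
    rfl
  refine ⟨AffineMap.const ℝ E (M + c⁻¹ * φ x) - c⁻¹ • φ.toAffineMap, by simp, fun q hq => ?_⟩
  have hle : q.2 ≤ (φ x + M * c - φ q.1) / c :=
    (le_div_iff₀ (hc0.lt_of_ne' hc)).2 (by linarith [hmax q hq])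
  calc q.2 ≤ (φ x + M * c - φ q.1) / c := hle
    _ = M + c⁻¹ * φ x - c⁻¹ * φ q.1 := by field_simp; ring

end FiniteDimensional

section ChordBody

/-- The union of the segments joining `K × {0}` to the graph over `K` of `f - f x`. Its upper
boundary is the graph of the concave envelope over `K` of the positive part of `f - f x`. -/
def chordBody {E : Type*} [NormedAddCommGroup E] [NormedSpace ℝ E] (K : Set E)
    (f : StrongDual ℝ E) (x : E) : Set (E × ℝ) :=
  convexJoin ℝ (K ×ˢ {0}) ((fun p => (p, f (p - x))) '' K)

variable {E : Type*} [NormedAddCommGroup E] [NormedSpace ℝ E] {K : Set E} {x : E}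
  {f : StrongDual ℝ E}

lemma mem_chordBody_iff {z : E} {t : ℝ} :
    (z, t) ∈ chordBody K f x ↔ ∃ a ∈ K, ∃ b ∈ K, ∃ s ∈ Icc (0 : ℝ) 1,
      AffineMap.lineMap a b s = z ∧ s * f (b - x) = t := by
  simp [chordBody, mem_convexJoin, segment_eq_image_lineMap, AffineMap.lineMap_apply_module]

lemma isCompact_chordBody (hK : IsCompact K) : IsCompact (chordBody K f x) :=
  isCompact_convexJoin (hK.prod isCompact_singleton) (hK.image (by fun_prop))

lemma convex_chordBody (hK : Convex ℝ K) : Convex ℝ (chordBody K f x) := by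
  have hgraph : (fun p => (p, f (p - x))) =
      (AffineMap.id ℝ E).prod ((f : E →ₗ[ℝ] ℝ).toAffineMap - AffineMap.const ℝ E (f x)) := by
    ext p <;> simp
  refine (hK.prod (convex_singleton 0)).convexJoin ?_
  rw [hgraph]
  exact hK.affine_image _

lemma mk_zero_mem_chordBody {p : E} (hp : p ∈ K) : (p, (0 : ℝ)) ∈ chordBody K f x :=
  mem_chordBody_iff.2 ⟨p, hp, p, hp, 0, by simp⟩

lemma mk_apply_sub_mem_chordBody {p : E} (hp : p ∈ K) : (p, f (p - x)) ∈ chordBody K f x :=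
  mem_chordBody_iff.2 ⟨p, hp, p, hp, 1, by simp⟩

lemma exists_pos_mk_mem_chordBody (hx : x ∈ interior K) (hf : f ≠ 0) :
    ∃ t > 0, (x, t) ∈ chordBody K f x := by
  obtain ⟨w, hw⟩ : ∃ w, 0 < f w := by
    obtain ⟨w, hw⟩ := DFunLike.ne_iff.1 hf
    rcases hw.lt_or_gt with hneg | hpos
    · exact ⟨-w, by simpa using hneg⟩
    · exact ⟨w, hpos⟩
  obtain ⟨ε, ⟨hplus, hminus⟩, hε⟩ := (((eventually_add_smul_mem hx w).and
    (eventually_add_smul_mem hx (-w))).and self_mem_nhdsWithin).exists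
  refine ⟨1 / 2 * f (x + ε • w - x), ?_, mem_chordBody_iff.2
    ⟨_, hminus, _, hplus, 1 / 2, by norm_num, ?_, rfl⟩⟩
  · rw [add_sub_cancel_left, map_smul, smul_eq_mul]
    exact mul_pos one_half_pos (mul_pos hε hw)
  · rw [AffineMap.lineMap_apply_module]
    module

lemma exists_isGreatest_fiber_chordBody (hK : IsCompact K) (hx : x ∈ interior K) (hf : f ≠ 0) :
    ∃ M > 0, IsGreatest {t | (x, t) ∈ chordBody K f x} M := by
  obtain ⟨t, ht, hmem⟩ := exists_pos_mk_mem_chordBody hx hf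
  have hcompact : IsCompact {t | (x, t) ∈ chordBody K f x} :=
    ((isCompact_chordBody hK).image continuous_snd).of_isClosed_subset
      ((isCompact_chordBody hK).isClosed.preimage (by fun_prop)) fun _ hs => ⟨_, hs, rfl⟩
  obtain ⟨M, hM⟩ := hcompact.exists_isGreatest ⟨t, hmem⟩
  exact ⟨M, ht.trans_le (hM.2 hmem), hM⟩

lemma exists_nonneg_affineMap_sub_eq [FiniteDimensional ℝ E] (hKc : IsCompact K)
    (hK : Convex ℝ K) (hx : x ∈ interior K) (hf : f ≠ 0) :
    ∃ u v : E →ᵃ[ℝ] ℝ, (∀ p ∈ K, 0 ≤ u p) ∧ (∀ p ∈ K, 0 ≤ v p) ∧ (∀ p, u p - v p = f (p - x)) ∧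
      0 < u x ∧ ∃ a ∈ K, ∃ b ∈ K, Wbtw ℝ a x b ∧ u a = 0 ∧ v b = 0 := by
  obtain ⟨M, hMpos, hM⟩ := exists_isGreatest_fiber_chordBody hKc hx hf
  have hproj : K ⊆ Prod.fst '' chordBody K f x := fun p hp => ⟨_, mk_zero_mem_chordBody hp, rfl⟩
  obtain ⟨u, hux, hu⟩ := exists_affineMap_ge_of_isGreatest_fiber (convex_chordBody hK)
    (interior_mono hproj hx) hM (mk_zero_mem_chordBody (interior_subset hx)) hMpos
  have hu0 : ∀ p ∈ K, 0 ≤ u p := fun p hp => hu _ (mk_zero_mem_chordBody hp)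
  have huf : ∀ p ∈ K, f (p - x) ≤ u p := fun p hp => hu _ (mk_apply_sub_mem_chordBody hp)
  obtain ⟨a, ha, b, hb, s, hs, hline, hfb⟩ := mem_chordBody_iff.1 hM.1
  have hcombo : (1 - s) * u a + s * (u b - f (b - x)) = 0 := by
    have := congrArg u hline
    rw [AffineMap.apply_lineMap, AffineMap.lineMap_apply_ring, hux, ← hfb] at this
    linarith
  have hs0 : 0 < s := hs.1.lt_of_ne (by
    rintro rfl
    exact hMpos.ne ((zero_mul _).symm.trans hfb))
  have hs1 : s < 1 := hs.2.lt_of_ne (by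
    rintro rfl
    rw [AffineMap.lineMap_apply_one] at hline
    rw [hline, sub_self, map_zero, mul_zero] at hfb
    exact hMpos.ne hfb)
  have hleft : 0 ≤ (1 - s) * u a := mul_nonneg (sub_nonneg.2 hs.2) (hu0 a ha)
  have hright : 0 ≤ s * (u b - f (b - x)) := mul_nonneg hs.1 (sub_nonneg.2 (huf b hb))
  refine ⟨u, u - ((f : E →ₗ[ℝ] ℝ).toAffineMap - AffineMap.const ℝ E (f x)), hu0, ?_, ?_,
    hux ▸ hMpos, a, ha, b, hb, ⟨s, hs, hline⟩, ?_, ?_⟩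
  · intro p hp
    simpa using huf p hp
  · intro p
    simp
  · nlinarith
  · have : u b - f (b - x) = 0 := by nlinarith
    simpa using this

lemma exists_affineMap_le_of_notMem_interior [FiniteDimensional ℝ E] {G : Set E}
    (hKc : IsCompact K) (hK : Convex ℝ K) (hG : Convex ℝ G) (hx : x ∈ interior K) (hxG : x ∈ G)
    (hxG' : x ∉ interior G) :
    ∃ u v : E →ᵃ[ℝ] ℝ, (∀ p ∈ K, 0 ≤ u p) ∧ (∀ p ∈ K, 0 ≤ v p) ∧ (∀ g ∈ G, u g ≤ v g) ∧
      u x = v x ∧ 0 < u x ∧ ∃ a ∈ K, ∃ b ∈ K, Wbtw ℝ a x b ∧ u a = 0 ∧ v b = 0 := by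
  obtain ⟨f, hf, hfG⟩ := exists_dual_le_of_notMem_interior hG hxG hxG'
  obtain ⟨u, v, hu, hv, huv, hux, hab⟩ := exists_nonneg_affineMap_sub_eq hKc hK hx hf
  refine ⟨u, v, hu, hv, fun g hg => ?_, ?_, hux, hab⟩
  · rw [← sub_nonpos, huv, map_sub, sub_nonpos]
    exact hfG g hg
  · rw [← sub_eq_zero, huv, sub_self, map_zero]

end ChordBody

section Hilbert

variable {d : ℕ} {K G : Set (Euc d)} {x y a b : Euc d} {u v : Euc d →ᵃ[ℝ] ℝ} {α : ℝ}

lemma hilbertDist_comm (K : Set (Euc d)) (x y : Euc d) : hilbertDist K x y = hilbertDist K y x := by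
  rw [hilbertDist, hilbertDist, mul_comm (1 - gauge _ (y - x))]

lemma half_log_div_le_hilbertDist (hu : ∀ p ∈ K, 0 ≤ u p) (hv : ∀ p ∈ K, 0 ≤ v p)
    (hx : x ∈ interior K) (hy : y ∈ interior K) (hux : 0 < u x) (hvy : 0 < v y) :
    1 / 2 * Real.log (u x * v y / (u y * v x)) ≤ hilbertDist K x y := by
  have hgx := sub_pos.2 (gauge_image_sub_right_lt_one hy x)
  have hgy := sub_pos.2 (gauge_image_sub_right_lt_one hx y)
  have hle : (1 - gauge ((fun k => k - x) '' K) (y - x)) *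
      (1 - gauge ((fun k => k - y) '' K) (x - y)) ≤ u y / u x * (v x / v y) :=
    mul_le_mul (one_sub_gauge_le_div hu hux hx y) (one_sub_gauge_le_div hv hvy hy x) hgy.le
      (div_nonneg (hu y (interior_subset hy)) hux.le)
  have hlog := Real.log_le_log (mul_pos hgx hgy) hle
  rw [div_mul_div_comm, ← inv_div, Real.log_inv] at hlog
  rw [hilbertDist]
  linarith

lemma hilbertDist_eq_half_log_div (hu : ∀ p ∈ K, 0 ≤ u p) (hv : ∀ p ∈ K, 0 ≤ v p)
    (hx : x ∈ interior K) (hy : y ∈ interior K) (hux : 0 < u x) (hvy : 0 < v y) (ha : a ∈ K)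
    (hva : v a = 0) (hyxa : Wbtw ℝ y x a) (hb : b ∈ K) (hub : u b = 0) (hxyb : Wbtw ℝ x y b) :
    hilbertDist K x y = 1 / 2 * Real.log (u x * v y / (u y * v x)) := by
  rw [hilbertDist, one_sub_gauge_eq_div hu hux hx hb hub hxyb,
    one_sub_gauge_eq_div hv hvy hy ha hva hyxa, div_mul_div_comm, ← inv_div (u x * v y),
    Real.log_inv]
  ring

lemma hilbertDist_nonneg (hx : x ∈ interior K) (hy : y ∈ interior K) : 0 ≤ hilbertDist K x y := by
  simpa using half_log_div_le_hilbertDist (u := AffineMap.const ℝ _ 1)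
    (v := AffineMap.const ℝ _ 1) (by simp) (by simp) hx hy (by simp) (by simp)

lemma mem_hilbertExpand_of_hilbertDist_le (hGK : G ⊆ interior K) (hx : x ∈ G)
    (hy : y ∈ interior K) (hxy : hilbertDist K y x ≤ α) : y ∈ hilbertExpand K G α := by
  refine ⟨hy, (csInf_le ⟨0, ?_⟩ (mem_image_of_mem _ hx)).trans hxy⟩
  rintro _ ⟨g, hg, rfl⟩
  exact hilbertDist_nonneg hy (hGK hg)

lemma le_exp_mul_of_mem_hilbertExpand (hGK : G ⊆ interior K) (hG : G.Nonempty)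
    (hu : ∀ p ∈ K, 0 ≤ u p) (hv : ∀ p ∈ K, 0 ≤ v p) (hux : 0 < u x) (hvx : 0 < v x)
    (huv : ∀ g ∈ G, u g ≤ v g) (hy : y ∈ hilbertExpand K G α) :
    u y ≤ Real.exp (2 * α) * v y := by
  obtain ⟨hyK, hyα⟩ := hy
  have huy : 0 < u y := affineMap_pos_of_mem_interior hu hux hyK
  have hvy : 0 < v y := affineMap_pos_of_mem_interior hv hvx hyK
  have hle : 1 / 2 * Real.log (u y / v y) ≤ sInf (hilbertDist K y '' G) := by
    refine le_csInf (hG.image _) ?_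
    rintro _ ⟨g, hg, rfl⟩
    have hug : 0 < u g := affineMap_pos_of_mem_interior hu hux (hGK hg)
    have hvg : 0 < v g := affineMap_pos_of_mem_interior hv hvx (hGK hg)
    calc 1 / 2 * Real.log (u y / v y)
        = 1 / 2 * Real.log (u y * u g / (u g * v y)) := by
          rw [mul_comm (u y), mul_div_mul_left _ _ hug.ne']
      _ ≤ 1 / 2 * Real.log (u y * v g / (u g * v y)) := by gcongr; exact huv g hg
      _ ≤ hilbertDist K y g := half_log_div_le_hilbertDist hu hv hyK (hGK hg) huy hvg
  rw [← div_le_iff₀ hvy, ← Real.log_le_iff_le_exp (div_pos huy hvy)]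
  linarith

lemma hilbertDist_eq_of_eq_exp_mul (hu : ∀ p ∈ K, 0 ≤ u p) (hv : ∀ p ∈ K, 0 ≤ v p)
    (hx : x ∈ interior K) (hy : y ∈ interior K) (huvx : u x = v x) (hux : 0 < u x)
    (ha : a ∈ K) (hua : u a = 0) (hb : b ∈ K) (hvb : v b = 0) (haxb : Wbtw ℝ a x b)
    (hxyb : Wbtw ℝ x y b) (huvy : u y = Real.exp (2 * α) * v y) : hilbertDist K x y = α := by
  have hvx : 0 < v x := huvx ▸ hux
  have huy : 0 < u y := affineMap_pos_of_mem_interior hu hux hy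
  have hvy : 0 < v y := affineMap_pos_of_mem_interior hv hvx hy
  have hyxa : Wbtw ℝ y x a := (haxb.trans_right_left hxyb).symm
  have hcross : v x * u y / (v y * u x) = Real.exp (2 * α) := by
    rw [huvx, huvy]
    field_simp
  rw [hilbertDist_eq_half_log_div hv hu hx hy hvx huy ha hua hyxa hb hvb hxyb, hcross,
    Real.log_exp]
  ring

end Hilbert

theorem hilbert_expansion_boundary_transfer_general {d : ℕ} {K G : Set (Euc d)}
    (hKc : IsCompact K) (hK : Convex ℝ K) (hG : Convex ℝ G) (hGK : G ⊆ interior K)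
    {α : ℝ} (hα : 0 ≤ α) :
    ∀ x ∈ G \ interior G, ∃ y ∈ frontier (hilbertExpand K G α), hilbertDist K x y = α := by
  rintro x ⟨hxG, hxG'⟩
  have hxK := hGK hxG
  obtain ⟨u, v, hu, hv, huvG, huvx, hux, a, ha, b, hb, haxb, hua, hvb⟩ :=
    exists_affineMap_le_of_notMem_interior hKc hK hG hxK hxG hxG'
  have hvx : 0 < v x := huvx ▸ hux
  have hva : 0 < v a := affineMap_pos_left_of_wbtw haxb hvb hvx
  have hub : 0 < u b := affineMap_pos_left_of_wbtw haxb.symm hua hux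
  let w : Euc d →ᵃ[ℝ] ℝ := Real.exp (2 * α) • v - u
  have hw (p : Euc d) : w p = Real.exp (2 * α) * v p - u p := rfl
  have hwx : 0 ≤ w x := by
    rw [hw, huvx, sub_nonneg]
    exact le_mul_of_one_le_left hvx.le (Real.one_le_exp (by positivity))
  have hwb : w b < 0 := by simpa [hw, hvb] using hub
  have hwa : 0 < w a := by simpa [hw, hua, Real.exp_pos] using hva
  obtain ⟨y, hyK, hxyb, hwy⟩ := exists_mem_interior_wbtw_eq_zero hK hxK hb hwx hwb
  have hdist : hilbertDist K x y = α :=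
    hilbertDist_eq_of_eq_exp_mul hu hv hxK hyK huvx hux ha hua hb hvb haxb hxyb
      (sub_eq_zero.1 hwy).symm
  have hyG : y ∈ hilbertExpand K G α :=
    mem_hilbertExpand_of_hilbertDist_le hGK hxG hyK (hilbertDist_comm K y x ▸ hdist.le)
  have hw_nonneg : ∀ p ∈ hilbertExpand K G α, 0 ≤ w p := fun p hp =>
    sub_nonneg.2 (le_exp_mul_of_mem_hilbertExpand hGK ⟨x, hxG⟩ hu hv hux hvx huvG hp)
  refine ⟨y, ⟨subset_closure hyG, fun hy => ?_⟩, hdist⟩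
  exact (affineMap_pos_of_mem_interior hw_nonneg hwa hy).ne' hwy

/-- Hilbert boundary-transfer property of expansions. -/
theorem hilbert_expansion_boundary_transfer {d : ℕ} (K G : Set (Euc d))
    (hK : IsConvexBody K) (hG : IsConvexBody G) (hGK : G ⊆ interior K)
    (α : ℝ) (hα : 0 < α) (hα1 : α ≤ 1) :
    ∀ x ∈ frontier G, ∃ y ∈ frontier (hilbertExpand K G α),
      hilbertDist K x y = α := by
  rw [hG.1.isClosed.frontier_eq]
  exact hilbert_expansion_boundary_transfer_general hK.1 hK.2.1 hG.2.1 hGK hα.le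
end
end

section
/- There exists an absolute constant c ≥ 1 such that for every dimension d ≥ 2, every convex body D ⊆ ℝ^d whose centroid is the origin (i.e., ∫_D x dλ_d(x) = 0), every set U ⊆ ℝ^d, and every α > 0, one has N_{D ∩ (−D)}(U, α) ≤ c^{d} · N_D(U, α), where N_A(U,α) denotes the translative covering number of U by translates of α·A and D ∩ (−D) is the symmetric core of D. -/
open Set MeasureTheory Metric
open scoped Pointwise RealInnerProductSpace ENNReal

noncomputable section

/-!
Write `M z = D ∩ (2z - D)`, so that `D ∩ -D = M 0`. The midpoint of two independent uniform points
of `D` has density `2 ^ d * μ (M z) / μ D ^ 2`, so it falls with probability at most `1/2` among the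
`z ∈ D` with `μ (M z) < μ D / 2 ^ (d + 1)`. By Brunn–Minkowski, obtained here from
Prékopa–Leindler, the superlevel sets of `z ↦ μ (M z)` are convex. Averaging the midpoint over the
superlevel set and over its complement therefore writes the centroid as `0 = q x + (1 - q) y` with
`q ≥ 1/2`, `μ (M x) ≥ μ D / 2 ^ (d + 1)` and `y ∈ D`. As `M 0` contains `q M x + (1 - q) y`, this
gives `μ D ≤ 2 * 4 ^ d * μ (D ∩ -D)`. Packing translates of `K = D ∩ -D` into `3D` then bounds the
size of a maximal `K`-separated subset of `D` by `2 * 12 ^ d`, and `D` is covered by the translates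
of `K` centred at such a subset.
-/

section RealLine

theorem volume_add_volume_le_volume_add_of_isCompact {A B : Set ℝ} (hA : IsCompact A)
    (hB : IsCompact B) (hA₀ : A.Nonempty) (hB₀ : B.Nonempty) :
    volume A + volume B ≤ volume (A + B) := by
  -- `A + inf B` lies to the left of `sup A + inf B` and `sup A + B` to its right.
  have hdisj : AEDisjoint volume ((· + sInf B) '' A) ((sSup A + ·) '' B) := by
    refine measure_mono_null (t := {sSup A + sInf B}) ?_ Real.volume_singleton
    rintro _ ⟨⟨x, hx, rfl⟩, y, hy, hxy⟩
    have hxA := le_csSup hA.bddAbove hx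
    have hyB := csInf_le hB.bddBelow hy
    rw [mem_singleton_iff]
    linarith
  calc volume A + volume B
      = volume ((· + sInf B) '' A) + volume ((sSup A + ·) '' B) := by simp
    _ = volume ((· + sInf B) '' A ∪ (sSup A + ·) '' B) :=
        (measure_union₀ (hB.image (by fun_prop)).measurableSet.nullMeasurableSet hdisj).symm
    _ ≤ volume (A + B) := measure_mono <| union_subset
        (image_subset_iff.2 fun _ hx => add_mem_add hx (hB.sInf_mem hB₀))
        (image_subset_iff.2 fun _ hy => add_mem_add (hA.sSup_mem hA₀) hy)

theorem volume_add_volume_le_volume_add {A B : Set ℝ} (hA : MeasurableSet A)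
    (hB : MeasurableSet B) (hA₀ : A.Nonempty) (hB₀ : B.Nonempty) :
    volume A + volume B ≤ volume (A + B) := by
  obtain ⟨a, ha⟩ := hA₀
  obtain ⟨b, hb⟩ := hB₀
  rw [hA.measure_eq_iSup_isCompact, hB.measure_eq_iSup_isCompact]
  simp only [iSup_and']
  refine ENNReal.biSup_add_biSup_le' ⟨∅, empty_subset _, isCompact_empty⟩
    ⟨∅, empty_subset _, isCompact_empty⟩ fun K ⟨hKA, hK⟩ L ⟨hLB, hL⟩ => ?_
  calc volume K + volume L
      ≤ volume (insert a K) + volume (insert b L) := by gcongr <;> exact subset_insert _ _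
    _ ≤ volume (insert a K + insert b L) :=
        volume_add_volume_le_volume_add_of_isCompact (hK.insert a) (hL.insert b)
          (insert_nonempty _ _) (insert_nonempty _ _)
    _ ≤ volume (A + B) :=
        measure_mono <| add_subset_add (insert_subset ha hKA) (insert_subset hb hLB)

end RealLine

theorem lintegral_eq_lintegral_meas_ofReal_lt {α : Type*} [MeasurableSpace α] (μ : Measure α)
    [SFinite μ] {f : α → ℝ≥0∞} (hf : Measurable f) :
    ∫⁻ x, f x ∂μ = ∫⁻ t in Ioi 0, μ {x | ENNReal.ofReal t < f x} := by
  have hS : MeasurableSet {p : α × ℝ | ENNReal.ofReal p.2 < f p.1} :=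
    measurableSet_lt measurable_snd.ennreal_ofReal (hf.comp measurable_fst)
  have hfib (y : ℝ≥0∞) : volume.restrict (Ioi 0) {t : ℝ | ENNReal.ofReal t < y} = y := by
    rw [Measure.restrict_apply (measurableSet_lt ENNReal.measurable_ofReal measurable_const)]
    obtain rfl | hy := eq_or_ne y ⊤
    · simp
    · have : {t : ℝ | ENNReal.ofReal t < y} ∩ Ioi 0 = Ioo 0 y.toReal := by
        ext t
        simp only [mem_inter_iff, mem_ofPred_eq, mem_Ioi, mem_Ioo, and_comm (a := _ < y)]
        exact and_congr_right fun ht => ENNReal.ofReal_lt_iff_lt_toReal ht.le hy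
      simp [this, hy]
  calc ∫⁻ x, f x ∂μ
      = μ.prod (volume.restrict (Ioi 0)) {p : α × ℝ | ENNReal.ofReal p.2 < f p.1} := by
        rw [Measure.prod_apply hS]
        exact lintegral_congr fun x => (hfib (f x)).symm
    _ = ∫⁻ t in Ioi 0, μ {x | ENNReal.ofReal t < f x} := Measure.prod_apply_symm hS

section PrekopaLeindler

variable {a b : ℝ}

theorem ennreal_geom_mean_le_arith_mean2_weighted (ha : 0 < a) (hb : 0 < b) (hab : a + b = 1)
    (x y : ℝ≥0∞) : x ^ a * y ^ b ≤ ENNReal.ofReal a * x + ENNReal.ofReal b * y := by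
  have hconj : a⁻¹.HolderConjugate b⁻¹ := .inv_inv ha hb hab
  have h := ENNReal.young_inequality (x ^ a) (y ^ b) hconj
  rwa [ENNReal.rpow_rpow_inv ha.ne', ENNReal.rpow_rpow_inv hb.ne', ENNReal.ofReal_inv_of_pos ha,
    ENNReal.ofReal_inv_of_pos hb, ENNReal.div_eq_inv_mul, ENNReal.div_eq_inv_mul, inv_inv,
    inv_inv] at h

-- With both suprema equal to `1`, the levels below `1` give nonempty superlevel sets, to which the
-- one-dimensional Brunn–Minkowski inequality applies, and the levels above contribute nothing.
theorem add_lintegral_le_of_iSup_eq_one (ha : 0 < a) (hb : 0 < b) (hab : a + b = 1)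
    {f g h : ℝ → ℝ≥0∞} (hf : Measurable f) (hg : Measurable g) (hh : Measurable h)
    (hf₁ : ⨆ x, f x = 1) (hg₁ : ⨆ x, g x = 1)
    (hfgh : ∀ x y, f x ^ a * g y ^ b ≤ h (a • x + b • y)) :
    ENNReal.ofReal a * (∫⁻ x, f x) + ENNReal.ofReal b * (∫⁻ x, g x) ≤ ∫⁻ x, h x := by
  simp only [lintegral_eq_lintegral_meas_ofReal_lt volume hf,
    lintegral_eq_lintegral_meas_ofReal_lt volume hg,
    lintegral_eq_lintegral_meas_ofReal_lt volume hh]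
  rw [← lintegral_const_mul' _ _ ENNReal.ofReal_ne_top,
    ← lintegral_const_mul' _ _ ENNReal.ofReal_ne_top]
  refine (le_lintegral_add _ _).trans (lintegral_mono fun t => ?_)
  generalize ENNReal.ofReal t = s
  obtain hs | hs := lt_or_ge s 1
  · have hlevel : a • {x | s < f x} + b • {y | s < g y} ⊆ {z | s < h z} := by
      rintro _ ⟨_, ⟨x, hx, rfl⟩, _, ⟨y, hy, rfl⟩, rfl⟩
      calc s = s ^ a * s ^ b := by rw [← ENNReal.rpow_add_of_nonneg _ _ ha.le hb.le, hab,
              ENNReal.rpow_one]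
        _ < f x ^ a * g y ^ b :=
            ENNReal.mul_lt_mul (ENNReal.rpow_lt_rpow hx ha) (ENNReal.rpow_lt_rpow hy hb)
        _ ≤ h (a • x + b • y) := hfgh x y
    calc ENNReal.ofReal a * volume {x | s < f x} + ENNReal.ofReal b * volume {y | s < g y}
        = volume (a • {x | s < f x}) + volume (b • {y | s < g y}) := by
          simp [abs_of_pos, ha, hb]
      _ ≤ volume (a • {x | s < f x} + b • {y | s < g y}) :=
          volume_add_volume_le_volume_add
            ((measurableSet_lt measurable_const hf).const_smul_of_ne_zero ha.ne')
            ((measurableSet_lt measurable_const hg).const_smul_of_ne_zero hb.ne')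
            (Set.Nonempty.smul_set (lt_iSup_iff.1 (hs.trans_eq hf₁.symm)))
            (Set.Nonempty.smul_set (lt_iSup_iff.1 (hs.trans_eq hg₁.symm)))
      _ ≤ volume {z | s < h z} := measure_mono hlevel
  · have hempty {u : ℝ → ℝ≥0∞} (hu : ⨆ x, u x = 1) : {x | s < u x} = ∅ :=
      eq_empty_of_forall_notMem fun x hx => (hx.trans_le (le_iSup u x)).not_ge (hu.trans_le hs)
    simp [hempty hf₁, hempty hg₁]

theorem lintegral_rpow_mul_lintegral_rpow_le_of_iSup_ne_top (ha : 0 < a) (hb : 0 < b)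
    (hab : a + b = 1) {f g h : ℝ → ℝ≥0∞} (hf : Measurable f) (hg : Measurable g)
    (hh : Measurable h) (hf_top : ⨆ x, f x ≠ ⊤) (hg_top : ⨆ x, g x ≠ ⊤)
    (hfgh : ∀ x y, f x ^ a * g y ^ b ≤ h (a • x + b • y)) :
    (∫⁻ x, f x) ^ a * (∫⁻ x, g x) ^ b ≤ ∫⁻ x, h x := by
  set M := ⨆ x, f x
  set N := ⨆ x, g x
  obtain hM₀ | hM₀ := eq_or_ne M 0
  · simp [ENNReal.iSup_eq_zero.1 hM₀, ha]
  obtain hN₀ | hN₀ := eq_or_ne N 0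
  · simp [ENNReal.iSup_eq_zero.1 hN₀, hb]
  have hMa₀ : M ^ a ≠ 0 := by simp [hM₀, ha.le]
  have hNb₀ : N ^ b ≠ 0 := by simp [hN₀, hb.le]
  have hMa : M ^ a ≠ ⊤ := ENNReal.rpow_ne_top_of_nonneg ha.le hf_top
  have hNb : N ^ b ≠ ⊤ := ENNReal.rpow_ne_top_of_nonneg hb.le hg_top
  have hdiv (u : ℝ → ℝ≥0∞) {c : ℝ≥0∞} (hc : c ≠ 0) : ∫⁻ x, u x / c = (∫⁻ x, u x) / c := by
    simp only [div_eq_mul_inv, lintegral_mul_const' _ _ (ENNReal.inv_ne_top.2 hc)]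
  have hscale (x y : ℝ≥0∞) : (x / M) ^ a * (y / N) ^ b = x ^ a * y ^ b / (M ^ a * N ^ b) := by
    rw [ENNReal.div_rpow_of_nonneg _ _ ha.le, ENNReal.div_rpow_of_nonneg _ _ hb.le,
      ENNReal.mul_div_mul_comm (.inl hMa₀) (.inl hMa)]
  have hnormalized : (∫⁻ x, f x / M) ^ a * (∫⁻ x, g x / N) ^ b ≤
      ∫⁻ x, h x / (M ^ a * N ^ b) := by
    refine (ennreal_geom_mean_le_arith_mean2_weighted ha hb hab _ _).trans
      (add_lintegral_le_of_iSup_eq_one ha hb hab (hf.div_const M) (hg.div_const N)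
        (hh.div_const _) ?_ ?_ fun x y => ?_)
    · rw [← ENNReal.iSup_div, ENNReal.div_self hM₀ hf_top]
    · rw [← ENNReal.iSup_div, ENNReal.div_self hN₀ hg_top]
    · rw [hscale]
      exact ENNReal.div_le_div_right (hfgh x y) _
  rwa [hdiv _ hM₀, hdiv _ hN₀, hdiv _ (mul_ne_zero hMa₀ hNb₀), hscale,
    ENNReal.div_le_iff_le_mul (.inl (mul_ne_zero hMa₀ hNb₀)) (.inl (ENNReal.mul_ne_top hMa hNb)),
    ENNReal.div_mul_cancel (mul_ne_zero hMa₀ hNb₀) (ENNReal.mul_ne_top hMa hNb)] at hnormalized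

theorem lintegral_eq_iSup_lintegral_min_natCast {α : Type*} [MeasurableSpace α] (μ : Measure α)
    {f : α → ℝ≥0∞} (hf : Measurable f) : ∫⁻ x, f x ∂μ = ⨆ n : ℕ, ∫⁻ x, min (f x) n ∂μ := by
  rw [← lintegral_iSup (fun n => hf.min measurable_const)
    fun m n hmn x => min_le_min_left _ (Nat.cast_le.2 hmn)]
  simp only [← inf_iSup_eq, ENNReal.iSup_natCast, inf_top_eq]

/-- The measure `μ` satisfies the Prékopa–Leindler inequality with weights `a` and `b`; stated
for `ℝ≥0∞`-valued functions, so that it passes to products by Tonelli's theorem. -/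
def IsPrekopaLeindler {E : Type*} [AddCommGroup E] [Module ℝ E] [MeasurableSpace E] (a b : ℝ)
    (μ : Measure E) : Prop :=
  ∀ ⦃f g h : E → ℝ≥0∞⦄, Measurable f → Measurable g → Measurable h →
    (∀ x y, f x ^ a * g y ^ b ≤ h (a • x + b • y)) →
    (∫⁻ x, f x ∂μ) ^ a * (∫⁻ x, g x ∂μ) ^ b ≤ ∫⁻ x, h x ∂μ

namespace IsPrekopaLeindler

theorem volume_real (ha : 0 < a) (hb : 0 < b) (hab : a + b = 1) :
    IsPrekopaLeindler a b (volume : Measure ℝ) := by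
  intro f g h hf hg hh hfgh
  have hbdd (u : ℝ → ℝ≥0∞) (n : ℕ) : ⨆ x, min (u x) n ≠ ⊤ :=
    ((iSup_le fun _ => min_le_right _ _).trans_lt (ENNReal.natCast_lt_top n)).ne
  have hrpow_iSup {c : ℝ} (hc : 0 < c) (u : ℕ → ℝ≥0∞) : (⨆ n, u n) ^ c = ⨆ n, u n ^ c :=
    (ENNReal.orderIsoRpow c hc).map_iSup u
  rw [lintegral_eq_iSup_lintegral_min_natCast _ hf, lintegral_eq_iSup_lintegral_min_natCast _ hg,
    hrpow_iSup ha, hrpow_iSup hb, ENNReal.iSup_mul]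
  refine iSup_le fun m => ?_
  rw [ENNReal.mul_iSup]
  refine iSup_le fun n => lintegral_rpow_mul_lintegral_rpow_le_of_iSup_ne_top ha hb hab
    (hf.min measurable_const) (hg.min measurable_const) hh (hbdd f m) (hbdd g n) fun x y => ?_
  exact le_trans (by gcongr <;> exact min_le_left _ _) (hfgh x y)

variable {E F : Type*} [AddCommGroup E] [Module ℝ E] [MeasurableSpace E]
  [AddCommGroup F] [Module ℝ F] [MeasurableSpace F] {μ : Measure E} {ν : Measure F}

theorem dirac_zero : IsPrekopaLeindler a b (Measure.dirac (0 : E)) := by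
  intro f g h hf hg hh hfgh
  simpa [lintegral_dirac', hf, hg, hh] using hfgh 0 0

theorem prod [SFinite ν] (hμ : IsPrekopaLeindler a b μ) (hν : IsPrekopaLeindler a b ν) :
    IsPrekopaLeindler a b (μ.prod ν) := by
  intro f g h hf hg hh hfgh
  rw [lintegral_prod _ hf.aemeasurable, lintegral_prod _ hg.aemeasurable,
    lintegral_prod _ hh.aemeasurable]
  exact hμ hf.lintegral_prod_right' hg.lintegral_prod_right' hh.lintegral_prod_right'
    fun x₁ x₂ => hν (by fun_prop) (by fun_prop) (by fun_prop)
      fun y₁ y₂ => hfgh (x₁, y₁) (x₂, y₂)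

theorem map (hμ : IsPrekopaLeindler a b μ) (L : E →ₗ[ℝ] F) (hL : Measurable L) :
    IsPrekopaLeindler a b (μ.map L) := by
  intro f g h hf hg hh hfgh
  rw [lintegral_map hf hL, lintegral_map hg hL, lintegral_map hh hL]
  exact hμ (hf.comp hL) (hg.comp hL) (hh.comp hL) fun x y => by simpa using hfgh (L x) (L y)

theorem smul (ha : 0 ≤ a) (hb : 0 ≤ b) (hab : a + b = 1) (hμ : IsPrekopaLeindler a b μ)
    (c : ℝ≥0∞) : IsPrekopaLeindler a b (c • μ) := by
  intro f g h hf hg hh hfgh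
  simp only [lintegral_smul_measure, smul_eq_mul, ENNReal.mul_rpow_of_nonneg _ _ ha,
    ENNReal.mul_rpow_of_nonneg _ _ hb]
  calc c ^ a * (∫⁻ x, f x ∂μ) ^ a * (c ^ b * (∫⁻ x, g x ∂μ) ^ b)
      = c ^ (a + b) * ((∫⁻ x, f x ∂μ) ^ a * (∫⁻ x, g x ∂μ) ^ b) := by
        rw [ENNReal.rpow_add_of_nonneg _ _ ha hb, mul_mul_mul_comm]
    _ ≤ c * ∫⁻ x, h x ∂μ := by
        rw [hab, ENNReal.rpow_one]
        gcongr
        exact hμ hf hg hh hfgh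

end IsPrekopaLeindler

section AddHaar

variable {E : Type*} [NormedAddCommGroup E] [NormedSpace ℝ E] [MeasurableSpace E] [BorelSpace E]

theorem isPrekopaLeindler_of_continuousLinearEquiv {F : Type*} [NormedAddCommGroup F]
    [NormedSpace ℝ F] [FiniteDimensional ℝ F] [MeasurableSpace F] [BorelSpace F]
    (ha : 0 ≤ a) (hb : 0 ≤ b) (hab : a + b = 1) (L : E ≃L[ℝ] F) {μ : Measure E}
    [μ.IsAddHaarMeasure] (hμ : IsPrekopaLeindler a b μ) (ν : Measure F) [ν.IsAddHaarMeasure] :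
    IsPrekopaLeindler a b ν := by
  have : (μ.map L).IsAddHaarMeasure := L.isAddHaarMeasure_map μ
  rw [Measure.isAddLeftInvariant_eq_smul ν (μ.map L)]
  exact (hμ.map (L : E →ₗ[ℝ] F) L.continuous.measurable).smul ha hb hab _

theorem isPrekopaLeindler_volume_fin (ha : 0 < a) (hb : 0 < b) (hab : a + b = 1) (n : ℕ) :
    IsPrekopaLeindler a b (volume : Measure (Fin n → ℝ)) := by
  induction n with
  | zero =>
    rw [Measure.volume_pi_eq_dirac 0]
    exact .dirac_zero
  | succ n ih =>
    exact isPrekopaLeindler_of_continuousLinearEquiv ha.le hb.le hab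
      (Fin.consEquivL ℝ fun _ : Fin (n + 1) => ℝ)
      ((IsPrekopaLeindler.volume_real ha hb hab).prod ih) volume

theorem isPrekopaLeindler_of_isAddHaarMeasure [FiniteDimensional ℝ E] (ha : 0 < a) (hb : 0 < b)
    (hab : a + b = 1) (μ : Measure E) [μ.IsAddHaarMeasure] : IsPrekopaLeindler a b μ :=
  isPrekopaLeindler_of_continuousLinearEquiv ha.le hb.le hab
    (Module.finBasis ℝ E).equivFunL.symm (isPrekopaLeindler_volume_fin ha hb hab _) μ

theorem rpow_measure_mul_rpow_measure_le_measure_smul_add_smul [FiniteDimensional ℝ E]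
    (ha : 0 < a) (hb : 0 < b) (hab : a + b = 1) (μ : Measure E) [μ.IsAddHaarMeasure] {A B : Set E}
    (hA : MeasurableSet A) (hB : MeasurableSet B) :
    μ A ^ a * μ B ^ b ≤ μ (a • A + b • B) := by
  set C := toMeasurable μ (a • A + b • B)
  have hC : MeasurableSet C := measurableSet_toMeasurable _ _
  have h := isPrekopaLeindler_of_isAddHaarMeasure ha hb hab μ (measurable_one.indicator hA)
    (measurable_one.indicator hB) (measurable_one.indicator hC) fun x y => ?_
  · simpa only [lintegral_indicator_one, hA, hB, hC, C, measure_toMeasurable] using h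
  by_cases hxy : x ∈ A ∧ y ∈ B
  · have : a • x + b • y ∈ C := subset_toMeasurable _ _
      (add_mem_add (smul_mem_smul_set hxy.1) (smul_mem_smul_set hxy.2))
    simp [hxy.1, hxy.2, this]
  · obtain hx | hy := not_and_or.1 hxy
    · simp [hx, ha]
    · simp [hy, hb]

end AddHaar

end PrekopaLeindler

section Barycenter

variable {E : Type*} [NormedAddCommGroup E] [NormedSpace ℝ E]

theorem exists_integral_eq_smul_add_smul [CompleteSpace E] {Ω : Type*} [MeasurableSpace Ω]
    {P : Measure Ω} [IsProbabilityMeasure P] {f : Ω → E} (hf : Integrable f P) {C L : Set E}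
    (hC : Convex ℝ C) (hC_closed : IsClosed C) (hfC : ∀ᵐ ω ∂P, f ω ∈ C) (hL : Convex ℝ L)
    (hL_closed : IsClosed L) (hfL : MeasurableSet (f ⁻¹' L)) (hfL₀ : P (f ⁻¹' L) ≠ 0) :
    ∃ x ∈ L, ∃ y ∈ C, ∫ ω, f ω ∂P = P.real (f ⁻¹' L) • x + P.real (f ⁻¹' L)ᶜ • y := by
  have hx : ⨍ ω in f ⁻¹' L, f ω ∂P ∈ L :=
    hL.set_average_mem hL_closed hfL₀ (measure_ne_top _ _)
      (ae_restrict_of_forall_mem hfL fun _ h => h) hf.integrableOn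
  obtain ⟨y, hyC, hy⟩ : ∃ y ∈ C, P.real (f ⁻¹' L)ᶜ • y = ∫ ω in (f ⁻¹' L)ᶜ, f ω ∂P := by
    obtain hc | hc := eq_or_ne (P (f ⁻¹' L)ᶜ) 0
    · obtain ⟨ω, hω⟩ := hfC.exists
      exact ⟨f ω, hω, by simp only [measureReal_def, Measure.restrict_eq_zero.2 hc, hc,
        ENNReal.toReal_zero, zero_smul, integral_zero_measure]⟩
    · exact ⟨_, hC.set_average_mem hC_closed hc (measure_ne_top _ _) (ae_restrict_of_ae hfC)
        hf.integrableOn, measure_smul_setAverage f (measure_ne_top _ _)⟩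
  refine ⟨_, hx, y, hyC, ?_⟩
  rw [measure_smul_setAverage f (measure_ne_top _ _), hy, integral_add_compl hfL hf]

variable [MeasurableSpace E] {P : Measure E} [IsProbabilityMeasure P]

theorem integrable_prod_midpoint (hP : Integrable id P) :
    Integrable (fun p : E × E => midpoint ℝ p.1 p.2) (P.prod P) := by
  simp only [midpoint_eq_smul_add]
  exact ((hP.comp_fst P).add (hP.comp_snd P)).smul _

theorem integral_prod_midpoint (hP : Integrable id P) :
    ∫ p, midpoint ℝ p.1 p.2 ∂P.prod P = ∫ x, x ∂P := by
  simp only [midpoint_eq_smul_add, integral_smul]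
  rw [integral_add (f := fun p : E × E => p.1) (g := fun p : E × E => p.2) (hP.comp_fst P)
    (hP.comp_snd P), integral_fun_fst (fun x : E => x), integral_fun_snd (fun x : E => x)]
  simp [← two_smul ℝ]

theorem exists_integral_eq_smul_add_smul_of_midpoint [CompleteSpace E] [BorelSpace E]
    [SecondCountableTopology E] (hP : Integrable id P) {C L : Set E} (hC : Convex ℝ C)
    (hC_closed : IsClosed C) (hPC : ∀ᵐ x ∂P, x ∈ C) (hL : Convex ℝ L) (hL_closed : IsClosed L)
    (hPL : P.prod P {p | midpoint ℝ p.1 p.2 ∉ L} ≤ 2⁻¹) :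
    ∃ x ∈ L, ∃ y ∈ C, ∃ q : ℝ, 2⁻¹ ≤ q ∧ q ≤ 1 ∧ ∫ x, x ∂P = q • x + (1 - q) • y := by
  have hmid : Continuous fun p : E × E => midpoint ℝ p.1 p.2 :=
    continuous_fst.lineMap continuous_snd continuous_const
  set A : Set (E × E) := (fun p => midpoint ℝ p.1 p.2) ⁻¹' L
  have hA : MeasurableSet A := hmid.measurable hL_closed.measurableSet
  have hmidC : ∀ᵐ p ∂P.prod P, midpoint ℝ p.1 p.2 ∈ C := by
    filter_upwards [Measure.quasiMeasurePreserving_fst.ae hPC,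
      Measure.quasiMeasurePreserving_snd.ae hPC] with p hp₁ hp₂ using hC.midpoint_mem hp₁ hp₂
  have hcompl : (P.prod P).real Aᶜ ≤ 2⁻¹ := ENNReal.toReal_le_of_le_ofReal (by norm_num)
    (hPL.trans_eq (by simp))
  have hadd : (P.prod P).real A + (P.prod P).real Aᶜ = 1 := probReal_add_probReal_compl hA
  have hhalf : 2⁻¹ ≤ (P.prod P).real A := by linarith
  have hA₀ : P.prod P A ≠ 0 := fun h => by
    norm_num [measureReal_def, h] at hhalf
  obtain ⟨x, hxL, y, hyC, hxy⟩ := exists_integral_eq_smul_add_smul (integrable_prod_midpoint hP)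
    hC hC_closed hmidC hL hL_closed hA hA₀
  refine ⟨x, hxL, y, hyC, (P.prod P).real A, hhalf, measureReal_le_one, ?_⟩
  rw [← integral_prod_midpoint hP, hxy, ← hadd, add_sub_cancel_left]

end Barycenter

section Macbeath

/-- The Macbeath region of `D` at `x`, namely the intersection of `D` with its reflection through
`x`. It is not recentred: it is symmetric about `x` rather than about `0`. -/
def macbeathRegion {E : Type*} [AddCommGroup E] [Module ℝ E] (D : Set E) (x : E) : Set E :=
  D ∩ {y | (2 : ℝ) • x - y ∈ D}

variable {E : Type*} [NormedAddCommGroup E] [NormedSpace ℝ E] {D : Set E} {a b : ℝ} {x y : E}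

theorem macbeathRegion_zero : macbeathRegion D 0 = D ∩ -D := by
  ext y
  simp [macbeathRegion]

theorem self_mem_macbeathRegion (hx : x ∈ D) : x ∈ macbeathRegion D x :=
  ⟨hx, by simpa [two_smul] using hx⟩

theorem mem_of_nonempty_macbeathRegion (hD : Convex ℝ D) (h : (macbeathRegion D x).Nonempty) :
    x ∈ D := by
  obtain ⟨y, hy, hxy⟩ := h
  have := hD.midpoint_mem hy hxy
  rwa [midpoint_eq_smul_add, add_sub_cancel, smul_smul, invOf_mul_self, one_smul] at this

theorem isCompact_macbeathRegion (hD : IsCompact D) (x : E) : IsCompact (macbeathRegion D x) :=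
  hD.inter_right (hD.isClosed.preimage (by fun_prop))

theorem smul_macbeathRegion_add_smul_macbeathRegion_subset (hD : Convex ℝ D) (ha : 0 ≤ a)
    (hb : 0 ≤ b) (hab : a + b = 1) :
    a • macbeathRegion D x + b • macbeathRegion D y ⊆ macbeathRegion D (a • x + b • y) := by
  rintro _ ⟨_, ⟨u, ⟨hu, hxu⟩, rfl⟩, _, ⟨v, ⟨hv, hyv⟩, rfl⟩, rfl⟩
  refine ⟨hD hu hv ha hb hab, ?_⟩
  have := hD hxu hyv ha hb hab
  rw [mem_ofPred_eq]
  convert this using 1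
  module

variable [MeasurableSpace E] {μ : Measure E}

open Filter Topology in
theorem upperSemicontinuous_measure_macbeathRegion (hD : IsCompact D) [μ.OuterRegular] :
    UpperSemicontinuous fun x => μ (macbeathRegion D x) := by
  intro x r hr
  obtain ⟨W, hMW, hW, hWr⟩ := Set.exists_isOpen_lt_of_lt _ r hr
  have hmiss : ∀ᶠ x' in 𝓝 x, ∀ y ∈ D \ W, (2 : ℝ) • x' - y ∉ D := by
    refine (hD.diff hW).eventually_forall_of_forall_eventually fun y hy => ?_
    have hxy : (2 : ℝ) • x - y ∈ Dᶜ := fun h => hy.2 (hMW ⟨hy.1, h⟩)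
    have hcont : Continuous fun z : E × E => (2 : ℝ) • z.1 - z.2 := by fun_prop
    exact hcont.continuousAt.eventually_mem (hD.isClosed.isOpen_compl.mem_nhds hxy)
  filter_upwards [hmiss] with x' hx'
  refine (measure_mono fun y hy => ?_).trans_lt hWr
  by_contra hyW
  exact hx' y ⟨hy.1, hyW⟩ hy.2

variable [BorelSpace E] [FiniteDimensional ℝ E] [μ.IsAddHaarMeasure]

theorem quasiconcaveOn_measure_macbeathRegion (hD : IsCompact D) (hDc : Convex ℝ D) :
    QuasiconcaveOn ℝ univ fun x => μ (macbeathRegion D x) := by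
  intro r
  rw [convex_iff_forall_pos]
  rintro x ⟨-, hx⟩ y ⟨-, hy⟩ a b ha hb hab
  refine ⟨mem_univ _, ?_⟩
  calc r = r ^ a * r ^ b := by
        rw [← ENNReal.rpow_add_of_nonneg _ _ ha.le hb.le, hab, ENNReal.rpow_one]
    _ ≤ μ (macbeathRegion D x) ^ a * μ (macbeathRegion D y) ^ b := by gcongr
    _ ≤ μ (a • macbeathRegion D x + b • macbeathRegion D y) :=
        rpow_measure_mul_rpow_measure_le_measure_smul_add_smul ha hb hab μ
          (isCompact_macbeathRegion hD x).measurableSet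
          (isCompact_macbeathRegion hD y).measurableSet
    _ ≤ μ (macbeathRegion D (a • x + b • y)) := measure_mono <|
        smul_macbeathRegion_add_smul_macbeathRegion_subset hDc ha.le hb.le hab

theorem ofReal_pow_mul_measure_macbeathRegion_le (hD : Convex ℝ D) (ha : 0 ≤ a) (hb : 0 ≤ b)
    (hab : a + b = 1) (x : E) (hy : y ∈ D) :
    ENNReal.ofReal (a ^ Module.finrank ℝ E) * μ (macbeathRegion D x) ≤
      μ (macbeathRegion D (a • x + b • y)) := by
  calc ENNReal.ofReal (a ^ Module.finrank ℝ E) * μ (macbeathRegion D x)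
      = μ (a • macbeathRegion D x + {b • y}) := by
        rw [add_singleton, image_add_right, measure_preimage_add_right,
          Measure.addHaar_smul_of_nonneg μ ha]
    _ ≤ μ (a • macbeathRegion D x + b • macbeathRegion D y) := by
        gcongr
        exact singleton_subset_iff.2 (smul_mem_smul_set (self_mem_macbeathRegion hy))
    _ ≤ μ (macbeathRegion D (a • x + b • y)) :=
        measure_mono (smul_macbeathRegion_add_smul_macbeathRegion_subset hD ha hb hab)

theorem measure_midpoint_preimage_inter (μ : Measure E) [μ.IsAddHaarMeasure] (D S : Set E)
    (x : E) :
    μ (midpoint ℝ x ⁻¹' S ∩ D) =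
      2 ^ Module.finrank ℝ E * μ ((fun z => (2 : ℝ) • z - x) ⁻¹' D ∩ S) := by
  have hhom : ⇑(AffineMap.homothety x (2 : ℝ)) = fun z => (2 : ℝ) • z - x := by
    ext z
    simp only [AffineMap.homothety_apply, vsub_eq_sub, vadd_eq_add]
    module
  have hmid (z : E) : midpoint ℝ x ((2 : ℝ) • z - x) = z := by
    rw [midpoint_eq_smul_add, add_sub_cancel, smul_smul, invOf_mul_self, one_smul]
  have hsurj : (AffineMap.homothety x (2 : ℝ) : E → E).Surjective := fun y =>
    ⟨midpoint ℝ x y, by simp [hhom, midpoint_eq_smul_add, smul_smul]⟩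
  calc μ (midpoint ℝ x ⁻¹' S ∩ D)
      = μ (AffineMap.homothety x (2 : ℝ) ''
          (AffineMap.homothety x (2 : ℝ) ⁻¹' (midpoint ℝ x ⁻¹' S ∩ D))) := by
        rw [image_preimage_eq _ hsurj]
    _ = 2 ^ Module.finrank ℝ E *
          μ (AffineMap.homothety x (2 : ℝ) ⁻¹' (midpoint ℝ x ⁻¹' S ∩ D)) := by
        simp [Measure.addHaar_image_homothety]
    _ = 2 ^ Module.finrank ℝ E * μ ((fun z => (2 : ℝ) • z - x) ⁻¹' D ∩ S) := by
        simp [hhom, preimage_preimage, hmid, inter_comm S]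

theorem prod_restrict_midpoint_preimage (hD : MeasurableSet D) {S : Set E}
    (hS : MeasurableSet S) :
    (μ.restrict D).prod (μ.restrict D) {p | midpoint ℝ p.1 p.2 ∈ S} =
      2 ^ Module.finrank ℝ E * ∫⁻ z in S, μ (macbeathRegion D z) ∂μ := by
  have hmid : MeasurableSet {p : E × E | midpoint ℝ p.1 p.2 ∈ S} :=
    (continuous_fst.lineMap continuous_snd continuous_const).measurable hS
  have hrefl : MeasurableSet {p : E × E | (2 : ℝ) • p.2 - p.1 ∈ D} :=
    (by fun_prop : Continuous fun p : E × E => (2 : ℝ) • p.2 - p.1).measurable hD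
  calc (μ.restrict D).prod (μ.restrict D) {p | midpoint ℝ p.1 p.2 ∈ S}
      = ∫⁻ x in D, 2 ^ Module.finrank ℝ E * μ ((fun z => (2 : ℝ) • z - x) ⁻¹' D ∩ S) ∂μ := by
        rw [Measure.prod_apply hmid]
        refine lintegral_congr fun x => ?_
        rw [Measure.restrict_apply (measurable_prodMk_left hmid)]
        exact measure_midpoint_preimage_inter μ D S x
    _ = 2 ^ Module.finrank ℝ E *
          (μ.restrict D).prod (μ.restrict S) {p | (2 : ℝ) • p.2 - p.1 ∈ D} := by
        rw [lintegral_const_mul' _ _ (by simp), Measure.prod_apply hrefl]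
        congr! 3 with x
        exact (Measure.restrict_apply (measurable_prodMk_left hrefl)).symm
    _ = 2 ^ Module.finrank ℝ E * ∫⁻ z in S, μ (macbeathRegion D z) ∂μ := by
        rw [Measure.prod_apply_symm hrefl]
        congr! 3 with z
        rw [Measure.restrict_apply (measurable_prodMk_right hrefl), inter_comm]
        rfl

theorem lintegral_measure_macbeathRegion_lt_le (hD : IsCompact D) (hDc : Convex ℝ D)
    (μ : Measure E) [μ.IsAddHaarMeasure] (t : ℝ≥0∞) :
    ∫⁻ z in {z | μ (macbeathRegion D z) < t}, μ (macbeathRegion D z) ∂μ ≤ t * μ D := by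
  have hS : MeasurableSet {z | μ (macbeathRegion D z) < t} :=
    (upperSemicontinuous_measure_macbeathRegion hD).measurable measurableSet_Iio
  calc ∫⁻ z in {z | μ (macbeathRegion D z) < t}, μ (macbeathRegion D z) ∂μ
      ≤ ∫⁻ z in {z | μ (macbeathRegion D z) < t}, D.indicator (fun _ => t) z ∂μ := by
        refine setLIntegral_mono' hS fun z hz => ?_
        by_cases hzD : z ∈ D
        · simpa [hzD] using hz.le
        · have : macbeathRegion D z = ∅ := not_nonempty_iff_eq_empty.1
            fun h => hzD (mem_of_nonempty_macbeathRegion hDc h)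
          simp [this]
    _ ≤ ∫⁻ z, D.indicator (fun _ => t) z ∂μ := setLIntegral_le_lintegral _ _
    _ = t * μ D := lintegral_indicator_const hD.measurableSet t

open ProbabilityTheory in
theorem cond_prod_midpoint_measure_macbeathRegion_lt_le (hD : IsCompact D) (hDc : Convex ℝ D)
    (hD₀ : μ D ≠ 0) (t : ℝ≥0∞) :
    μ[|D].prod μ[|D] {p | μ (macbeathRegion D (midpoint ℝ p.1 p.2)) < t} ≤
      2 ^ Module.finrank ℝ E * t / μ D := by
  have hS : MeasurableSet {z | μ (macbeathRegion D z) < t} :=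
    (upperSemicontinuous_measure_macbeathRegion hD).measurable measurableSet_Iio
  calc μ[|D].prod μ[|D] {p | μ (macbeathRegion D (midpoint ℝ p.1 p.2)) < t}
      = (μ D)⁻¹ * ((μ D)⁻¹ * (μ.restrict D).prod (μ.restrict D)
          {p | midpoint ℝ p.1 p.2 ∈ {z | μ (macbeathRegion D z) < t}}) := by
        rw [ProbabilityTheory.cond, Measure.prod_smul_left, Measure.prod_smul_right]
        rfl
    _ ≤ (μ D)⁻¹ * ((μ D)⁻¹ * (2 ^ Module.finrank ℝ E * (t * μ D))) := by
        rw [prod_restrict_midpoint_preimage hD.measurableSet hS]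
        gcongr
        exact lintegral_measure_macbeathRegion_lt_le hD hDc μ t
    _ = 2 ^ Module.finrank ℝ E * t / μ D * ((μ D)⁻¹ * μ D) := by
        rw [div_eq_mul_inv]
        ring
    _ = 2 ^ Module.finrank ℝ E * t / μ D := by
        rw [ENNReal.inv_mul_cancel hD₀ hD.measure_ne_top, mul_one]

open ProbabilityTheory in
theorem exists_setAverage_eq_smul_add_smul (hD : IsCompact D) (hDc : Convex ℝ D)
    (hD₀ : μ D ≠ 0) :
    ∃ x, μ D ≤ 2 ^ (Module.finrank ℝ E + 1) * μ (macbeathRegion D x) ∧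
      ∃ y ∈ D, ∃ q : ℝ, 2⁻¹ ≤ q ∧ q ≤ 1 ∧ ⨍ z in D, z ∂μ = q • x + (1 - q) • y := by
  set t := μ D / 2 ^ (Module.finrank ℝ E + 1)
  have ht : μ D = 2 ^ (Module.finrank ℝ E + 1) * t :=
    (ENNReal.mul_div_cancel (by simp) (by simp)).symm
  have : IsProbabilityMeasure μ[|D] := cond_isProbabilityMeasure_of_finite hD₀ hD.measure_ne_top
  have hint : Integrable id μ[|D] :=
    (continuousOn_id.integrableOn_compact hD).smul_measure (ENNReal.inv_ne_top.2 hD₀)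
  have hL : Convex ℝ {z | t ≤ μ (macbeathRegion D z)} := by
    simpa using quasiconcaveOn_measure_macbeathRegion (μ := μ) hD hDc t
  have hhalf : μ[|D].prod μ[|D] {p | midpoint ℝ p.1 p.2 ∉ {z | t ≤ μ (macbeathRegion D z)}}
      ≤ 2⁻¹ := by
    simp only [mem_ofPred_eq, not_le]
    refine (cond_prod_midpoint_measure_macbeathRegion_lt_le hD hDc hD₀ t).trans ?_
    rw [ENNReal.div_le_iff_le_mul (.inl hD₀) (.inl hD.measure_ne_top), ht, pow_succ', mul_assoc,
      ENNReal.inv_mul_cancel_left (by simp) (by simp)]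
  rw [setAverage_eq']
  obtain ⟨x, hx, hxy⟩ := exists_integral_eq_smul_add_smul_of_midpoint hint hDc hD.isClosed
    (ae_cond_mem hD.measurableSet) hL
    ((upperSemicontinuous_measure_macbeathRegion hD).isClosed_preimage t) hhalf
  exact ⟨x, ht.trans_le (mul_le_mul_right hx _), hxy⟩

theorem measure_le_mul_measure_inter_neg (hD : IsCompact D) (hDc : Convex ℝ D)
    (hD₀ : ∫ x in D, x ∂μ = 0) : μ D ≤ 2 * 4 ^ Module.finrank ℝ E * μ (D ∩ -D) := by
  obtain hμD | hμD := eq_or_ne (μ D) 0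
  · simp [hμD]
  obtain ⟨x, hx, y, hy, q, hq, hq₁, hxy⟩ := exists_setAverage_eq_smul_add_smul hD hDc hμD
  have hzero : q • x + (1 - q) • y = 0 := by rw [← hxy, setAverage_eq, hD₀, smul_zero]
  have hcore : μ (macbeathRegion D x) ≤ 2 ^ Module.finrank ℝ E * μ (D ∩ -D) := by
    calc μ (macbeathRegion D x)
        = 2 ^ Module.finrank ℝ E * (2⁻¹ ^ Module.finrank ℝ E * μ (macbeathRegion D x)) := by
          rw [← mul_assoc, ← mul_pow, ENNReal.mul_inv_cancel (by simp) (by simp), one_pow, one_mul]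
      _ ≤ 2 ^ Module.finrank ℝ E *
            (ENNReal.ofReal (q ^ Module.finrank ℝ E) * μ (macbeathRegion D x)) := by
          rw [ENNReal.ofReal_pow (by positivity)]
          gcongr
          simpa using ENNReal.ofReal_le_ofReal hq
      _ ≤ 2 ^ Module.finrank ℝ E * μ (macbeathRegion D (q • x + (1 - q) • y)) := by
          gcongr
          exact ofReal_pow_mul_measure_macbeathRegion_le hDc (by linarith) (by linarith)
            (by ring) x hy
      _ = 2 ^ Module.finrank ℝ E * μ (D ∩ -D) := by rw [hzero, macbeathRegion_zero]
  calc μ D ≤ 2 ^ (Module.finrank ℝ E + 1) * μ (macbeathRegion D x) := hx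
    _ ≤ 2 ^ (Module.finrank ℝ E + 1) * (2 ^ Module.finrank ℝ E * μ (D ∩ -D)) := by gcongr
    _ = 2 * 4 ^ Module.finrank ℝ E * μ (D ∩ -D) := by
        rw [show (4 : ℝ≥0∞) = 2 * 2 by norm_num, mul_pow]
        ring

end Macbeath

section Packing

theorem exists_finset_card_le_subset_add {G : Type*} [AddCommGroup G] {K S : Set G}
    (hK₀ : 0 ∈ K) (hK : -K = K) {C : ℕ}
    (hC : ∀ s : Finset G, ↑s ⊆ S → (s : Set G).Pairwise (fun x y => x - y ∉ K) → s.card ≤ C) :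
    ∃ N : Finset G, N.card ≤ C ∧ S ⊆ ↑N + K := by
  classical
  let cards : Set ℕ := {n | ∃ s : Finset G, ↑s ⊆ S ∧
    (s : Set G).Pairwise (fun x y => x - y ∉ K) ∧ s.card = n}
  have hbdd : BddAbove cards := ⟨C, by
    rintro _ ⟨s, hsS, hs, rfl⟩
    exact hC s hsS hs⟩
  obtain ⟨N, hNS, hN, hmax⟩ := Nat.sSup_mem (s := cards) ⟨0, ∅, by simp⟩ hbdd
  refine ⟨N, hC N hNS hN, fun x hx => ?_⟩
  by_contra hxN
  have hx_far (y : G) (hy : y ∈ N) : x - y ∉ K := fun hxy =>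
    hxN ⟨y, hy, x - y, hxy, add_sub_cancel y x⟩
  have hxN' : x ∉ N := fun h => hx_far x h (by simpa using hK₀)
  have hins : (insert x N).card ∈ cards := by
    refine ⟨insert x N, ?_, ?_, rfl⟩
    · simpa [insert_subset_iff] using ⟨hx, hNS⟩
    · rw [Finset.coe_insert]
      refine hN.insert fun y hy _ => ⟨hx_far y hy, fun hyx => hx_far y hy ?_⟩
      rw [← hK, mem_neg, neg_sub]
      exact hyx
  have := le_csSup hbdd hins
  rw [Finset.card_insert_of_notMem hxN'] at this
  omega

variable {E : Type*} [NormedAddCommGroup E] [NormedSpace ℝ E]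

theorem pairwiseDisjoint_two_smul_vadd {K : Set E} (hK : Convex ℝ K) (hKneg : -K = K) {s : Set E}
    (hs : s.Pairwise fun x y => x - y ∉ K) :
    s.PairwiseDisjoint fun x => (2 : ℝ) • x +ᵥ K := by
  intro x hx y hy hxy
  refine Set.disjoint_left.2 ?_
  rintro _ ⟨k, hk, rfl⟩ ⟨l, hl, hkl⟩
  refine hs hx hy hxy ?_
  have hnk : -k ∈ K := by rwa [← mem_neg, hKneg]
  convert hK.midpoint_mem hl hnk using 1
  have : (2 : ℝ) • (x - y) = l - k := by
    simp only [vadd_eq_add] at hkl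
    rw [smul_sub, sub_eq_sub_iff_add_eq_add, add_comm l, hkl]
  rw [midpoint_eq_smul_add, ← sub_eq_add_neg, ← this, smul_smul, invOf_mul_self, one_smul]

variable [FiniteDimensional ℝ E] [MeasurableSpace E] [BorelSpace E] {μ : Measure E}
  [μ.IsAddHaarMeasure] {D K : Set E}

theorem card_mul_measure_le (hD : Convex ℝ D) (hK : Convex ℝ K) (hKneg : -K = K)
    (hK_meas : MeasurableSet K) (hKD : K ⊆ D) {s : Finset E} (hsD : ↑s ⊆ D)
    (hs : (s : Set E).Pairwise fun x y => x - y ∉ K) :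
    s.card * μ K ≤ 3 ^ Module.finrank ℝ E * μ D := by
  calc s.card * μ K = ∑ x ∈ s, μ ((2 : ℝ) • x +ᵥ K) := by simp
    _ = μ (⋃ x ∈ s, (2 : ℝ) • x +ᵥ K) := by
        refine (measure_biUnion_finset ?_ fun x _ => hK_meas.const_vadd _).symm
        exact pairwiseDisjoint_two_smul_vadd hK hKneg hs
    _ ≤ μ ((2 : ℝ) • D + (1 : ℝ) • D) := by
        refine measure_mono (iUnion₂_subset fun x hx => ?_)
        rw [one_smul]
        rintro _ ⟨k, hk, rfl⟩
        exact add_mem_add (smul_mem_smul_set (hsD hx)) (hKD hk)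
    _ = μ ((3 : ℝ) • D) := by
        rw [← hD.add_smul zero_le_two zero_le_one]
        norm_num
    _ = 3 ^ Module.finrank ℝ E * μ D := by
        rw [Measure.addHaar_smul_of_nonneg μ zero_le_three, ENNReal.ofReal_pow zero_le_three]
        simp

theorem exists_finset_card_le_subset_add_inter_neg (hD : IsCompact D) (hDc : Convex ℝ D)
    (hDi : (interior D).Nonempty) (hD₀ : ∫ x in D, x ∂μ = 0) :
    ∃ N : Finset E, N.card ≤ 2 * 12 ^ Module.finrank ℝ E ∧ D ⊆ ↑N + (D ∩ -D) := by
  have hcore : μ D ≤ 2 * 4 ^ Module.finrank ℝ E * μ (D ∩ -D) :=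
    measure_le_mul_measure_inter_neg hD hDc hD₀
  have hD_pos : 0 < μ D := Measure.measure_pos_of_nonempty_interior μ hDi
  have hcore_pos : μ (D ∩ -D) ≠ 0 := by
    intro h
    simp [h, hD_pos.ne'] at hcore
  have hcore_compact : IsCompact (D ∩ -D) := hD.inter hD.neg
  have hcore_convex : Convex ℝ (D ∩ -D) := hDc.inter hDc.neg
  have hcore_neg : -(D ∩ -D) = D ∩ -D := by rw [inter_neg, neg_neg, inter_comm]
  have hcore_zero : (0 : E) ∈ D ∩ -D := by
    obtain ⟨x, hx⟩ := nonempty_of_measure_ne_zero hcore_pos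
    have hnx : -x ∈ D ∩ -D := by rwa [← mem_neg, hcore_neg]
    simpa using hcore_convex.midpoint_mem hx hnx
  refine exists_finset_card_le_subset_add hcore_zero hcore_neg fun s hsD hs => ?_
  have hcard : s.card * μ (D ∩ -D) ≤ (2 * 12 ^ Module.finrank ℝ E : ℕ) * μ (D ∩ -D) := by
    calc s.card * μ (D ∩ -D) ≤ 3 ^ Module.finrank ℝ E * μ D :=
          card_mul_measure_le hDc hcore_convex hcore_neg hcore_compact.measurableSet
            inter_subset_left hsD hs
      _ ≤ 3 ^ Module.finrank ℝ E * (2 * 4 ^ Module.finrank ℝ E * μ (D ∩ -D)) := by gcongr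
      _ = (2 * 12 ^ Module.finrank ℝ E : ℕ) * μ (D ∩ -D) := by
          rw [show 12 = 3 * 4 by rfl, mul_pow]
          push_cast
          ring
  exact_mod_cast (ENNReal.mul_le_mul_iff_left hcore_pos hcore_compact.measure_ne_top).1 hcard

end Packing

section TransCov

variable {d : ℕ}

theorem transCov_le_of_subset_iUnion_vadd {D U : Set (Euc d)} {α : ℝ} {ι : Type*} [Fintype ι]
    (x : ι → Euc d) (h : U ⊆ ⋃ i, x i +ᵥ α • D) : transCov D U α ≤ Fintype.card ι := by
  refine Nat.sInf_le ⟨x ∘ (Fintype.equivFin ι).symm, h.trans_eq ?_⟩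
  exact ((Fintype.equivFin ι).symm.surjective.iUnion_comp fun i => x i +ᵥ α • D).symm

theorem transCov_le_card_mul_transCov {D K : Set (Euc d)} (hKD : K ⊆ D) {N : Finset (Euc d)}
    (hN : D ⊆ ↑N + K) (U : Set (Euc d)) (α : ℝ) :
    transCov K U α ≤ N.card * transCov D U α := by
  by_cases hU : ∃ m, ∃ x : Fin m → Euc d, U ⊆ ⋃ i, x i +ᵥ α • D
  · obtain ⟨x, hx⟩ : ∃ x : Fin (transCov D U α) → Euc d, U ⊆ ⋃ i, x i +ᵥ α • D :=
      Nat.sInf_mem hU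
    refine (transCov_le_of_subset_iUnion_vadd (ι := N × Fin (transCov D U α))
      (fun p => x p.2 + α • (p.1 : Euc d)) fun u hu => ?_).trans_eq (by simp)
    obtain ⟨i, _, ⟨y, hy, rfl⟩, rfl⟩ := mem_iUnion.1 (hx hu)
    obtain ⟨n, hn, k, hk, rfl⟩ := hN hy
    refine mem_iUnion.2 ⟨(⟨n, hn⟩, i), α • k, smul_mem_smul_set hk, ?_⟩
    simp [add_assoc]
  · -- Without a finite cover, `transCov` takes the value `sInf ∅ = 0`.
    have hK : {m | ∃ x : Fin m → Euc d, U ⊆ ⋃ i, x i +ᵥ α • K} = ∅ := by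
      refine eq_empty_of_forall_notMem ?_
      rintro m ⟨x, hx⟩
      exact hU ⟨m, x, hx.trans (iUnion_mono fun i => by gcongr)⟩
    simp [transCov, hK]

end TransCov

/-- Covering with the symmetric core. -/
theorem symmetric_core_cover :
    ∃ c : ℝ, 1 ≤ c ∧ ∀ d : ℕ, 2 ≤ d →
      ∀ D : Set (Euc d), IsConvexBody D → (∫ x in D, x) = 0 →
        ∀ U : Set (Euc d), ∀ α : ℝ, 0 < α →
          (transCov (D ∩ -D) U α : ℝ) ≤ c ^ d * (transCov D U α : ℝ) := by
  refine ⟨24, by norm_num, fun d hd D ⟨hD, hDc, hDi⟩ hD₀ U α _ => ?_⟩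
  obtain ⟨N, hN_card, hN⟩ := exists_finset_card_le_subset_add_inter_neg hD hDc hDi hD₀
  have hN_card_le : N.card ≤ 24 ^ d := by
    calc N.card ≤ 2 * 12 ^ d := by simpa using hN_card
      _ ≤ 2 ^ d * 12 ^ d := by gcongr; exact le_self_pow₀ one_le_two (by omega)
      _ = 24 ^ d := by norm_num [← mul_pow]
  calc (transCov (D ∩ -D) U α : ℝ) ≤ N.card * transCov D U α :=
        mod_cast transCov_le_card_mul_transCov inter_subset_left hN U α
    _ ≤ 24 ^ d * transCov D U α := by
        gcongr
        exact_mod_cast hN_card_le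
end
end
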